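/- arXiv:2208.08756 — 10 statements merged into one kernel-verified Lean document; each statement's English description precedes it below -/
import Mathlib

section
/- Let f >= 2 be an integer and q = 2^f. Then the normal covering number and the weak normal covering number of Sp_4(q) both equal 2: there exist two proper subgroups H and K of Sp_4(q) such that every element of Sp_4(q) is conjugate in Sp_4(q) to an element of H or of K, and there is no proper subgroup L of Sp_4(q) such that every element of Sp_4(q) is mapped into L by some automorphism of Sp_4(q). -/
/-- The symplectic group `Sp_{2m}(F)` of `2m × 2m` matrices over `F` preserving a fixed
nondegenerate alternating bilinear form. -/
abbrev Sp (m : ℕ) (F : Type*) [Field F] : Type _ :=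
  ↥(Matrix.symplecticGroup (Fin m) F)

namespace SpFour

set_option linter.unusedSectionVars false

open Matrix

section Basics

variable {F : Type*} [Field F]

/-- vectors -/
abbrev Vec (F : Type*) := Fin 2 ⊕ Fin 2 → F

/-- the alternating form -/
def B (x y : Vec F) : F := x ⬝ᵥ (J (Fin 2) F *ᵥ y)

/-- action -/
def act (g : Sp 2 F) (x : Vec F) : Vec F := (g : Matrix (Fin 2 ⊕ Fin 2) (Fin 2 ⊕ Fin 2) F) *ᵥ x

lemma B_eq (x y : Vec F) : B x y = x (Sum.inr 0) * y (Sum.inl 0) + x (Sum.inr 1) * y (Sum.inl 1)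
    - x (Sum.inl 0) * y (Sum.inr 0) - x (Sum.inl 1) * y (Sum.inr 1) := by
  simp [B, J, dotProduct, mulVec, fromBlocks, Fintype.sum_sum_type, Fin.sum_univ_two, Matrix.one_apply]
  ring

lemma B_add_left (x y z : Vec F) : B (x + y) z = B x z + B y z := by
  simp only [B_eq, Pi.add_apply]; ring
lemma B_add_right (x y z : Vec F) : B x (y + z) = B x y + B x z := by
  simp only [B_eq, Pi.add_apply]; ring
lemma B_smul_left (c : F) (x y : Vec F) : B (c • x) y = c * B x y := by
  simp only [B_eq, Pi.smul_apply, smul_eq_mul]; ring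
lemma B_smul_right (c : F) (x y : Vec F) : B x (c • y) = c * B x y := by
  simp only [B_eq, Pi.smul_apply, smul_eq_mul]; ring
lemma B_self (x : Vec F) : B x x = 0 := by
  simp only [B_eq]; ring
lemma B_zero_left (x : Vec F) : B 0 x = 0 := by simp [B_eq]
lemma B_zero_right (x : Vec F) : B x 0 = 0 := by simp [B_eq]
lemma B_comm [CharP F 2] (x y : Vec F) : B x y = B y x := by
  have h : B x y = - B y x := by simp only [B_eq]; ring
  rw [h, CharTwo.neg_eq]

lemma B_nondeg (x : Vec F) (h : ∀ y, B x y = 0) : x = 0 := by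
  funext i
  rcases i with i | i
  · have := h (Pi.single (Sum.inr i) 1)
    fin_cases i <;> simpa [B_eq, Pi.single_apply] using this
  · have := h (Pi.single (Sum.inl i) 1)
    fin_cases i <;> simpa [B_eq, Pi.single_apply] using this

lemma exists_B_one (x : Vec F) (h : x ≠ 0) : ∃ y, B x y = 1 := by
  by_contra hc
  push Not at hc
  apply h
  apply B_nondeg
  intro y
  by_contra hy
  apply hc ((B x y)⁻¹ • y)
  rw [B_smul_right, inv_mul_cancel₀ hy]

lemma B_mulVec (A : Matrix (Fin 2 ⊕ Fin 2) (Fin 2 ⊕ Fin 2) F) (x y : Vec F) :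
    B (A *ᵥ x) (A *ᵥ y) = x ⬝ᵥ ((Aᵀ * J (Fin 2) F * A) *ᵥ y) := by
  rw [B, ← mulVec_mulVec, ← mulVec_mulVec, dotProduct_mulVec x, vecMul_transpose]

lemma B_act (g : Sp 2 F) (x y : Vec F) : B (act g x) (act g y) = B x y := by
  rw [act, act, B_mulVec, SymplecticGroup.mem_iff'.mp g.2, B]

lemma mem_of_B (A : Matrix (Fin 2 ⊕ Fin 2) (Fin 2 ⊕ Fin 2) F)
    (h : ∀ x y, B (A *ᵥ x) (A *ᵥ y) = B x y) : A ∈ symplecticGroup (Fin 2) F := by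
  rw [SymplecticGroup.mem_iff']
  ext i j
  have := h (Pi.single i 1) (Pi.single j 1)
  rw [B_mulVec, B] at this
  simpa using this

lemma act_one (x : Vec F) : act (1 : Sp 2 F) x = x := by simp [act]
lemma act_mul (g h : Sp 2 F) (x : Vec F) : act (g * h) x = act g (act h x) := by
  simp [act]
lemma act_add (g : Sp 2 F) (x y : Vec F) : act g (x + y) = act g x + act g y := by
  simp [act, mulVec_add]
lemma act_smul (g : Sp 2 F) (c : F) (x : Vec F) : act g (c • x) = c • act g x := by
  simp [act, mulVec_smul]
lemma act_zero (g : Sp 2 F) : act g 0 = 0 := by simp [act]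
lemma act_inv_act (g : Sp 2 F) (x : Vec F) : act g⁻¹ (act g x) = x := by
  rw [← act_mul, inv_mul_cancel, act_one]
lemma act_act_inv (g : Sp 2 F) (x : Vec F) : act g (act g⁻¹ x) = x := by
  rw [← act_mul, mul_inv_cancel, act_one]
lemma act_ext {g h : Sp 2 F} (H : ∀ x, act g x = act h x) : g = h := by
  apply Subtype.ext
  ext i j
  have := congrFun (H (Pi.single j 1)) i
  simpa [act] using this
lemma act_ne_zero (g : Sp 2 F) {x : Vec F} (hx : x ≠ 0) : act g x ≠ 0 := by
  intro h
  apply hx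
  rw [← act_inv_act g x, h, act_zero]

/-- Symplectic element from linear isometry -/
noncomputable def ofLin (f : Vec F →ₗ[F] Vec F) (h : ∀ x y, B (f x) (f y) = B x y) : Sp 2 F :=
  ⟨LinearMap.toMatrix' f, mem_of_B _ (by intro x y; simpa using h x y)⟩

lemma act_ofLin (f : Vec F →ₗ[F] Vec F) (h : ∀ x y, B (f x) (f y) = B x y) (x : Vec F) :
    act (ofLin f h) x = f x := by
  simp [act, ofLin]

/-- transvection linear map -/
def tvLin (v : Vec F) : Vec F →ₗ[F] Vec F where
  toFun x := x + B x v • v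
  map_add' x y := by rw [B_add_left, add_smul]; abel
  map_smul' c x := by simp [B_smul_left, smul_add, mul_smul]

variable [CharP F 2]

lemma add_self2 (x : F) : x + x = 0 := CharTwo.add_self_eq_zero x
lemma addV_self (x : Vec F) : x + x = 0 := by
  funext i; exact CharTwo.add_self_eq_zero _

lemma tvLin_isom (v x y : Vec F) : B (tvLin v x) (tvLin v y) = B x y := by
  simp only [tvLin, LinearMap.coe_mk, AddHom.coe_mk, B_add_left, B_add_right, B_smul_left,
    B_smul_right, B_self, B_comm v y]
  linear_combination (B x v * B y v) * (CharTwo.two_eq_zero (R := F))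

/-- transvection -/
noncomputable def tv (v : Vec F) : Sp 2 F := ofLin (tvLin v) (tvLin_isom v)

lemma act_tv (v x : Vec F) : act (tv v) x = x + B x v • v := by
  rw [tv, act_ofLin]; rfl

lemma conj_tv (g : Sp 2 F) (v : Vec F) : g * tv v * g⁻¹ = tv (act g v) := by
  apply act_ext
  intro x
  rw [act_mul, act_mul, act_tv, act_tv, act_add, act_smul, act_act_inv]
  congr 2
  rw [← B_act g, act_act_inv]

end Basics

section PartOne

variable {F : Type*} [Field F] [Fintype F] [CharP F 2]

/-- Artin-Schreier hom -/
def wp (F : Type*) [Field F] [CharP F 2] : F →+ F where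
  toFun c := c ^ 2 + c
  map_zero' := by simp
  map_add' x y := by rw [CharTwo.add_sq]; ring

lemma wp_apply (c : F) : wp F c = c ^ 2 + c := rfl

lemma wp_ker (c : F) : c ∈ (wp F).ker ↔ c = 0 ∨ c = 1 := by
  rw [AddMonoidHom.mem_ker, wp_apply]
  have : c ^ 2 + c = c * (c - 1) := by rw [CharTwo.sub_eq_add]; ring
  rw [this, mul_eq_zero, sub_eq_zero]

lemma wp_index : (wp F).range.index = 2 := by
  have h1 := AddSubgroup.card_mul_index (wp F).range
  have h2 := AddSubgroup.card_mul_index (wp F).ker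
  rw [AddSubgroup.index_ker] at h2
  have h3 : Nat.card (wp F).ker = 2 := by
    have : ((wp F).ker : Set F) = {0, 1} := by
      ext c; simp [← wp_ker]
    change Nat.card ((wp F).ker : Set F) = 2
    rw [this, Nat.card_coe_set_eq, Set.ncard_pair zero_ne_one]
  rw [h3] at h2
  have h4 : 0 < Nat.card (wp F).range := Nat.card_pos
  rw [← h2, mul_comm] at h1
  exact Nat.eq_of_mul_eq_mul_right h4 h1

lemma wp_add {a b : F} (ha : a ∉ (wp F).range) (hb : b ∉ (wp F).range) : a + b ∈ (wp F).range := by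
  rw [AddSubgroup.add_mem_iff_of_index_two wp_index]
  tauto

lemma exists_sq (a : F) : ∃ b : F, a = b ^ 2 := by
  obtain ⟨b, hb⟩ := FiniteField.isSquare_of_char_two (ringChar.eq F 2 ▸ rfl) a
  exact ⟨b, by rw [hb, sq]⟩

/-- base quadratic form -/
def Q0 (x : Vec F) : F := x (Sum.inl 0) * x (Sum.inr 0) + x (Sum.inl 1) * x (Sum.inr 1)

/-- quadratic forms polarizing to B -/
def Qf (w x : Vec F) : F := Q0 x + B x w ^ 2

lemma Qf_add (w x y : Vec F) : Qf w (x + y) = Qf w x + Qf w y + B x y := by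
  simp only [Qf, Q0, B_eq, Pi.add_apply, CharTwo.sub_eq_add]
  have h2 := CharTwo.two_eq_zero (R := F)
  ring_nf
  simp only [h2, mul_zero]
  ring_nf

lemma Qf_smul (w x : Vec F) (c : F) : Qf w (c • x) = c ^ 2 * Qf w x := by
  simp only [Qf, Q0, B_smul_left, Pi.smul_apply, smul_eq_mul]
  ring

end PartOne
end SpFour

namespace SpFour
set_option linter.unusedSectionVars false
open Matrix
section PartOneB
variable {F : Type*} [Field F] [Fintype F] [CharP F 2]

lemma exists_rep (c : Vec F) : ∃ a : Vec F, ∀ x, B x a = ∑ i, x i * c i := by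
  refine ⟨Sum.elim (fun i => c (Sum.inr i)) (fun i => c (Sum.inl i)), fun x => ?_⟩
  simp [B_eq, Fintype.sum_sum_type, CharTwo.sub_eq_add]
  ring

lemma vec_sum (x : Vec F) : x = ∑ i, x i • (Pi.single i 1 : Vec F) := by
  funext j
  simp [Finset.sum_apply, Pi.single_apply]

lemma exists_rep_lin (f : Vec F →ₗ[F] F) : ∃ a : Vec F, ∀ x, B x a = f x := by
  obtain ⟨a, ha⟩ := exists_rep (fun i => f (Pi.single i 1))
  refine ⟨a, fun x => ?_⟩
  rw [ha]
  conv_rhs => rw [vec_sum x, map_sum]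
  simp

lemma exists_rep_sq (d : Vec F → F) (hadd : ∀ x y, d (x + y) = d x + d y)
    (hsm : ∀ (c : F) x, d (c • x) = c ^ 2 * d x) : ∃ a : Vec F, ∀ x, B x a ^ 2 = d x := by
  choose r hr using fun i => exists_sq (d (Pi.single i 1))
  obtain ⟨a, ha⟩ := exists_rep r
  refine ⟨a, fun x => ?_⟩
  let D : Vec F →+ F := AddMonoidHom.mk' d hadd
  have hD : ∀ x, d x = D x := fun x => rfl
  rw [ha]
  conv_rhs => rw [vec_sum x, hD, map_sum]
  rw [CharTwo.sum_sq]
  apply Finset.sum_congr rfl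
  intro i _
  rw [← hD, hsm, hr, mul_pow]

lemma Qf_shift (w u x : Vec F) : Qf (w + u) x = Qf w x + B x u ^ 2 := by
  rw [Qf, Qf, B_add_right, CharTwo.add_sq, add_assoc]

lemma Q0_eq (x : Vec F) : Q0 x = Qf 0 x := by simp [Qf, B_zero_right]

lemma B_nondeg_right (x : Vec F) (h : ∀ y, B y x = 0) : x = 0 :=
  B_nondeg x (fun y => by rw [B_comm]; exact h y)

lemma exists_fixed_form (g : Sp 2 F) : ∃ w : Vec F, ∀ x, Qf w (act g x) = Qf w x := by
  obtain ⟨a, ha⟩ := exists_rep_sq (fun x => Qf 0 (act g x) + Qf 0 x)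
    (by intro x y
        rw [act_add, Qf_add, Qf_add, B_act]
        linear_combination (B x y) * (CharTwo.two_eq_zero (R := F)))
    (by intro c x; rw [act_smul, Qf_smul, Qf_smul]; ring)
  let f : Vec F →ₗ[F] Vec F :=
    { toFun := fun v => act g⁻¹ v + v
      map_add' := by intro x y; rw [act_add]; abel
      map_smul' := by intro c x; simp [act_smul] }
  have hmem : a ∈ LinearMap.range f := by
    by_contra hc
    obtain ⟨φ, h1, h2⟩ := Submodule.exists_le_ker_of_notMem hc
    obtain ⟨x, hx⟩ := exists_rep_lin φ
    have hv : ∀ v, B v (act g x + x) = 0 := by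
      intro v
      have h3 : φ (f v) = 0 := h2 ⟨v, rfl⟩
      rw [← hx] at h3
      change B (act g⁻¹ v + v) x = 0 at h3
      rw [B_add_left, ← B_act g, act_act_inv] at h3
      rw [B_add_right, h3]
    have h4 := B_nondeg_right _ hv
    have h5 : act g x = x := by
      have : act g x + x + x = x := by rw [h4, zero_add]
      rwa [add_assoc, addV_self, add_zero] at this
    have h6 := ha x
    simp only [h5] at h6
    rw [CharTwo.add_self_eq_zero] at h6
    apply h1
    rw [← hx, B_comm]
    exact pow_eq_zero_iff (two_ne_zero) |>.mp h6
  obtain ⟨v, hv⟩ := hmem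
  change act g⁻¹ v + v = a at hv
  refine ⟨v, fun x => ?_⟩
  have h := ha x
  rw [← hv, B_add_right, ← B_act g x (act g⁻¹ v), act_act_inv, CharTwo.add_sq] at h
  rw [← zero_add v, Qf_shift, Qf_shift, ]
  have h2 := CharTwo.two_eq_zero (R := F)
  linear_combination h + (Qf 0 (act g x) - B x v ^ 2) * h2

lemma Qf_tv (w v x : Vec F) : Qf w (act (tv v) x) = Qf w x + B x v ^ 2 * (Qf w v + 1) := by
  rw [act_tv, Qf_add, Qf_smul, B_smul_right]; ring

lemma conn (w u : Vec F) (h : Qf w u ∈ (wp F).range) :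
    ∃ g : Sp 2 F, ∀ x, Qf w (act g x) = Qf (w + u) x := by
  obtain ⟨c, hc⟩ := h
  obtain ⟨b, rfl⟩ := exists_sq c
  obtain ⟨b, hb, hb0⟩ : ∃ b : F, Qf w u = (b ^ 2) ^ 2 + b ^ 2 ∧ b ≠ 0 := by
    by_cases hb0 : b = 0
    · refine ⟨1, ?_, one_ne_zero⟩
      rw [← hc, wp_apply, hb0]
      have := CharTwo.two_eq_zero (R := F)
      linear_combination - this
    · exact ⟨b, hc.symm, hb0⟩
  refine ⟨tv (b⁻¹ • u), fun x => ?_⟩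
  rw [Qf_tv, Qf_shift, Qf_smul, hb, B_smul_right]
  field_simp
  have := CharTwo.two_eq_zero (R := F)
  linear_combination (B x u ^ 2) * this

/-- Stabilizer of form -/
def stab (w : Vec F) : Subgroup (Sp 2 F) where
  carrier := {g | ∀ x, Qf w (act g x) = Qf w x}
  mul_mem' := by
    intro a b ha hb x
    rw [act_mul, ha, hb]
  one_mem' := by intro x; rw [act_one]
  inv_mem' := by
    intro a ha x
    rw [← ha, act_act_inv]

lemma mem_stab (w : Vec F) (g : Sp 2 F) : g ∈ stab w ↔ ∀ x, Qf w (act g x) = Qf w x := Iff.rfl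

lemma exists_ne01 (hc : 2 < Fintype.card F) : ∃ c : F, c ≠ 0 ∧ c ≠ 1 := by
  classical
  by_contra h
  push Not at h
  have : (Finset.univ : Finset F) ⊆ {0, 1} := by
    intro c _
    by_cases h0 : c = 0
    · simp [h0]
    · simp [h c h0]
  have := Finset.card_le_card this
  have h2 : ({0, 1} : Finset F).card ≤ 2 := Finset.card_le_two
  rw [Finset.card_univ] at this
  omega

lemma stab_ne_top (hc : 2 < Fintype.card F) (w : Vec F) : stab w ≠ ⊤ := by
  intro h
  have key : ∀ v : Vec F, v ≠ 0 → Qf w v = 1 := by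
    intro v hv
    obtain ⟨y, hy⟩ := exists_B_one v hv
    have : tv v ∈ stab w := by rw [h]; trivial
    have := this y
    rw [Qf_tv, B_comm y v, hy] at this
    have h2 : Qf w v + 1 = 0 := by linear_combination this
    rw [← CharTwo.sub_eq_add] at h2
    exact sub_eq_zero.mp h2
  obtain ⟨c, c0, c1⟩ := exists_ne01 hc
  let v : Vec F := Pi.single (Sum.inl 0) 1
  have hv : v ≠ 0 := by simp [v]
  have h1 := key v hv
  have h2 := key (c • v) (smul_ne_zero c0 hv)
  rw [Qf_smul, h1, mul_one] at h2
  have : (c - 1) ^ 2 = 0 := by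
    rw [CharTwo.sub_eq_add, CharTwo.add_sq, h2, one_pow, CharTwo.add_self_eq_zero]
  exact c1 (sub_eq_zero.mp (pow_eq_zero_iff two_ne_zero |>.mp this))

lemma conj_of_conn {w w' : Vec F} {g h : Sp 2 F} (hg : ∀ x, Qf w (act g x) = Qf w x)
    (hh : ∀ x, Qf w' (act h x) = Qf w x) : h * g * h⁻¹ ∈ stab w' := by
  intro x
  rw [act_mul, act_mul, hh, hg, ← hh, act_act_inv]

theorem partOne (hc : 2 < Fintype.card F) : ∃ H K : Subgroup (Sp 2 F), H ≠ ⊤ ∧ K ≠ ⊤ ∧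
        ∀ g : Sp 2 F, ∃ x : Sp 2 F,
          x * g * x⁻¹ ∈ H ∨ x * g * x⁻¹ ∈ K := by
  by_cases hw : ∃ w0 : Vec F, Qf 0 w0 ∉ (wp F).range
  · obtain ⟨w0, hw0⟩ := hw
    refine ⟨stab 0, stab w0, stab_ne_top hc _, stab_ne_top hc _, fun g => ?_⟩
    obtain ⟨w, hw⟩ := exists_fixed_form g
    by_cases h : Qf 0 w ∈ (wp F).range
    · obtain ⟨x, hx⟩ := conn 0 w h
      rw [zero_add] at hx
      exact ⟨x, Or.inl (conj_of_conn hw hx)⟩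
    · have h2 : Qf w0 (w + w0) ∈ (wp F).range := by
        have e : Qf w0 (w + w0) = (Qf 0 w + Qf 0 w0) + wp F (B w w0) := by
          have := Qf_shift 0 w0 (w + w0)
          rw [zero_add] at this
          rw [this, Qf_add, B_add_left, B_self, add_zero, wp_apply]
          ring
        rw [e]
        exact add_mem (wp_add h hw0) ⟨_, rfl⟩
      obtain ⟨x, hx⟩ := conn w0 (w + w0) h2
      have e : w0 + (w + w0) = w := by
        rw [add_comm w, ← add_assoc, addV_self, zero_add]
      rw [e] at hx
      exact ⟨x, Or.inr (conj_of_conn hw hx)⟩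
  · push Not at hw
    refine ⟨stab 0, stab 0, stab_ne_top hc _, stab_ne_top hc _, fun g => ?_⟩
    obtain ⟨w, h⟩ := exists_fixed_form g
    obtain ⟨x, hx⟩ := conn 0 w (hw w)
    rw [zero_add] at hx
    exact ⟨x, Or.inl (conj_of_conn h hx)⟩

end PartOneB
end SpFour

namespace SpFour
set_option linter.unusedSectionVars false
open Matrix
section Gen
variable {F : Type*} [Field F] [Fintype F] [CharP F 2]

lemma mv (L : Subgroup (Sp 2 F)) (hL : ∀ v, tv v ∈ L) (u w : Vec F) (h : B u w ≠ 0) :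
    ∃ t ∈ L, act t u = w ∧ ∀ y, B y u = B y w → act t y = y := by
  obtain ⟨c, hc⟩ := exists_sq (B u w)⁻¹
  refine ⟨tv (c • (u + w)), hL _, ?_, ?_⟩
  · rw [act_tv, B_smul_right, B_add_right, B_self, zero_add, smul_smul]
    have : c * B u w * c = 1 := by
      have : c ^ 2 * B u w = 1 := by rw [← hc, inv_mul_cancel₀ h]
      linear_combination this
    rw [this, one_smul, ← add_assoc, addV_self, zero_add]
  · intro y hy
    rw [act_tv, B_smul_right, B_add_right, hy, CharTwo.add_self_eq_zero, mul_zero, zero_smul,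
      add_zero]

lemma mv2 (L : Subgroup (Sp 2 F)) (hL : ∀ v, tv v ∈ L) (u x w : Vec F) (h : B u x ≠ 0)
    (h' : B x w ≠ 0) :
    ∃ t ∈ L, act t u = w ∧ ∀ y, B y u = B y x → B y x = B y w → act t y = y := by
  obtain ⟨t, ht, h1, h2⟩ := mv L hL u x h
  obtain ⟨s, hs, h3, h4⟩ := mv L hL x w h'
  refine ⟨s * t, mul_mem hs ht, by rw [act_mul, h1, h3], fun y hy hy' => ?_⟩
  rw [act_mul, h2 y hy, h4 y hy']

lemma mvpair (L : Subgroup (Sp 2 F)) (hL : ∀ v, tv v ∈ L) (u v w : Vec F) (h : B u v = 1)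
    (h' : B u w = 1) :
    ∃ t ∈ L, act t v = w ∧ act t u = u ∧
      ∀ y, B y u = 0 → B y v = 0 → B y w = 0 → act t y = y := by
  by_cases hvw : B v w = 0
  · obtain ⟨t, ht, h1, h2⟩ := mv2 L hL v (u + v) w
      (by rw [B_add_right, B_self, B_comm, h]; simp) (by rw [B_add_left, h', hvw]; simp)
    refine ⟨t, ht, h1, h2 u ?_ ?_, fun y a b c => h2 y ?_ ?_⟩ <;>
      simp [B_add_right, B_self, *]
  · obtain ⟨t, ht, h1, h2⟩ := mv L hL v w hvw
    exact ⟨t, ht, h1, h2 u (by rw [h, h']), fun y a b c => h2 y (by rw [b, c])⟩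

lemma mvone (L : Subgroup (Sp 2 F)) (hL : ∀ v, tv v ∈ L) (u w : Vec F) (hu : u ≠ 0) (hw : w ≠ 0) :
    ∃ t ∈ L, act t u = w := by
  obtain ⟨y, hy⟩ := exists_B_one u hu
  obtain ⟨z, hz⟩ := exists_B_one w hw
  have : ∃ x, B u x ≠ 0 ∧ B w x ≠ 0 := by
    by_cases h1 : B w y = 0
    · by_cases h2 : B u z = 0
      · refine ⟨y + z, ?_, ?_⟩ <;> rw [B_add_right] <;> simp [*]
      · exact ⟨z, h2, by simp [hz]⟩
    · exact ⟨y, by simp [hy], h1⟩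
  obtain ⟨x, h1, h2⟩ := this
  obtain ⟨t, ht, h3, -⟩ := mv2 L hL u x w h1 (by rwa [B_comm])
  exact ⟨t, ht, h3⟩

/-- basis vectors -/
abbrev ee (i : Fin 2 ⊕ Fin 2) : Vec F := Pi.single i 1

theorem gen (L : Subgroup (Sp 2 F)) (hL : ∀ v, tv v ∈ L) : L = ⊤ := by
  rw [eq_top_iff]
  rintro g -
  let e1 : Vec F := ee (Sum.inl 0)
  let f1 : Vec F := ee (Sum.inr 0)
  let e2 : Vec F := ee (Sum.inl 1)
  let f2 : Vec F := ee (Sum.inr 1)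
  have e1f1 : B e1 f1 = 1 := by simp [B_eq, e1, f1, CharTwo.neg_eq]
  have e2f2 : B e2 f2 = 1 := by simp [B_eq, e2, f2, CharTwo.neg_eq]
  have e1e2 : B e1 e2 = 0 := by simp [B_eq, e1, e2]
  have e1f2 : B e1 f2 = 0 := by simp [B_eq, e1, f2]
  have f1e2 : B f1 e2 = 0 := by simp [B_eq, f1, e2]
  have f1f2 : B f1 f2 = 0 := by simp [B_eq, f1, f2]
  have he1 : e1 ≠ 0 := by simp [e1]
  have he2 : e2 ≠ 0 := by simp [e2]
  obtain ⟨t1, ht1, h1⟩ := mvone L hL (act g e1) e1 (act_ne_zero g he1) he1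
  obtain ⟨g1, hg1⟩ : ∃ g1, g1 = t1 * g := ⟨_, rfl⟩
  have a1 : act g1 e1 = e1 := by rw [hg1, act_mul, h1]
  obtain ⟨t2, ht2, h2, h2', -⟩ := mvpair L hL e1 (act g1 f1) f1
    (by rw [← e1f1, ← B_act g1 e1 f1, a1]) e1f1
  obtain ⟨g2, hg2⟩ : ∃ g2, g2 = t2 * g1 := ⟨_, rfl⟩
  have b1 : act g2 e1 = e1 := by rw [hg2, act_mul, a1, h2']
  have b2 : act g2 f1 = f1 := by rw [hg2, act_mul, h2]
  have c1 : B e1 (act g2 e2) = 0 := by rw [← e1e2, ← B_act g2 e1 e2, b1]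
  have c2 : B f1 (act g2 e2) = 0 := by rw [← f1e2, ← B_act g2 f1 e2, b2]
  obtain ⟨t3, ht3, h3, h3'⟩ : ∃ t ∈ L, act t (act g2 e2) = e2 ∧ (act t e1 = e1 ∧ act t f1 = f1) := by
    by_cases h : B (act g2 e2) e2 = 0
    · have hne : B (act g2 e2) f2 ≠ 0 := by
        intro h0
        apply act_ne_zero g2 he2
        generalize act g2 e2 = y at *
        simp [B_eq, e1, e2, f1, f2] at c1 c2 h h0
        funext i
        rcases i with i | i <;> fin_cases i <;> simp [*]
      obtain ⟨t, ht, k1, k2⟩ := mv2 L hL (act g2 e2) f2 e2 hne (by rw [B_comm, e2f2]; simp)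
      exact ⟨t, ht, k1, k2 _ (by rw [c1, e1f2]) (by rw [e1f2, e1e2]),
        k2 _ (by rw [c2, f1f2]) (by rw [f1f2, f1e2])⟩
    · obtain ⟨t, ht, k1, k2⟩ := mv L hL (act g2 e2) e2 h
      exact ⟨t, ht, k1, k2 _ (by rw [c1, e1e2]), k2 _ (by rw [c2, f1e2])⟩
  obtain ⟨g3, hg3⟩ : ∃ g3, g3 = t3 * g2 := ⟨_, rfl⟩
  have d1 : act g3 e1 = e1 := by rw [hg3, act_mul, b1, h3'.1]
  have d2 : act g3 f1 = f1 := by rw [hg3, act_mul, b2, h3'.2]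
  have d3 : act g3 e2 = e2 := by rw [hg3, act_mul, h3]
  obtain ⟨t4, ht4, h4, h4', h4''⟩ := mvpair L hL e2 (act g3 f2) f2
    (by rw [← e2f2, ← B_act g3 e2 f2, d3]) e2f2
  have k1 : act t4 e1 = e1 := h4'' _ e1e2 (by rw [← e1f2, ← B_act g3 e1 f2, d1]) e1f2
  have k2 : act t4 f1 = f1 := h4'' _ f1e2 (by rw [← f1f2, ← B_act g3 f1 f2, d2]) f1f2
  have hfin : t4 * g3 = 1 := by
    apply Subtype.ext
    ext i j
    have : act (t4 * g3) (ee j) = ee j := by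
      rw [act_mul]
      rcases j with j | j <;> fin_cases j
      · change act t4 (act g3 e1) = e1; rw [d1, k1]
      · change act t4 (act g3 e2) = e2; rw [d3, h4']
      · change act t4 (act g3 f1) = f1; rw [d2, k2]
      · exact h4
    have := congrFun this i
    simpa [act, Matrix.one_apply, Pi.single_apply] using this
  have hg : g = t1⁻¹ * (t2⁻¹ * (t3⁻¹ * t4⁻¹)) := by
    rw [hg3, hg2, hg1] at hfin
    have : t4 * t3 * t2 * t1 * g = 1 := by rw [← hfin]; group
    rw [← inv_eq_iff_mul_eq_one] at this
    rw [← this]; group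
  rw [hg]
  exact mul_mem (inv_mem ht1) (mul_mem (inv_mem ht2) (mul_mem (inv_mem ht3) (inv_mem ht4)))

end Gen
end SpFour

namespace SpFour
set_option linter.unusedSectionVars false
section Fld
variable {F K : Type*} [Field F] [Fintype F] [Field K] [Fintype K] [Algebra F K] [CharP K 2]

open Polynomial in
lemma card_roots_le [DecidableEq K] (n : ℕ) (hn : 0 < n) (c : K) :
    (Finset.univ.filter (fun x : K => x ^ n = c)).card ≤ n := by
  have h : (Finset.univ.filter (fun x : K => x ^ n = c)) ⊆ (nthRoots n c).toFinset := by
    intro x hx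
    simp only [Finset.mem_filter, Finset.mem_univ, true_and] at hx
    simp [mem_nthRoots hn, hx]
  exact (Finset.card_le_card h).trans ((Multiset.toFinset_card_le _).trans (card_nthRoots n c))

lemma card_fix_le [DecidableEq K] (n : ℕ) (hn : 1 < n) :
    (Finset.univ.filter (fun x : K => x ^ n = x)).card ≤ n := by
  have h : (Finset.univ.filter (fun x : K => x ^ n = x)) ⊆
      insert 0 (Finset.univ.filter (fun x : K => x ^ (n - 1) = 1)) := by
    intro x hx
    simp only [Finset.mem_filter, Finset.mem_univ, true_and, Finset.mem_insert] at hx ⊢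
    by_cases h0 : x = 0
    · exact Or.inl h0
    · right
      apply mul_right_cancel₀ h0
      rw [one_mul, ← pow_succ, Nat.sub_add_cancel hn.le, hx]
  have h2 := Finset.card_le_card h
  have h3 := Finset.card_insert_le (0 : K) (Finset.univ.filter (fun x : K => x ^ (n - 1) = 1))
  have h4 := card_roots_le (K := K) (n - 1) (by omega) 1
  omega

lemma exists_alg (x : K) (hx : x ^ (Fintype.card F) = x) : ∃ f : F, algebraMap F K f = x := by
  classical
  have h : Finset.univ.image (algebraMap F K) =
      Finset.univ.filter (fun x : K => x ^ (Fintype.card F) = x) := by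
    apply Finset.eq_of_subset_of_card_le
    · intro y hy
      simp only [Finset.mem_image, Finset.mem_univ, true_and] at hy
      obtain ⟨f, rfl⟩ := hy
      simp [← map_pow, FiniteField.pow_card]
    · rw [Finset.card_image_of_injective _ (algebraMap F K).injective, Finset.card_univ]
      exact card_fix_le _ Fintype.one_lt_card
  have hm : x ∈ Finset.univ.filter (fun x : K => x ^ (Fintype.card F) = x) := by simp [hx]
  rw [← h] at hm
  simpa using hm

lemma exists_alg' (x : K) (hx : x ^ (Fintype.card F - 1) = 1) : ∃ f : F, algebraMap F K f = x := by
  apply exists_alg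
  have := Fintype.one_lt_card (α := F)
  rw [show Fintype.card F = Fintype.card F - 1 + 1 by omega, pow_succ, hx, one_mul]

variable (σ : K →ₐ[F] K)

lemma ker_lam (hσ : ∀ x, σ x = x ^ (Fintype.card F ^ 2)) (lam : K →ₗ[F] F) (hlam : ∃ e, σ e = e ∧ lam e ≠ 0) {e e' : K} (he : σ e = e)
    (he' : σ e' = e') (h0 : e ≠ 0) (h1 : lam e = 0) (h2 : lam e' = 0) : ∃ f : F, e' = f • e := by
  classical
  by_contra hc
  push Not at hc
  let φ : F × F → K := fun p => p.1 • e + p.2 • e'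
  have hinj : Function.Injective φ := by
    rintro ⟨a, b⟩ ⟨c, d⟩ h
    simp only [φ] at h
    have hbd : b = d := by
      by_contra hbd
      have hne : b - d ≠ 0 := sub_ne_zero.mpr hbd
      apply hc ((b - d)⁻¹ * (c - a))
      have : (b - d) • e' = (c - a) • e := by
        rw [sub_smul, sub_smul, sub_eq_sub_iff_add_eq_add, add_comm, h, add_comm]
      rw [mul_smul, ← this, smul_smul, inv_mul_cancel₀ hne, one_smul]
    subst hbd
    have h3 : a • e = c • e := add_right_cancel h
    have := smul_left_injective F h0 h3
    simp_all
  have him : Finset.univ.image φ = Finset.univ.filter (fun x : K => x ^ (Fintype.card F ^ 2) = x) := by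
    apply Finset.eq_of_subset_of_card_le
    · intro y hy
      simp only [Finset.mem_image, Finset.mem_univ, true_and] at hy
      obtain ⟨p, rfl⟩ := hy
      simp only [Finset.mem_filter, Finset.mem_univ, true_and, φ]
      rw [← hσ, map_add, map_smul, map_smul, he, he']
    · rw [Finset.card_image_of_injective _ hinj, Finset.card_univ, Fintype.card_prod, ← sq]
      exact card_fix_le _ (Nat.one_lt_pow two_ne_zero Fintype.one_lt_card)
  obtain ⟨z, hz, hz'⟩ := hlam
  have hm : z ∈ Finset.univ.filter (fun x : K => x ^ (Fintype.card F ^ 2) = x) := by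
    simp [← hσ, hz]
  rw [← him] at hm
  simp only [Finset.mem_image, Finset.mem_univ, true_and, φ] at hm
  obtain ⟨p, rfl⟩ := hm
  apply hz'
  rw [map_add, map_smul, map_smul, h1, h2]; simp

lemma k2 : (2 : K) = 0 := CharTwo.two_eq_zero

/-- no three -/
lemma sumfree (hσσ : ∀ x, σ (σ x) = x) {X1 X2 X3 M0 : K}
    (h1 : X1 * σ X1 = M0) (h2 : X2 * σ X2 = M0) (h3 : X3 * σ X3 = M0)
    (e1 : X1 + σ X1 ≠ 0) (e2 : X2 + σ X2 ≠ 0) (e3 : X3 + σ X3 ≠ 0)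
    (hs : (X3 + σ X3)⁻¹ = (X1 + σ X1)⁻¹ + (X2 + σ X2)⁻¹) : False := by
  have key : ∀ X : K, X + σ X ≠ 0 → X * σ X = M0 →
      (X * (X + σ X)⁻¹) ^ 2 + X * (X + σ X)⁻¹ = M0 * ((X + σ X)⁻¹) ^ 2 := by
    intro X hX hM
    rw [← hM]
    field_simp
    linear_combination X ^ 2 * k2 (K := K)
  have key2 : ∀ X : K, X + σ X ≠ 0 →
      (X * (X + σ X)⁻¹) + σ (X * (X + σ X)⁻¹) = 1 := by
    intro X hX
    rw [map_mul, map_inv₀, map_add, hσσ, add_comm (σ X) X, ← add_mul, mul_inv_cancel₀ hX]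
  obtain ⟨Y, hY⟩ : ∃ Y, Y = X1 * (X1 + σ X1)⁻¹ + X2 * (X2 + σ X2)⁻¹ + X3 * (X3 + σ X3)⁻¹ := ⟨_, rfl⟩
  have hYY : Y ^ 2 + Y = 0 := by
    have : Y ^ 2 + Y = M0 * ((X1 + σ X1)⁻¹) ^ 2 + M0 * ((X2 + σ X2)⁻¹) ^ 2 + M0 * ((X3 + σ X3)⁻¹) ^ 2 := by
      rw [← key X1 e1 h1, ← key X2 e2 h2, ← key X3 e3 h3, hY, CharTwo.add_sq, CharTwo.add_sq]
      ring
    rw [this, hs, CharTwo.add_sq]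
    linear_combination (M0 * ((X1 + σ X1)⁻¹) ^ 2 + M0 * ((X2 + σ X2)⁻¹) ^ 2) * k2 (K := K)
  have hYs : Y + σ Y = 1 := by
    have : Y + σ Y = 1 + 1 + 1 := by
      have a := key2 X1 e1
      have b := key2 X2 e2
      have c := key2 X3 e3
      rw [hY, map_add, map_add]
      linear_combination a + b + c
    rw [this, CharTwo.add_self_eq_zero, zero_add]
  have : Y * (Y - 1) = 0 := by rw [CharTwo.sub_eq_add, ← hYY]; ring
  rcases mul_eq_zero.mp this with h | h
  · rw [h] at hYs; simp at hYs
  · rw [sub_eq_zero.mp h, map_one, CharTwo.add_self_eq_zero] at hYs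
    simp at hYs

end Fld
end SpFour

namespace SpFour
set_option linter.unusedSectionVars false
section Cnt
variable {F K : Type*} [Field F] [Fintype F] [Field K] [Fintype K] [Algebra F K] [CharP K 2]
variable (σ : K →ₐ[F] K)

lemma im0_bound [DecidableEq K] [DecidableEq F] (hσ : ∀ x, σ x = x ^ (Fintype.card F ^ 2))
    (hσσ : ∀ x, σ (σ x) = x)
    (lam : K →ₗ[F] F) (hlam : ∃ e, σ e = e ∧ lam e ≠ 0) (M0 : K)
    (S : Finset K) (hS : ∀ e ∈ S, e ≠ 0 ∧ lam e = 0 ∧ ∃ X, X * σ X = M0 ∧ X + σ X = e) :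
    2 * S.card ≤ Fintype.card F := by
  rcases S.eq_empty_or_nonempty with rfl | ⟨e0, he0⟩
  · simp
  have hfix : ∀ e ∈ S, σ e = e := by
    intro e he
    obtain ⟨-, -, X, -, hX⟩ := hS e he
    rw [← hX, map_add, hσσ, add_comm]
  have hex : ∀ e ∈ S, ∃ f : F, e0 = f • e := fun e he =>
    ker_lam σ hσ lam hlam (hfix e he) (hfix e0 he0) (hS e he).1 (hS e he).2.1 (hS e0 he0).2.1
  choose! φ hφ using hex
  have hφ0 : ∀ e ∈ S, φ e ≠ 0 := by
    intro e he h
    have := hφ e he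
    rw [h, zero_smul] at this
    exact (hS e0 he0).1 this
  have hinv : ∀ e ∈ S, e⁻¹ = φ e • e0⁻¹ := by
    intro e he
    have h1 := (hS e he).1
    have h2 := (hS e0 he0).1
    have h3 := hφ e he
    rw [Algebra.smul_def] at h3 ⊢
    have h4 : algebraMap F K (φ e) ≠ 0 := by simpa using hφ0 e he
    rw [h3]; field_simp
  have hinj : Set.InjOn φ S := by
    intro a ha b hb hab
    have := hinv a ha
    rw [hab, ← hinv b hb] at this
    exact inv_injective this
  let Y := S.image φ
  have hYc : Y.card = S.card := Finset.card_image_of_injOn hinj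
  let Z := Y.image (fun y => φ e0 + y)
  have hZc : Z.card = Y.card := Finset.card_image_of_injective _ (add_right_injective _)
  have hdis : Disjoint Y Z := by
    rw [Finset.disjoint_left]
    intro y hy hz
    simp only [Y, Z, Finset.mem_image] at hy hz
    obtain ⟨e3, he3, rfl⟩ := hy
    obtain ⟨_, ⟨e2, he2, rfl⟩, h⟩ := hz
    obtain ⟨n1, -, X1, hM1, hX1⟩ := hS e0 he0
    obtain ⟨n2, -, X2, hM2, hX2⟩ := hS e2 he2
    obtain ⟨n3, -, X3, hM3, hX3⟩ := hS e3 he3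
    apply sumfree σ hσσ hM1 hM2 hM3 (hX1 ▸ n1) (hX2 ▸ n2) (hX3 ▸ n3)
    rw [hX1, hX2, hX3, hinv e3 he3, ← h, add_smul, ← hinv e0 he0, ← hinv e2 he2]
  have := Finset.card_le_univ (Y ∪ Z)
  rw [Finset.card_union_of_disjoint hdis, hZc, hYc] at this
  omega

lemma count [DecidableEq K] [DecidableEq F] (hσ : ∀ x, σ x = x ^ (Fintype.card F ^ 2))
    (hσσ : ∀ x, σ (σ x) = x)
    (lam : K →ₗ[F] F) (hlam : ∃ e, σ e = e ∧ lam e ≠ 0)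
    (C : Finset K) (hC : ∀ u ∈ C, u * σ u = 1) (hCc : C.card = Fintype.card F ^ 2 + 1)
    (a b : K) (ha : a ≠ 0) (hb : b ≠ 0) (hn : lam (a * σ a) ≠ 1) (I : Finset K)
    (hI0 : b * σ b ∈ I)
    (hI : ∀ u ∈ C, ∀ e, e = σ b * (u * a) + σ (σ b * (u * a)) →
      b * σ b + lam e • e + lam e ^ 2 • (a * σ a) ∈ I) :
    Fintype.card F ^ 2 + 1 ≤ 2 * I.card + Fintype.card F := by
  have : CharP F 2 := by
    rw [Algebra.charP_iff F K 2]; infer_instance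
  let X : K → K := fun u => σ b * (u * a)
  let ef : K → K := fun u => X u + σ (X u)
  have hσb : σ b ≠ 0 := by simpa using hb
  have hXN : ∀ u ∈ C, X u * σ (X u) = (b * σ b) * (a * σ a) := by
    intro u hu
    simp only [X, map_mul, hσσ]
    linear_combination (b * σ b) * (a * σ a) * hC u hu
  have hefix : ∀ u, σ (ef u) = ef u := by
    intro u; simp only [ef, map_add, hσσ]; rw [add_comm]
  let Im := C.image ef
  have hIm : C.card ≤ 2 * Im.card := by
    apply Finset.card_le_mul_card_image
    intro e he
    simp only [Im, Finset.mem_image] at he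
    obtain ⟨u0, hu0, rfl⟩ := he
    have hsub : C.filter (fun u => ef u = ef u0) ⊆ {u0, σ (X u0) / (σ b * a)} := by
      intro u hu
      rw [Finset.mem_filter] at hu
      obtain ⟨hu, he⟩ := hu
      have h1 := hXN u hu
      have h2 := hXN u0 hu0
      simp only [ef] at he
      have : (X u - X u0) * (X u - σ (X u0)) = 0 := by
        linear_combination X u * he - h1 + h2
      simp only [Finset.mem_insert, Finset.mem_singleton]
      rcases mul_eq_zero.mp this with h | h
      · left
        have h := sub_eq_zero.mp h
        simp only [X] at h
        exact mul_right_cancel₀ ha (mul_left_cancel₀ hσb h)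
      · right
        have h := sub_eq_zero.mp h
        rw [← h]
        simp only [X]
        field_simp
    exact (Finset.card_le_card hsub).trans Finset.card_le_two
  have hsplit := Finset.card_filter_add_card_filter_not (s := Im) (fun e => lam e = 0)
  have h0 : (Im.filter (fun e => lam e = 0)).card ≤
      ((Im.filter (fun e => lam e = 0)).erase 0).card + 1 := by
    have := Finset.pred_card_le_card_erase (s := Im.filter (fun e => lam e = 0)) (a := 0)
    omega
  have h0' := im0_bound σ hσ hσσ lam hlam ((b * σ b) * (a * σ a))
    ((Im.filter (fun e => lam e = 0)).erase 0) (by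
      intro e he
      simp only [Finset.mem_erase, Finset.mem_filter, Im, Finset.mem_image] at he
      obtain ⟨h1, ⟨u, hu, rfl⟩, h2⟩ := he
      exact ⟨h1, h2, X u, hXN u hu, rfl⟩)
  let v : K → K := fun e => b * σ b + lam e • e + lam e ^ 2 • (a * σ a)
  let Im1 := Im.filter (fun e => ¬ lam e = 0)
  have hlv : ∀ e, lam (v e) = lam (b * σ b) + lam e ^ 2 * (1 + lam (a * σ a)) := by
    intro e
    simp only [v, map_add, map_smul, smul_eq_mul]; ring
  have hn1 : 1 + lam (a * σ a) ≠ 0 := by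
    intro h
    apply hn
    rw [← CharTwo.sub_eq_add] at h
    exact (sub_eq_zero.mp h).symm
  have hinj : Set.InjOn v Im1 := by
    intro e he e' he' h
    have he0 : lam e ≠ 0 := by
      have := Finset.mem_coe.mp he
      exact (Finset.mem_filter.mp this).2
    have h1 := congrArg lam h
    rw [hlv, hlv] at h1
    have h2 := mul_right_cancel₀ hn1 (add_left_cancel h1)
    have h3 : lam e = lam e' := by
      have : (lam e - lam e') ^ 2 = 0 := by
        rw [CharTwo.sub_eq_add, CharTwo.add_sq, h2, CharTwo.add_self_eq_zero]
      exact sub_eq_zero.mp (pow_eq_zero_iff two_ne_zero |>.mp this)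
    simp only [v, ← h3] at h
    have h4 := add_left_cancel (add_right_cancel h)
    exact smul_right_injective K he0 h4
  have hsubI : insert (b * σ b) (Im1.image v) ⊆ I := by
    intro y hy
    rw [Finset.mem_insert] at hy
    rcases hy with rfl | hy
    · exact hI0
    · simp only [Im1, Im, Finset.mem_image, Finset.mem_filter] at hy
      obtain ⟨e, ⟨⟨u, hu, rfl⟩, -⟩, rfl⟩ := hy
      exact hI u hu _ rfl
  have hnot : b * σ b ∉ Im1.image v := by
    intro h
    simp only [Im1, Finset.mem_image, Finset.mem_filter] at h
    obtain ⟨e, ⟨-, he⟩, h⟩ := h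
    have := congrArg lam h
    rw [hlv, add_eq_left] at this
    exact (mul_ne_zero (pow_ne_zero 2 he) hn1) this
  have hfin := Finset.card_le_card hsubI
  rw [Finset.card_insert_of_notMem hnot, Finset.card_image_of_injOn hinj] at hfin
  simp only [Im1] at hfin
  omega

end Cnt
end SpFour

namespace SpFour
set_option linter.unusedSectionVars false
section Trans
variable {F K : Type*} [Field F] [Fintype F] [Field K] [Fintype K] [Algebra F K] [CharP K 2]
variable (σ : K →ₐ[F] K)

lemma trans_R [DecidableEq K] [DecidableEq F] (hσ : ∀ x, σ x = x ^ (Fintype.card F ^ 2))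
    (hσσ : ∀ x, σ (σ x) = x)
    (lam : K →ₗ[F] F) (hlam : ∃ e, σ e = e ∧ lam e ≠ 0)
    (C : Finset K) (hC : ∀ u ∈ C, u * σ u = 1) (hCc : C.card = Fintype.card F ^ 2 + 1)
    (hqe : Even (Fintype.card F))
    (a : K) (ha : a ≠ 0) (hn : lam (a * σ a) ≠ 1)
    (R : K → K → Prop) (hR : Equivalence R) (hR0 : ∀ x y, R x y → x ≠ 0 → y ≠ 0)
    (hRu : ∀ u x, u * σ u = 1 → R x (u * x))
    (hRf : ∀ (f : F) x y, R x y → R (f • x) (f • y))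
    (hRt : ∀ b, ∀ u ∈ C, R b (b + lam (σ b * (u * a) + σ (σ b * (u * a))) • (u * a)))
    (x y : K) (hx : x ≠ 0) (hy : y ≠ 0) : R x y := by
  classical
  have : CharP F 2 := by
    rw [Algebra.charP_iff F K 2]; infer_instance
  set q := Fintype.card F with hq
  have hq2 : 2 ≤ q := by
    have := Fintype.one_lt_card (α := F)
    omega
  let N : K → K := fun x => x * σ x
  have hNf : ∀ x, σ (N x) = N x := fun x => by simp only [N, map_mul, hσσ, mul_comm]
  have hN0 : ∀ x, x ≠ 0 → N x ≠ 0 := fun x hx => mul_ne_zero hx (by simpa using hx)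
  let I : K → Finset K := fun b => (Finset.univ.filter (fun x => R b x)).image N
  have hI1 : ∀ b, b ≠ 0 → q ^ 2 + 1 ≤ 2 * (I b).card + q := by
    intro b hb
    apply count σ hσ hσσ lam hlam C hC hCc a b ha hb hn (I b)
    · exact Finset.mem_image.2 ⟨b, by simpa using hR.refl b, rfl⟩
    · intro u hu e he
      refine Finset.mem_image.2 ⟨b + lam e • (u * a), ?_, ?_⟩
      · simpa [he] using hRt b u hu
      · have h1 := hC u hu
        simp only [N, map_add, map_smul, map_mul] at he ⊢
        rw [hσσ] at he
        simp only [Algebra.smul_def] at he ⊢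
        rw [map_pow]
        have : σ b * (u * a) + b * (σ u * σ a) = e := he.symm
        linear_combination (algebraMap F K (lam e)) * this + (algebraMap F K (lam e))^2 * (a * σ a) * h1
  have hN : ∀ x y, x ≠ 0 → y ≠ 0 → N x = N y → R x y := by
    intro x y hx hy h
    have := hRu (y / x) x (by
      have hx' : σ x ≠ 0 := by simpa using hx
      rw [map_div₀]
      simp only [N] at h
      field_simp
      exact h.symm)
    rwa [div_mul_cancel₀ _ hx] at this
  have hI2 : ∀ b b', b ≠ 0 → b' ≠ 0 → ¬ R b b' → Disjoint (I b) (I b') := by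
    intro b b' hb hb' hr
    rw [Finset.disjoint_left]
    intro e h1 h2
    obtain ⟨x, hx, rfl⟩ := Finset.mem_image.1 h1
    obtain ⟨x', hx', h⟩ := Finset.mem_image.1 h2
    simp only [Finset.mem_filter, Finset.mem_univ, true_and] at hx hx'
    exact hr (hR.trans hx (hR.trans (hN x x' (hR0 _ _ hx hb) (hR0 _ _ hx' hb') h.symm) (hR.symm hx')))
  have hNp : ∀ x, x ≠ 0 → N x ^ (q ^ 2 - 1) = 1 := by
    intro x hx
    apply mul_right_cancel₀ (hN0 x hx)
    have : 1 ≤ q ^ 2 := Nat.one_le_pow _ _ (by omega)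
    rw [one_mul, ← pow_succ, Nat.sub_add_cancel this, ← hσ, hNf]
  have hq4 : 4 ≤ q ^ 2 := by nlinarith
  have hI3 : ∀ b, b ≠ 0 → I b ⊆ Finset.univ.filter (fun e : K => e ^ (q ^ 2 - 1) = 1) := by
    intro b hb e he
    obtain ⟨x, hx, rfl⟩ := Finset.mem_image.1 he
    simp only [Finset.mem_filter, Finset.mem_univ, true_and] at hx ⊢
    exact hNp x (hR0 _ _ hx hb)
  have hE := card_roots_le (K := K) (q ^ 2 - 1) (by omega) 1
  have hsm : ∀ (g : F) (b : K), g ≠ 0 → b ≠ 0 → g • b ≠ 0 := fun g b hg hb => smul_ne_zero hg hb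
  have h4 : ∀ (b : K) (g : F), b ≠ 0 → g ≠ 0 → R b (g ^ 2 • b) := by
    intro b g hb hg
    by_cases h1 : R b (g • b)
    · have := hRf g _ _ h1
      rw [smul_smul, ← sq] at this
      exact hR.trans h1 this
    · by_contra h2
      have h3 : ¬ R (g • b) (g ^ 2 • b) := by
        intro h
        have := hRf g⁻¹ _ _ h
        rw [smul_smul, smul_smul, inv_mul_cancel₀ hg, one_smul, sq, inv_mul_cancel_left₀ hg] at this
        exact h1 this
      have hgb := hsm g b hg hb
      have hg2b := hsm (g ^ 2) b (pow_ne_zero _ hg) hb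
      have d1 := hI2 _ _ hb hgb h1
      have d2 := hI2 _ _ hb hg2b h2
      have d3 := hI2 _ _ hgb hg2b h3
      have hc := Finset.card_le_card (Finset.union_subset (Finset.union_subset (hI3 b hb) (hI3 _ hgb)) (hI3 _ hg2b))
      rw [Finset.card_union_of_disjoint (Finset.disjoint_union_left.2 ⟨d2, d3⟩),
        Finset.card_union_of_disjoint d1] at hc
      have c1 := hI1 _ hb
      have c2 := hI1 _ hgb
      have c3 := hI1 _ hg2b
      have hle : (I b).card + (I (g • b)).card + (I (g ^ 2 • b)).card ≤ q ^ 2 - 1 := hc.trans hE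
      have : (I b).card + (I (g • b)).card + (I (g ^ 2 • b)).card + 1 ≤ q ^ 2 := by omega
      zify at *
      nlinarith [sq_nonneg (2 * (q : ℤ) - 3)]
  have h5 : ∀ (b : K) (f : F), b ≠ 0 → f ≠ 0 → R b (f • b) := by
    intro b f hb hf
    obtain ⟨g, rfl⟩ := exists_sq f
    exact h4 b g hb (by rintro rfl; simp at hf)
  by_contra hxy
  let J : K → Finset K := fun b => (I b).image (fun e => e ^ (q - 1))
  have hJ1 : ∀ b, (I b).card ≤ (q - 1) * (J b).card := by
    intro b
    apply Finset.card_le_mul_card_image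
    intro c _
    refine (Finset.card_le_card ?_).trans (card_roots_le (K := K) (q - 1) (by omega) c)
    intro e he
    simp only [Finset.mem_filter, Finset.mem_univ, true_and] at he ⊢
    exact he.2
  have hJ3 : ∀ b, b ≠ 0 → J b ⊆ Finset.univ.filter (fun e : K => e ^ (q + 1) = 1) := by
    intro b hb e he
    obtain ⟨e, h, rfl⟩ := Finset.mem_image.1 he
    have := hI3 b hb h
    simp only [Finset.mem_filter, Finset.mem_univ, true_and] at this ⊢
    rw [← pow_mul, ← this]
    congr 1
    zify [show 1 ≤ q by omega, show 1 ≤ q ^ 2 by omega]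
    ring
  have hJ2 : Disjoint (J x) (J y) := by
    rw [Finset.disjoint_left]
    intro e h1 h2
    obtain ⟨e1, k1, rfl⟩ := Finset.mem_image.1 h1
    obtain ⟨e2, k2, h⟩ := Finset.mem_image.1 h2
    clear h1 h2
    obtain ⟨x1, h1, rfl⟩ := Finset.mem_image.1 k1
    obtain ⟨y1, h2, rfl⟩ := Finset.mem_image.1 k2
    simp only [Finset.mem_filter, Finset.mem_univ, true_and] at h1 h2 h
    have hx1 := hR0 _ _ h1 hx
    have hy1 := hR0 _ _ h2 hy
    obtain ⟨f, hf⟩ := exists_alg' (F := F) (N x1 / N y1) (by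
      rw [← hq, div_pow, h, div_self]
      exact pow_ne_zero _ (hN0 _ hx1))
    obtain ⟨g, rfl⟩ := exists_sq f
    have hNe : N x1 = N (g • y1) := by
      have h0 := hN0 _ hy1
      rw [eq_div_iff h0] at hf
      rw [← hf]
      simp only [N, Algebra.smul_def, map_mul, AlgHom.commutes, map_pow]
      ring
    have hg : g ≠ 0 := by
      rintro rfl
      apply hN0 _ hx1
      rw [hNe]; simp [N]
    have r1 := hN _ _ hx1 (hsm g y1 hg hy1) hNe
    have r2 := h5 y1 g hy1 hg
    exact hxy (hR.trans h1 (hR.trans r1 (hR.trans (hR.symm r2) (hR.symm h2))))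
  have hJc : ∀ b, b ≠ 0 → q + 2 ≤ 2 * (J b).card := by
    intro b hb
    have h1 := hI1 b hb
    have h2 := hJ1 b
    have : q < 2 * (J b).card := by
      by_contra hcon
      push Not at hcon
      have : 2 * ((q - 1) * (J b).card) ≤ (q - 1) * q := by nlinarith [Nat.zero_le (q-1)]
      have h3 : 2 * (I b).card ≤ (q - 1) * q := by omega
      have h4 : (q - 1) * q + q = q ^ 2 := by
        obtain ⟨k, hk⟩ := Nat.exists_eq_add_of_le hq2
        rw [hk, show 2 + k - 1 = k + 1 by omega]; ring
      omega
    obtain ⟨k, hk⟩ := hqe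
    omega
  have hc := Finset.card_le_card (Finset.union_subset (hJ3 x hx) (hJ3 y hy))
  rw [Finset.card_union_of_disjoint hJ2] at hc
  have := card_roots_le (K := K) (q + 1) (by omega) 1
  have := hJc x hx
  have := hJc y hy
  omega
end Trans
end SpFour

namespace SpFour
set_option linter.unusedSectionVars false
section Model
open Polynomial
universe u

lemma frob_four {K : Type*} [Field K] [CharP K 2] (q d : ℕ) (γ : K) (h1 : γ ^ (q ^ 2 + 1) = 1)
    (hd0 : 0 < d) (hd : d ≤ 4) (h : γ ^ (q ^ d) = γ) (hne : γ ≠ 1) : d = 4 := by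
  have hs : γ ^ 2 = 1 → False := by
    intro h
    apply hne
    have : (γ + 1) ^ 2 = 0 := by rw [CharTwo.add_sq, h, one_pow]; exact CharTwo.add_self_eq_zero 1
    have h3 : γ + 1 = 0 := by simpa using this
    exact CharTwo.add_eq_zero.1 h3
  have hγ2 : γ ^ (q ^ 2) = γ → False := by
    intro h
    rw [pow_succ, h] at h1
    exact hs (by rw [sq, h1])
  have hγ1 : γ ^ q = γ → False := by
    intro h
    apply hγ2
    rw [sq, pow_mul, h, h]
  interval_cases d
  · rw [pow_one] at h; exact (hγ1 h).elim
  · exact (hγ2 h).elim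
  · exfalso
    apply hγ1
    have hγ0 : γ ≠ 0 := by rintro rfl; simp at h1
    have h2 : γ ^ (q ^ 2) = γ⁻¹ := by
      rw [pow_succ] at h1
      exact eq_inv_of_mul_eq_one_left h1
    have h4 : γ ^ (q ^ 2 * q ^ 2) = γ := by
      rw [pow_mul, h2, inv_pow, h2, inv_inv]
    rw [show q ^ 2 * q ^ 2 = q ^ 3 * q by ring, pow_mul, h] at h4
    exact h4
  · rfl

lemma adj {F : Type u} [Field F] (p : F[X]) (hp : Irreducible p) (hm : p.Monic) :
    ∃ (K : Type u) (_ : Field K) (_ : Algebra F K) (pb : PowerBasis F K), minpoly F pb.gen = p := by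
  haveI : Fact (Irreducible p) := ⟨hp⟩
  refine ⟨AdjoinRoot p, inferInstance, inferInstance, AdjoinRoot.powerBasis hp.ne_zero, ?_⟩
  rw [AdjoinRoot.powerBasis_gen, AdjoinRoot.minpoly_root hp.ne_zero]
  simp [hm.leadingCoeff]

lemma model {F : Type u} [Field F] [Fintype F] [CharP F 2] (he : Even (Fintype.card F))
    (c : Sp 2 F) (hc : orderOf c = Fintype.card F ^ 2 + 1) :
    ∃ (K : Type u) (_ : Field K) (_ : Fintype K) (_ : Algebra F K) (θ : K ≃ₗ[F] Vec F) (γ : K),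
      CharP K 2 ∧ Fintype.card K = Fintype.card F ^ 4 ∧ (∀ k, act c (θ k) = θ (γ * k)) ∧
      orderOf γ = Fintype.card F ^ 2 + 1 ∧ Algebra.adjoin F {γ} = ⊤ := by
  set q := Fintype.card F with hq
  let A : Matrix (Fin 2 ⊕ Fin 2) (Fin 2 ⊕ Fin 2) F := c
  have hApow : ∀ k, A ^ k = 1 ↔ c ^ k = 1 := by
    intro k
    rw [Subtype.ext_iff]
    simp [A]
  have hA1 : A ≠ 1 := by
    intro h
    have h1 : c ^ 1 = 1 := (hApow 1).1 (by rw [pow_one, h])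
    have h2 := orderOf_dvd_of_pow_eq_one h1
    rw [hc] at h2
    have h3 := Nat.le_of_dvd one_pos h2
    have : 0 < q := Fintype.card_pos
    nlinarith
  have hAn : A ^ (q ^ 2 + 1) = 1 := (hApow _).2 (hc ▸ pow_orderOf_eq_one c)
  let g : F[X] := ∑ i ∈ Finset.range (q ^ 2 + 1), X ^ i
  have hg : g * (X - 1) = X ^ (q ^ 2 + 1) - 1 := geom_sum_mul X _
  have hint : IsIntegral F A := Algebra.IsIntegral.isIntegral A
  have hdiv : minpoly F A ∣ g * (X - 1) := by
    rw [hg, minpoly.dvd_iff]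
    simp [hAn]
  have hncop : ¬ IsCoprime (minpoly F A) g := by
    intro h
    have h1 := h.dvd_of_dvd_mul_left hdiv
    rw [minpoly.dvd_iff] at h1
    simp [sub_eq_zero] at h1
    exact hA1 h1
  classical
  have hnu : ¬ IsUnit (EuclideanDomain.gcd (minpoly F A) g) := by
    rwa [EuclideanDomain.gcd_isUnit_iff]
  obtain ⟨p, hpm, hpi, hpd⟩ := Polynomial.exists_monic_irreducible_factor _ hnu
  have hpA : p ∣ minpoly F A := hpd.trans (EuclideanDomain.gcd_dvd_left _ _)
  have hpg : p ∣ g := hpd.trans (EuclideanDomain.gcd_dvd_right _ _)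
  obtain ⟨K, _, _, pb, hpb⟩ := adj p hpi hpm
  set γ : K := pb.gen with hγ
  have hdeg : (minpoly F A).natDegree ≤ 4 := by
    have h1 := Polynomial.natDegree_le_of_dvd (Matrix.minpoly_dvd_charpoly A) (Matrix.charpoly_monic A).ne_zero
    simpa using h1
  have hpdeg : p.natDegree ≤ 4 :=
    (Polynomial.natDegree_le_of_dvd hpA (minpoly.ne_zero hint)).trans hdeg
  have hfr : Module.finrank F K = p.natDegree := by
    rw [pb.finrank, ← hpb, pb.natDegree_minpoly]
  haveI : Module.Finite F K := pb.finite
  haveI : Finite K := Module.finite_of_finite F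
  letI : Fintype K := Fintype.ofFinite K
  have hcard : Fintype.card K = q ^ p.natDegree := by
    rw [Module.card_eq_pow_finrank (K := F) (V := K), hfr]
  haveI : CharP K 2 := by
    rw [← Algebra.charP_iff F K 2]; infer_instance
  have hgγ : aeval γ g = 0 := by
    obtain ⟨r, hr⟩ := hpg
    rw [hr, map_mul]
    have : aeval γ p = 0 := hpb ▸ minpoly.aeval F γ
    rw [this, zero_mul]
  have hγn : γ ^ (q ^ 2 + 1) = 1 := by
    have h1 : aeval γ (g * (X - 1)) = 0 := by rw [map_mul, hgγ, zero_mul]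
    rw [hg] at h1
    simpa [sub_eq_zero] using h1
  have hγ1 : γ ≠ 1 := by
    intro h
    rw [h] at hgγ
    simp only [g, map_sum, map_pow, aeval_X, one_pow, Finset.sum_const, Finset.card_range, nsmul_eq_mul, mul_one] at hgγ
    rw [Nat.cast_add, Nat.cast_pow] at hgγ
    have : (q : K) = 0 := by
      rw [CharP.cast_eq_zero_iff K 2]; exact he.two_dvd
    simp [this] at hgγ
  have hd4 : p.natDegree = 4 := frob_four q _ γ hγn hpi.natDegree_pos hpdeg
    (by rw [← hcard]; exact FiniteField.pow_card γ) hγ1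
  have hpe : minpoly F A = p := by
    apply (Polynomial.eq_of_monic_of_dvd_of_natDegree_le hpm (minpoly.monic hint) hpA (by omega))
  have hA0 : aeval A p = 0 := hpe ▸ minpoly.aeval F A
  let ψ : K →ₐ[F] Matrix (Fin 2 ⊕ Fin 2) (Fin 2 ⊕ Fin 2) F := pb.lift A (by rw [hpb]; exact hA0)
  have hψγ : ψ γ = A := pb.lift_gen A _
  have hψ1 : ∀ k, γ ^ k = 1 ↔ A ^ k = 1 := by
    intro k
    rw [← hψγ, ← map_pow]
    constructor
    · intro h; rw [h, map_one]
    · intro h; exact ψ.toRingHom.injective (by simpa using h)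
  let v0 : Vec F := Pi.single (Sum.inl 0) 1
  have hv0 : v0 ≠ 0 := by
    intro h
    have := congrFun h (Sum.inl 0)
    simp [v0] at this
  let θ0 : K →ₗ[F] Vec F :=
    { toFun := fun k => (ψ k).mulVec v0
      map_add' := fun x y => by rw [map_add, Matrix.add_mulVec]
      map_smul' := fun f x => by rw [map_smul, Matrix.smul_mulVec]; rfl }
  have hθ0 : Function.Injective θ0 := by
    rw [← LinearMap.ker_eq_bot, LinearMap.ker_eq_bot']
    intro k hk
    by_contra hk0
    apply hv0
    have h1 : (ψ k).mulVec v0 = 0 := hk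
    have h2 : (ψ (k⁻¹ * k)).mulVec v0 = 0 := by
      rw [map_mul, ← Matrix.mulVec_mulVec, h1, Matrix.mulVec_zero]
    rwa [inv_mul_cancel₀ hk0, map_one, Matrix.one_mulVec] at h2
  let θ : K ≃ₗ[F] Vec F := LinearEquiv.ofInjectiveOfFinrankEq θ0 hθ0 (by
    rw [hfr, hd4]; simp)
  refine ⟨K, inferInstance, inferInstance, inferInstance, θ, γ, inferInstance, ?_, ?_, ?_, ?_⟩
  · rw [hcard, hd4]
  · intro k
    have : ∀ k, θ k = (ψ k).mulVec v0 := fun k => rfl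
    rw [this, this, map_mul, hψγ, ← Matrix.mulVec_mulVec]
    rfl
  · rw [← hc]
    apply orderOf_eq_orderOf_iff.2
    intro k
    rw [hψ1, hApow]
  · exact pb.adjoin_gen_eq_top
end Model
end SpFour

namespace SpFour
set_option linter.unusedSectionVars false
section Form
variable {F K : Type*} [Field F] [Fintype F] [CharP F 2] [Field K] [Fintype K] [Algebra F K] [CharP K 2]

lemma form (he : Even (Fintype.card F)) (hK : Fintype.card K = Fintype.card F ^ 4)
    (c : Sp 2 F) (θ : K ≃ₗ[F] Vec F) (γ : K)
    (hcθ : ∀ k, act c (θ k) = θ (γ * k)) (hγo : orderOf γ = Fintype.card F ^ 2 + 1)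
    (hγt : Algebra.adjoin F {γ} = ⊤) :
    ∃ σ : K →ₐ[F] K, (∀ x, σ x = x ^ (Fintype.card F ^ 2)) ∧ (∀ x, σ (σ x) = x) ∧
      ∃ lam : K →ₗ[F] F, (∃ e, σ e = e ∧ lam e ≠ 0) ∧
        ∀ x y, B (θ x) (θ y) = lam (σ x * y + σ (σ x * y)) := by
  set q := Fintype.card F with hq
  let σ : K →ₐ[F] K := (FiniteField.frobeniusAlgHom F K).comp (FiniteField.frobeniusAlgHom F K)
  have hσ : ∀ x, σ x = x ^ (q ^ 2) := by
    intro x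
    simp only [σ, AlgHom.comp_apply, FiniteField.frobeniusAlgHom_apply]
    rw [← pow_mul, sq]
  have hσσ : ∀ x, σ (σ x) = x := by
    intro x
    rw [hσ, hσ, ← pow_mul, show q ^ 2 * q ^ 2 = q ^ 4 by ring, ← hK, FiniteField.pow_card]
  have hγn : γ ^ (q ^ 2 + 1) = 1 := hγo ▸ pow_orderOf_eq_one γ
  have hγσ : γ * σ γ = 1 := by rw [hσ, ← hγn]; ring
  have hγ0 : γ ≠ 0 := by rintro rfl; simp at hγσ
  have hadj : ∀ k x y, B (θ (k * x)) (θ y) = B (θ x) (θ (σ k * y)) := by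
    intro k
    have hk : k ∈ Algebra.adjoin F {γ} := by rw [hγt]; trivial
    induction hk using Algebra.adjoin_induction with
    | mem k hk =>
      intro x y
      rw [Set.mem_singleton_iff] at hk
      subst hk
      rw [← hcθ, ← B_act c (θ x), hcθ (σ k * y), ← mul_assoc, hγσ, one_mul]
    | algebraMap r =>
      intro x y
      rw [AlgHom.commutes, ← Algebra.smul_def, ← Algebra.smul_def, map_smul, map_smul, B_smul_left,
        B_smul_right]
    | add a b _ _ ha hb =>
      intro x y
      rw [add_mul, map_add, B_add_left, ha, hb, map_add, add_mul, map_add, B_add_right]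
    | mul a b _ _ ha hb =>
      intro x y
      rw [mul_assoc, ha, hb, map_mul σ, show σ b * (σ a * y) = σ a * σ b * y by ring]
  let ℓ : K →ₗ[F] F :=
    { toFun := fun k => B (θ 1) (θ k)
      map_add' := fun x y => by rw [map_add, B_add_right]
      map_smul' := fun f x => by rw [map_smul, B_smul_right]; rfl }
  have hℓ : ∀ x y, B (θ x) (θ y) = ℓ (σ x * y) := by
    intro x y
    have := hadj x 1 y
    rw [mul_one] at this
    exact this
  have hℓ0 : ∀ e, σ e = e → ℓ e = 0 := by
    intro e h
    obtain ⟨b, rfl⟩ := exists_sq e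
    have hb : σ b = b := by
      rw [map_pow] at h
      exact CharTwo.sq_injective h
    have := hℓ b b
    rw [hb, B_self] at this
    rw [sq, ← this]
  have hγne : γ + σ γ ≠ 0 := by
    intro h
    have h1 : γ = σ γ := CharTwo.add_eq_zero.1 h
    rw [← h1, ← sq] at hγσ
    have h2 := orderOf_dvd_of_pow_eq_one hγσ
    rw [hγo] at h2
    have h3 := Nat.le_of_dvd two_pos h2
    have : 1 < q := Fintype.one_lt_card
    nlinarith
  obtain ⟨ω, hω⟩ : ∃ ω : K, ω + σ ω = 1 := by
    refine ⟨γ / (γ + σ γ), ?_⟩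
    rw [map_div₀, map_add, hσσ, add_comm (σ γ) γ, ← add_div, div_self hγne]
  let lam : K →ₗ[F] F := ℓ.comp (LinearMap.mulLeft F ω)
  have hlam : ∀ k, lam k = ℓ (ω * k) := fun k => rfl
  have hℓlam : ∀ k, ℓ k = lam (k + σ k) := by
    intro k
    rw [hlam]
    have h1 : σ (k + ω * (k + σ k)) = k + ω * (k + σ k) := by
      have h2 : σ ω = 1 + ω := by rw [← hω, add_comm ω, add_assoc, CharTwo.add_self_eq_zero, add_zero]
      simp only [map_add, map_mul, hσσ, h2]
      have := k2 (K := K)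
      linear_combination (σ k) * this
    have h2 := hℓ0 _ h1
    rw [map_add] at h2
    exact CharTwo.add_eq_zero.1 h2
  refine ⟨σ, hσ, hσσ, lam, ?_, ?_⟩
  · obtain ⟨y, hy⟩ := exists_B_one (θ 1) (by simp)
    obtain ⟨k, rfl⟩ := θ.surjective y
    refine ⟨k + σ k, ?_, ?_⟩
    · rw [map_add, hσσ, add_comm]
    · rw [← hℓlam]
      change B (θ 1) (θ k) ≠ 0
      rw [hy]; exact one_ne_zero
  · intro x y
    rw [hℓ, hℓlam]
end Form
end SpFour

namespace SpFour
set_option linter.unusedSectionVars false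
section CaseA
variable {F K : Type*} [Field F] [Fintype F] [CharP F 2] [Field K] [Fintype K] [Algebra F K] [CharP K 2]

lemma act_pow (c : Sp 2 F) (θ : K ≃ₗ[F] Vec F) (γ : K)
    (hcθ : ∀ k, act c (θ k) = θ (γ * k)) (i : ℕ) (k : K) : act (c ^ i) (θ k) = θ (γ ^ i * k) := by
  induction i generalizing k with
  | zero => simp [act_one]
  | succ n ih => rw [pow_succ, act_mul, hcθ, ih, pow_succ, mul_assoc]

lemma caseA (he : Even (Fintype.card F))
    (c : Sp 2 F) (θ : K ≃ₗ[F] Vec F) (γ : K)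
    (hcθ : ∀ k, act c (θ k) = θ (γ * k)) (hγo : orderOf γ = Fintype.card F ^ 2 + 1)
    (σ : K →ₐ[F] K) (hσ : ∀ x, σ x = x ^ (Fintype.card F ^ 2)) (hσσ : ∀ x, σ (σ x) = x)
    (lam : K →ₗ[F] F) (hlam : ∃ e, σ e = e ∧ lam e ≠ 0)
    (hB : ∀ x y, B (θ x) (θ y) = lam (σ x * y + σ (σ x * y)))
    (L : Subgroup (Sp 2 F)) (hc : c ∈ L) (a : K) (ha : a ≠ 0) (hn : lam (a * σ a) ≠ 1)
    (hat : tv (θ a) ∈ L) : L = ⊤ := by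
  classical
  have hprim : IsPrimitiveRoot γ (Fintype.card F ^ 2 + 1) := hγo ▸ IsPrimitiveRoot.orderOf γ
  let C : Finset K := (Finset.range (Fintype.card F ^ 2 + 1)).image (fun i => γ ^ i)
  have hCc : C.card = Fintype.card F ^ 2 + 1 := by
    rw [Finset.card_image_of_injOn, Finset.card_range]
    intro i hi j hj h
    exact hprim.pow_inj (by simpa using hi) (by simpa using hj) h
  have hC : ∀ u ∈ C, u * σ u = 1 := by
    intro u hu
    obtain ⟨i, -, rfl⟩ := Finset.mem_image.1 hu
    rw [hσ, ← pow_succ', ← pow_mul, mul_comm, pow_mul, hprim.pow_eq_one, one_pow]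
  have htr := trans_R σ hσ hσσ lam hlam C hC hCc he a ha hn
    (fun x y => ∃ g ∈ L, act g (θ x) = θ y)
    ⟨fun x => ⟨1, L.one_mem, act_one _⟩,
     fun {x y} ⟨g, hg, h⟩ => ⟨g⁻¹, L.inv_mem hg, by rw [← h, act_inv_act]⟩,
     fun {x y z} ⟨g, hg, h⟩ ⟨g', hg', h'⟩ => ⟨g' * g, L.mul_mem hg' hg, by rw [act_mul, h, h']⟩⟩
    (by
      rintro x y ⟨g, hg, h⟩ hx rfl
      rw [map_zero] at h
      exact act_ne_zero g (by simpa using hx) h)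
    (by
      intro u x hu
      obtain ⟨i, hi, rfl⟩ := hprim.eq_pow_of_pow_eq_one (ξ := u) (by
        rw [pow_succ', ← hσ, hu])
      exact ⟨c ^ i, L.pow_mem hc i, act_pow c θ γ hcθ i x⟩)
    (by
      rintro f x y ⟨g, hg, h⟩
      exact ⟨g, hg, by rw [map_smul, map_smul, act_smul, h]⟩)
    (by
      intro b u hu
      obtain ⟨i, -, rfl⟩ := Finset.mem_image.1 hu
      refine ⟨c ^ i * tv (θ a) * (c ^ i)⁻¹, L.mul_mem (L.mul_mem (L.pow_mem hc i) hat) (L.inv_mem (L.pow_mem hc i)), ?_⟩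
      rw [conj_tv, act_pow c θ γ hcθ, act_tv, hB, map_add θ, map_smul θ])
  apply gen
  intro v
  by_cases hv : v = 0
  · have : tv (0 : Vec F) = 1 := by
      apply act_ext
      intro x
      rw [act_tv, act_one, smul_zero, add_zero]
    rw [hv, this]; exact L.one_mem
  · obtain ⟨k, rfl⟩ := θ.surjective v
    obtain ⟨g, hg, h⟩ := htr a k ha (by rintro rfl; simp at hv)
    rw [← h, ← conj_tv]
    exact L.mul_mem (L.mul_mem hg hat) (L.inv_mem hg)

lemma caseB1
    (c : Sp 2 F) (θ : K ≃ₗ[F] Vec F) (γ : K)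
    (hcθ : ∀ k, act c (θ k) = θ (γ * k)) (hγt : Algebra.adjoin F {γ} = ⊤)
    (Q : Vec F → F) (hQa : ∀ x y, Q (x + y) = Q x + Q y + B x y)
    (hQs : ∀ (f : F) x, Q (f • x) = f ^ 2 * Q x)
    (L : Subgroup (Sp 2 F)) (hc : c ∈ L) (v : Vec F) (hv : v ≠ 0) (hat : tv v ∈ L)
    (hD : ∀ v, v ≠ 0 → tv v ∈ L → Q v = 1) (g : Sp 2 F) (hg : g ∈ L) (x : Vec F) :
    Q (act g x) = Q x := by
  obtain ⟨a, rfl⟩ := θ.surjective v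
  have ha : a ≠ 0 := by rintro rfl; simp at hv
  have key : ∀ k : K, Q (act g (θ (k * a))) = Q (θ (k * a)) := by
    intro k
    have hk : k ∈ Subalgebra.toSubmodule (Algebra.adjoin F {γ}) := by rw [hγt]; trivial
    rw [Algebra.adjoin_eq_span] at hk
    induction hk using Submodule.span_induction with
    | mem k hk =>
      obtain ⟨i, rfl⟩ := Submonoid.mem_closure_singleton.1 hk
      have h1 : tv (θ (γ ^ i * a)) ∈ L := by
        rw [← act_pow c θ γ hcθ, ← conj_tv]
        exact L.mul_mem (L.mul_mem (L.pow_mem hc i) hat) (L.inv_mem (L.pow_mem hc i))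
      have h2 : tv (act g (θ (γ ^ i * a))) ∈ L := by
        rw [← conj_tv]
        exact L.mul_mem (L.mul_mem hg h1) (L.inv_mem hg)
      have h3 : θ (γ ^ i * a) ≠ 0 := by
        rw [← act_pow c θ γ hcθ]
        exact act_ne_zero _ hv
      rw [hD _ h3 h1, hD _ (act_ne_zero g h3) h2]
    | zero => rw [zero_mul, map_zero, act_zero]
    | add x y _ _ hx hy =>
      rw [add_mul, map_add, act_add, hQa, hQa, B_act, hx, hy]
    | smul f x _ hx =>
      rw [smul_mul_assoc, map_smul, act_smul, hQs, hQs, hx]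
  obtain ⟨k, rfl⟩ := θ.surjective x
  have := key (k * a⁻¹)
  rwa [mul_assoc, inv_mul_cancel₀ ha, mul_one] at this

lemma card_sigma [DecidableEq K] [DecidableEq F] (θ : K ≃ₗ[F] Vec F) (γ : K) (hγo : orderOf γ = Fintype.card F ^ 2 + 1)
    (σ : K →ₐ[F] K) (hσ : ∀ x, σ x = x ^ (Fintype.card F ^ 2)) (hσσ : ∀ x, σ (σ x) = x)
    (lam : K →ₗ[F] F) (hlam : ∃ e, σ e = e ∧ lam e ≠ 0) :
    (Finset.univ.filter (fun x : K => x ≠ 0 ∧ lam (x * σ x) = 0)).card =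
      (Fintype.card F ^ 2 + 1) * (Fintype.card F - 1) := by
  have hprim : IsPrimitiveRoot γ (Fintype.card F ^ 2 + 1) := hγo ▸ IsPrimitiveRoot.orderOf γ
  haveI : Module.Finite F K := Module.Finite.equiv θ.symm
  have hfr : Module.finrank F K = 4 := by rw [θ.finrank_eq]; simp
  let T : K →ₗ[F] K := LinearMap.id + σ.toLinearMap
  have hT : ∀ x, T x = x + σ x := fun x => rfl
  have hTT : LinearMap.range T ≤ LinearMap.ker T := by
    rintro _ ⟨x, rfl⟩
    rw [LinearMap.mem_ker, hT, hT, map_add, hσσ]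
    rw [add_comm (σ x) x]; exact CharTwo.add_self_eq_zero _
  have h1 := Submodule.finrank_mono hTT
  have h2 := LinearMap.finrank_range_add_finrank_ker T
  have h3 : LinearMap.ker (lam.domRestrict (LinearMap.ker T)) ≠ ⊥ := by
    apply LinearMap.ker_ne_bot_of_finrank_lt
    rw [Module.finrank_self]; omega
  obtain ⟨⟨e0, heT⟩, heK, hne⟩ := Submodule.exists_mem_ne_zero_of_ne_bot h3
  have he0 : σ e0 = e0 := by
    rw [LinearMap.mem_ker, hT] at heT
    exact (CharTwo.add_eq_zero.1 heT).symm
  have hl0 : lam e0 = 0 := heK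
  have hne0 : e0 ≠ 0 := fun h => hne (by simp [h])
  obtain ⟨x0, rfl⟩ := exists_sq e0
  have hx0σ : σ x0 = x0 := by
    rw [map_pow] at he0
    exact CharTwo.sq_injective he0
  have hx0 : x0 ≠ 0 := by rintro rfl; simp at hne0
  have hN : ∀ (i : ℕ) (f : F), (x0 * γ ^ i * algebraMap F K f) * σ (x0 * γ ^ i * algebraMap F K f) = f ^ 2 • x0 ^ 2 := by
    intro i f
    have h1 : γ ^ i * σ γ ^ i = 1 := by
      rw [← mul_pow, hσ, ← pow_succ', hprim.pow_eq_one, one_pow]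
    rw [map_mul, map_mul, map_pow, AlgHom.commutes, hx0σ, Algebra.smul_def, map_pow]
    linear_combination (x0 ^ 2 * algebraMap F K f ^ 2) * h1
  have himg : Finset.univ.filter (fun x : K => x ≠ 0 ∧ lam (x * σ x) = 0) =
      ((Finset.range (Fintype.card F ^ 2 + 1)) ×ˢ (Finset.univ.erase (0 : F))).image
        (fun p => x0 * γ ^ p.1 * algebraMap F K p.2) := by
    ext x
    simp only [Finset.mem_filter, Finset.mem_univ, true_and, Finset.mem_image, Finset.mem_product,
      Finset.mem_range, Finset.mem_erase, and_true, Prod.exists]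
    constructor
    · rintro ⟨hx, hl⟩
      have hxx : σ (x * σ x) = x * σ x := by rw [map_mul, hσσ, mul_comm]
      obtain ⟨f, hf⟩ := ker_lam σ hσ lam hlam he0 hxx hne0 hl0 hl
      obtain ⟨g, rfl⟩ := exists_sq f
      have hσx : σ x ≠ 0 := by simpa using hx
      have hg : g ≠ 0 := by
        rintro rfl
        simp [hx] at hf
      have hg' : algebraMap F K g ≠ 0 := by simpa using hg
      obtain ⟨i, hi, h⟩ := hprim.eq_pow_of_pow_eq_one (ξ := x / (x0 * algebraMap F K g)) (by
        rw [pow_succ', ← hσ, map_div₀, map_mul, AlgHom.commutes, hx0σ, div_mul_div_comm, hf, Algebra.smul_def, map_pow]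
        field_simp)
      refine ⟨i, g, ⟨hi, hg⟩, ?_⟩
      rw [h]; field_simp
    · rintro ⟨i, f, ⟨hi, hf⟩, rfl⟩
      refine ⟨?_, ?_⟩
      · have hγ : γ ≠ 0 := hprim.ne_zero (by positivity)
        simp [hx0, hγ, hf]
      · rw [hN, map_smul, hl0, smul_zero]
  rw [himg, Finset.card_image_of_injOn, Finset.card_product, Finset.card_range,
    Finset.card_erase_of_mem (Finset.mem_univ _), Finset.card_univ]
  rintro ⟨i, f⟩ hi ⟨j, g⟩ hj h
  simp only [Finset.coe_product, Set.mem_prod, Finset.mem_coe, Finset.mem_range, Finset.mem_erase] at hi hj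
  simp only at h
  have h1 := hN i f
  rw [h, hN j g] at h1
  have h2 := smul_left_injective F hne0 h1
  have h3 : g = f := CharTwo.sq_injective h2
  subst h3
  have hg' : algebraMap F K g ≠ 0 := by simpa using hi.2.1
  have h4 := mul_left_cancel₀ hx0 (mul_right_cancel₀ hg' h)
  rw [hprim.pow_inj hi.1 hj.1 h4]
end CaseA
end SpFour

namespace SpFour
set_option linter.unusedSectionVars false
section CaseB
universe u
variable {F : Type u} [Field F] [Fintype F] [CharP F 2]

/-- the set of nonzero singular vectors -/
def Sing (Q : Vec F → F) : Type _ := {x : Vec F // x ≠ 0 ∧ Q x = 0}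

/-- action on singular vectors -/
@[reducible]
def singAct (Q : Vec F → F) (L : Subgroup (Sp 2 F)) (hL : ∀ g ∈ L, ∀ x, Q (act g x) = Q x) :
    MulAction L (Sing Q) where
  smul g x := ⟨act g.1 x.1, act_ne_zero _ x.2.1, by rw [hL _ g.2, x.2.2]⟩
  one_smul x := Subtype.ext (act_one _)
  mul_smul g h x := Subtype.ext (act_mul _ _ _)

lemma fixed_vec (Q : Vec F → F) (L : Subgroup (Sp 2 F)) (hL : ∀ g ∈ L, ∀ x, Q (act g x) = Q x)
    (z : Sp 2 F) (hz : z ∈ L) (r k : ℕ) (hr : r.Prime) (hzr : z ^ (r ^ k) = 1)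
    (hc : ¬ r ∣ Nat.card (Sing Q)) : ∃ x : Vec F, x ≠ 0 ∧ act z x = x := by
  have hfr : Fact r.Prime := ⟨hr⟩
  let P := Subgroup.zpowers z
  have hP : P ≤ L := by rw [Subgroup.zpowers_le]; exact hz
  letI := singAct Q P (fun g hg => hL g (hP hg))
  have hp : IsPGroup r P := by
    rintro ⟨g, hg⟩
    obtain ⟨n, rfl⟩ := Subgroup.mem_zpowers_iff.1 hg
    refine ⟨k, Subtype.ext ?_⟩
    simp only [SubmonoidClass.mk_pow, Subgroup.coe_one]
    rw [← zpow_natCast, ← zpow_mul, mul_comm, zpow_mul, zpow_natCast, hzr, one_zpow]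
  have : Finite (Sing Q) := Subtype.finite
  obtain ⟨x, hx⟩ := hp.nonempty_fixed_point_of_prime_not_dvd_card (Sing Q) hc
  refine ⟨x.1, x.2.1, ?_⟩
  have := hx ⟨z, Subgroup.mem_zpowers z⟩
  exact congrArg Subtype.val this

lemma no_fixed (z : Sp 2 F) (R : ℕ) (hR : Odd R) (hz : z ^ R = 1)
    (hab : ∀ x y : Sp 2 F, x * z = z * x → y * z = z * y → x * y = y * x)
    (x : Vec F) (hx0 : x ≠ 0) (hx : act z x = x) : False := by
  obtain ⟨w, hw⟩ := exists_B_one x hx0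
  have hsumact : ∀ (n : ℕ) (g : Sp 2 F) (f : ℕ → Vec F),
      act g (∑ i ∈ Finset.range n, f i) = ∑ i ∈ Finset.range n, act g (f i) := by
    intro n g f
    induction n with
    | zero => simp [act_zero]
    | succ n ih => rw [Finset.sum_range_succ, Finset.sum_range_succ, act_add, ih]
  have hsumB : ∀ (n : ℕ) (f : ℕ → Vec F),
      B x (∑ i ∈ Finset.range n, f i) = ∑ i ∈ Finset.range n, B x (f i) := by
    intro n f
    induction n with
    | zero => simp [B_zero_right]
    | succ n ih => rw [Finset.sum_range_succ, Finset.sum_range_succ, B_add_right, ih]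
  let x' := ∑ i ∈ Finset.range R, act (z ^ i) w
  have hx' : act z x' = x' := by
    rw [hsumact]
    have h1 := Finset.sum_range_succ (fun i => act (z ^ i) w) R
    rw [Finset.sum_range_succ'] at h1
    simp only [hz, pow_zero] at h1
    change _ = ∑ i ∈ Finset.range R, act (z ^ i) w
    rw [← add_right_cancel h1]
    apply Finset.sum_congr rfl
    intro i _
    rw [← act_mul, pow_succ']
  have hpow : ∀ i : ℕ, act (z ^ i) x = x := by
    intro i
    induction i with
    | zero => simp [act_one]
    | succ n ih => rw [pow_succ, act_mul, hx, ih]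
  have hB : B x x' = 1 := by
    rw [hsumB]
    have : ∀ i ∈ Finset.range R, B x (act (z ^ i) w) = 1 := by
      intro i _
      rw [← hw, ← B_act (z ^ i) x w, hpow]
    rw [Finset.sum_congr rfl this]
    simp only [Finset.sum_const, Finset.card_range, nsmul_eq_mul, mul_one]
    obtain ⟨m, rfl⟩ := hR
    push_cast
    rw [CharTwo.two_eq_zero]; ring
  have hcm : ∀ y : Vec F, act z y = y → tv y * z = z * tv y := by
    intro y hy
    have h := conj_tv z y
    rw [hy, mul_inv_eq_iff_eq_mul] at h
    exact h.symm
  have h := hab (tv x) (tv x') (hcm x hx) (hcm x' hx')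
  have h2 := congrArg (fun g => act g x) h
  simp only [act_mul, act_tv, B_self, zero_smul, add_zero, B_add_left, hB, one_smul, zero_add] at h2
  rw [B_comm x' x, hB, one_smul, add_comm x x', add_assoc, addV_self, add_zero] at h2
  apply hx0
  exact left_eq_add.1 h2

lemma dich (he : Even (Fintype.card F)) (L : Subgroup (Sp 2 F)) (hL : L ≠ ⊤)
    (c : Sp 2 F) (hc : c ∈ L) (hco : orderOf c = Fintype.card F ^ 2 + 1)
    (v : Vec F) (hv : v ≠ 0) (hvL : tv v ∈ L)
    (z : Sp 2 F) (hz : z ∈ L) (r k : ℕ) (hr : r.Prime) (hzr : z ^ (r ^ k) = 1)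
    (hrq : r ∣ Fintype.card F + 1)
    (hab : ∀ x y : Sp 2 F, x * z = z * x → y * z = z * y → x * y = y * x) : False := by
  classical
  obtain ⟨K, _, _, _, θ, γ, _, hK, hcθ, hγo, hγt⟩ := model he c hco
  obtain ⟨σ, hσ, hσσ, lam, hlam, hB⟩ := form he hK c θ γ hcθ hγo hγt
  by_cases hA : ∃ a, a ≠ 0 ∧ tv (θ a) ∈ L ∧ lam (a * σ a) ≠ 1
  · obtain ⟨a, ha, hat, hn⟩ := hA
    exact hL (caseA he c θ γ hcθ hγo σ hσ hσσ lam hlam hB L hc a ha hn hat)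
  push Not at hA
  let Q : Vec F → F := fun x => lam (θ.symm x * σ (θ.symm x))
  have hQa : ∀ x y, Q (x + y) = Q x + Q y + B x y := by
    intro x y
    obtain ⟨x, rfl⟩ := θ.surjective x
    obtain ⟨y, rfl⟩ := θ.surjective y
    rw [hB]
    simp only [Q, ← map_add, LinearEquiv.symm_apply_apply]
    congr 1
    simp only [map_add, map_mul, hσσ]
    ring
  have hQs : ∀ (f : F) x, Q (f • x) = f ^ 2 * Q x := by
    intro f x
    simp only [Q]
    rw [map_smul, map_smul, smul_mul_smul_comm, map_smul, sq]; rfl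
  have hQL : ∀ g ∈ L, ∀ x, Q (act g x) = Q x := fun g hg x =>
    caseB1 c θ γ hcθ hγt Q hQa hQs L hc v hv hvL (by
      intro v hv hvL
      obtain ⟨a, rfl⟩ := θ.surjective v
      simp only [Q, LinearEquiv.symm_apply_apply]
      exact hA a (by rintro rfl; simp at hv) hvL) g hg x
  have hq : 1 < Fintype.card F := Fintype.one_lt_card
  have hr2 : r ≠ 2 := by
    rintro rfl
    obtain ⟨m, hm⟩ := he
    omega
  have hcard : Nat.card (Sing Q) = (Fintype.card F ^ 2 + 1) * (Fintype.card F - 1) := by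
    rw [← card_sigma θ γ hγo σ hσ hσσ lam hlam, ← Fintype.card_subtype, ← Nat.card_eq_fintype_card]
    apply Nat.card_congr
    refine Equiv.subtypeEquiv θ.symm.toEquiv ?_
    intro x
    simp [Q]
  have hnd : ¬ r ∣ Nat.card (Sing Q) := by
    rw [hcard, hr.dvd_mul]
    have hr2' : ¬ r ∣ 2 := fun h => hr2 ((Nat.prime_dvd_prime_iff_eq hr Nat.prime_two).1 h)
    obtain ⟨m, hm⟩ := Nat.exists_eq_add_of_lt hq
    rw [hm] at hrq ⊢
    rintro (h | h)
    · apply hr2'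
      have h1 : (1 + m + 1) ^ 2 + 1 = (1 + m + 1 + 1) * (m + 1) + 2 := by ring
      rw [h1] at h
      exact (Nat.dvd_add_right (hrq.mul_right _)).1 h
    · apply hr2'
      rw [show 1 + m + 1 - 1 = m + 1 by omega] at h
      rw [show 1 + m + 1 + 1 = m + 1 + 2 by omega] at hrq
      exact (Nat.dvd_add_right h).1 hrq
  obtain ⟨x, hx0, hx⟩ := fixed_vec Q L hQL z hz r k hr hzr hnd
  exact no_fixed z (r ^ k) ((hr.odd_of_ne_two hr2).pow) hzr hab x hx0 hx
end CaseB
end SpFour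

namespace SpFour
set_option linter.unusedSectionVars false
section Elems
open Polynomial
universe u
variable {F : Type u} [Field F] [Fintype F] [CharP F 2]

lemma exists_ext (F : Type u) [Field F] [Fintype F] [CharP F 2] : ∃ (K : Type) (_ : Field K) (_ : Fintype K) (_ : Algebra F K), CharP K 2 ∧
    Fintype.card K = Fintype.card F ^ 4 ∧
    ∀ n, n ∣ Fintype.card F ^ 4 - 1 → ∃ ζ : K, orderOf ζ = n := by
  have : Fact (Nat.Prime 2) := ⟨Nat.prime_two⟩
  let K := FiniteField.Extension F 2 4
  have hfin : Finite K := Module.finite_of_finite F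
  let hft : Fintype K := Fintype.ofFinite K
  have hcard : Fintype.card K = Fintype.card F ^ 4 := by
    rw [← Nat.card_eq_fintype_card, ← Nat.card_eq_fintype_card]
    exact FiniteField.natCard_extension F 2 4
  have hch : CharP K 2 := by
    rw [← Algebra.charP_iff F K 2]; infer_instance
  refine ⟨K, inferInstance, hft, inferInstance, hch, hcard, ?_⟩
  intro n hn
  obtain ⟨g, hg⟩ := IsCyclic.exists_ofOrder_eq_natCard (α := Kˣ)
  rw [Nat.card_units, Nat.card_eq_fintype_card, hcard] at hg
  obtain ⟨m, hm⟩ := hn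
  have h0 : Fintype.card F ^ 4 - 1 ≠ 0 := by
    have : 1 < Fintype.card F := Fintype.one_lt_card
    have := Nat.one_lt_pow (show (4 : ℕ) ≠ 0 by norm_num) this
    omega
  have hm0 : m ≠ 0 := by rintro rfl; simp at hm; exact h0 hm
  refine ⟨((g ^ m : Kˣ) : K), ?_⟩
  rw [orderOf_units, orderOf_pow_of_dvd hm0 (by rw [hg, hm]; exact dvd_mul_left _ _), hg, hm]
  exact Nat.mul_div_cancel _ (Nat.pos_of_ne_zero hm0)

/-- block matrix -/
def MS (S : Matrix (Fin 2) (Fin 2) F) : Matrix (Fin 2 ⊕ Fin 2) (Fin 2 ⊕ Fin 2) F :=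
  Matrix.fromBlocks 0 1 1 S

/-- doubled diagonal -/
def DS (S : Matrix (Fin 2) (Fin 2) F) : Matrix (Fin 2 ⊕ Fin 2) (Fin 2 ⊕ Fin 2) F :=
  Matrix.fromBlocks S 0 0 S

lemma mneg (S : Matrix (Fin 2) (Fin 2) F) : -S = S := by
  ext i j; simp [CharTwo.neg_eq]

lemma MS_mem (S : Matrix (Fin 2) (Fin 2) F) (hS : S.transpose = S) :
    MS S ∈ Matrix.symplecticGroup (Fin 2) F := by
  rw [SymplecticGroup.mem_iff, MS, Matrix.J, Matrix.fromBlocks_transpose, Matrix.fromBlocks_multiply,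
    Matrix.fromBlocks_multiply]
  simp [hS, mneg, ← sub_eq_add_neg]
  have := mneg S
  nth_rewrite 2 [← this]
  simp

lemma MS_sq (S : Matrix (Fin 2) (Fin 2) F) : MS S ^ 2 + 1 = DS S * MS S := by
  rw [sq, MS, DS, Matrix.fromBlocks_multiply, Matrix.fromBlocks_multiply, ← Matrix.fromBlocks_one,
    Matrix.fromBlocks_add]
  have : (1 : Matrix (Fin 2) (Fin 2) F) + 1 = 0 := by
    nth_rewrite 1 [← mneg 1]; simp
  rw [Matrix.fromBlocks_inj]
  refine ⟨by simp [this], by simp, by simp, ?_⟩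
  simp only [mul_one, zero_mul, zero_add]
  rw [add_comm (1 : Matrix (Fin 2) (Fin 2) F), add_assoc, this, add_zero]

lemma DS_comm (S : Matrix (Fin 2) (Fin 2) F) : DS S * MS S = MS S * DS S := by
  rw [MS, DS, Matrix.fromBlocks_multiply, Matrix.fromBlocks_multiply]
  simp

lemma tau_mem {K : Type*} [Field K] [Fintype K] [Algebra F K] [CharP K 2] (γ : K) (h : γ ^ (Fintype.card F + 1) = 1) :
    ∃ τ : F, algebraMap F K τ = γ + γ⁻¹ := by
  apply exists_alg
  have h0 : γ ≠ 0 := by rintro rfl; simp at h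
  have hq : γ ^ Fintype.card F = γ⁻¹ := by
    rw [pow_succ] at h; exact eq_inv_of_mul_eq_one_left h
  have := map_add (FiniteField.frobeniusAlgHom F K) γ γ⁻¹
  simp only [FiniteField.frobeniusAlgHom_apply] at this
  rw [this, inv_pow, hq, inv_inv, add_comm]

lemma exists_c : ∃ c : Sp 2 F, orderOf c = Fintype.card F ^ 2 + 1 := by
  obtain ⟨K, _, _, _, _, hK, hζ⟩ := exists_ext F
  have hq1 : 1 < Fintype.card F := Fintype.one_lt_card
  set q := Fintype.card F with hq
  obtain ⟨γ, hγo⟩ := hζ (q ^ 2 + 1) (by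
    refine ⟨q ^ 2 - 1, ?_⟩
    have : 1 ≤ q ^ 2 := Nat.one_le_pow _ _ (by omega)
    have : 1 ≤ q ^ 4 := Nat.one_le_pow _ _ (by omega)
    obtain ⟨m, hm⟩ := Nat.exists_eq_add_of_le ‹1 ≤ q ^ 2›
    rw [show q ^ 4 = (q ^ 2) ^ 2 by ring, hm, show 1 + m - 1 = m by omega]
    have : (1 + m) ^ 2 = (1 + m + 1) * m + 1 := by ring
    omega)
  have hγn : γ ^ (q ^ 2 + 1) = 1 := hγo ▸ pow_orderOf_eq_one γ
  have hγ0 : γ ≠ 0 := by rintro rfl; simp at hγn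
  have hγ1 : γ ≠ 1 := by
    rintro rfl
    rw [orderOf_one] at hγo
    nlinarith
  let φ := FiniteField.frobeniusAlgHom F K
  have hφ : ∀ x, φ x = x ^ q := fun x => rfl
  have hφφγ : φ (φ γ) = γ⁻¹ := by
    rw [hφ, hφ, ← pow_mul, ← sq]
    rw [pow_succ] at hγn
    exact eq_inv_of_mul_eq_one_left hγn
  let β := γ + γ⁻¹
  have hβ : φ (φ β) = β := by
    simp only [β, map_add, map_inv₀, hφφγ, inv_inv]; ring
  obtain ⟨t, ht⟩ := exists_alg (F := F) (β + φ β) (by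
    rw [← hq, ← hφ, map_add, hβ, add_comm])
  obtain ⟨n, hn⟩ := exists_alg (F := F) (β * φ β) (by
    rw [← hq, ← hφ, map_mul, hβ, mul_comm])
  obtain ⟨s, rfl⟩ := exists_sq n
  let P : F[X] := (X ^ 2 + 1) ^ 2 + C t * X * (X ^ 2 + 1) + C (s ^ 2) * X ^ 2
  have hPd : P.natDegree = 4 := by simp only [P]; compute_degree!
  have hPm : P.Monic := by simp only [P]; monicity!
  have hPγ : aeval γ P = 0 := by
    simp only [P, map_add, map_mul, map_pow, aeval_X, aeval_C, map_one]
    rw [map_pow] at hn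
    rw [ht, hn]
    have : γ ^ 2 + 1 = γ * β := by simp only [β]; field_simp
    rw [this]
    have := k2 (K := K)
    linear_combination (γ ^ 2 * β ^ 2 + γ ^ 2 * β * φ β) * this
  have hint : IsIntegral F γ := Algebra.IsIntegral.isIntegral γ
  have hle : (minpoly F γ).natDegree ≤ 4 := by
    rw [← hPd]
    exact natDegree_le_of_dvd (minpoly.dvd F γ hPγ) hPm.ne_zero
  have hfrob : γ ^ (q ^ (minpoly F γ).natDegree) = γ := by
    let E := IntermediateField.adjoin F {γ}
    have hcE : Nat.card E = q ^ (minpoly F γ).natDegree := by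
      rw [Module.natCard_eq_pow_finrank (K := F) (V := E), IntermediateField.adjoin.finrank hint, Nat.card_eq_fintype_card]
    let ft : Fintype E := Fintype.ofFinite E
    have h := FiniteField.pow_card (IntermediateField.AdjoinSimple.gen F γ)
    rw [← Nat.card_eq_fintype_card, hcE] at h
    have h2 := congrArg (algebraMap E K) h
    simpa using h2
  have h4 := frob_four q _ γ hγn (minpoly.natDegree_pos hint) hle hfrob hγ1
  have hPe : P = minpoly F γ :=
    eq_of_monic_of_dvd_of_natDegree_le (minpoly.monic hint) hPm (minpoly.dvd F γ hPγ) (by omega)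
  let S : Matrix (Fin 2) (Fin 2) F := !![0, s; s, t]
  have hSt : S.transpose = S := by
    ext i j; fin_cases i <;> fin_cases j <;> rfl
  let M := MS S
  have hD2 : DS S ^ 2 + t • DS S + s ^ 2 • 1 = 0 := by
    rw [sq, DS, Matrix.fromBlocks_multiply, Matrix.fromBlocks_smul, ← Matrix.fromBlocks_one,
      Matrix.fromBlocks_smul, Matrix.fromBlocks_add, Matrix.fromBlocks_add]
    have : S * S + t • S + s ^ 2 • 1 = 0 := by
      have h2 := CharTwo.two_eq_zero (R := F)
      ext i j
      fin_cases i <;> fin_cases j <;> simp [S, Matrix.mul_apply, Fin.sum_univ_two]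
      · linear_combination s ^ 2 * h2
      · linear_combination s * t * h2
      · linear_combination s * t * h2
      · linear_combination (s ^ 2 + t ^ 2) * h2
    simp [this]
  have hPM : aeval M P = 0 := by
    simp only [P, map_add, map_mul, map_pow, aeval_X, aeval_C, map_one]
    rw [MS_sq S]
    have h1 : (DS S * M) ^ 2 = DS S ^ 2 * M ^ 2 := Commute.mul_pow (DS_comm S) 2
    have h2 : (algebraMap F (Matrix (Fin 2 ⊕ Fin 2) (Fin 2 ⊕ Fin 2) F)) t * M * (DS S * M) = (t • DS S) * M ^ 2 := by
      rw [Algebra.algebraMap_eq_smul_one, smul_one_mul, smul_mul_assoc, smul_mul_assoc, ← mul_assoc, ← DS_comm, mul_assoc, sq]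
    have h3 : (algebraMap F (Matrix (Fin 2 ⊕ Fin 2) (Fin 2 ⊕ Fin 2) F)) s ^ 2 * M ^ 2 = (s ^ 2 • 1) * M ^ 2 := by
      rw [← map_pow, Algebra.algebraMap_eq_smul_one]
    rw [h1, h2, h3, ← add_mul, ← add_mul, hD2, zero_mul]
  have hirr : Irreducible P := hPe ▸ minpoly.irreducible hint
  have hMP : P = minpoly F M := minpoly.eq_of_irreducible_of_monic hirr hPM hPm
  refine ⟨⟨M, MS_mem S hSt⟩, ?_⟩
  rw [← hγo]
  apply orderOf_eq_orderOf_iff.2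
  intro k
  rw [Subtype.ext_iff]
  have e1 : γ ^ k = 1 ↔ P ∣ X ^ k - 1 := by
    rw [hPe, minpoly.dvd_iff]; simp [sub_eq_zero]
  have e2 : M ^ k = 1 ↔ P ∣ X ^ k - 1 := by
    rw [hMP, minpoly.dvd_iff]; simp [sub_eq_zero]
  rw [e1, ← e2]
  simp

lemma cent2 (a b : F) (hab : a ≠ b) (A : Matrix (Fin 2) (Fin 2) F)
    (h : A * !![a, 0; 0, b] = !![a, 0; 0, b] * A) : A 0 1 = 0 ∧ A 1 0 = 0 := by
  have h1 := congrFun (congrFun h 0) 1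
  have h2 := congrFun (congrFun h 1) 0
  simp [Matrix.mul_apply, Fin.sum_univ_two] at h1 h2
  constructor
  · by_contra hc
    apply hab
    apply mul_right_cancel₀ hc
    first | linear_combination h1 | linear_combination - h1
  · by_contra hc
    apply hab
    apply mul_right_cancel₀ hc
    first | linear_combination h2 | linear_combination - h2

lemma diag_comm (A A' : Matrix (Fin 2) (Fin 2) F) (h : A 0 1 = 0 ∧ A 1 0 = 0)
    (h' : A' 0 1 = 0 ∧ A' 1 0 = 0) : A * A' = A' * A := by
  ext i j
  fin_cases i <;> fin_cases j <;> simp [Matrix.mul_apply, Fin.sum_univ_two, h.1, h.2, h'.1, h'.2, mul_comm]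

end Elems
end SpFour

namespace SpFour
set_option linter.unusedSectionVars false
section Zel
open Polynomial
universe u
variable {F : Type u} [Field F] [Fintype F] [CharP F 2]

lemma exists_R (q : ℕ) (he : Even q) (h4 : 4 ≤ q) :
    ∃ r k : ℕ, r.Prime ∧ r ∣ q + 1 ∧ r ^ k ∣ q + 1 ∧ 5 ≤ r ^ k := by
  by_cases h : ∃ r : ℕ, r.Prime ∧ r ∣ q + 1 ∧ 5 ≤ r
  · obtain ⟨r, hr, hd, h5⟩ := h
    exact ⟨r, 1, hr, hd, by simpa using hd, by simpa using h5⟩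
  · push Not at h
    have h3 : ∀ {d : ℕ}, d.Prime → d ∣ q + 1 → d = 3 := by
      intro d hd hdv
      have := h d hd hdv
      have h2 := hd.two_le
      obtain ⟨m, hm⟩ := he
      interval_cases d
      · omega
      · rfl
      · norm_num at hd
    have h1 := Nat.eq_prime_pow_of_unique_prime_dvd (n := q + 1) (p := 3) (by omega) h3
    refine ⟨3, _, Nat.prime_three, ?_, dvd_of_eq h1.symm, ?_⟩
    · obtain ⟨p, hp, hpd⟩ := Nat.exists_prime_and_dvd (n := q + 1) (by omega)
      rw [h3 hp hpd] at hpd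
      exact hpd
    · rw [← h1]; omega

lemma exists_z (R : ℕ) (hR : R ∣ Fintype.card F + 1) (h5 : 5 ≤ R) :
    ∃ z : Sp 2 F, z ^ R = 1 ∧
      ∀ x y : Sp 2 F, x * z = z * x → y * z = z * y → x * y = y * x := by
  obtain ⟨K, _, _, _, _, hK, hζ⟩ := exists_ext F
  have hq1 : 1 < Fintype.card F := Fintype.one_lt_card
  set q := Fintype.card F with hq
  obtain ⟨ζ, hζo⟩ := hζ R (hR.trans ⟨(q - 1) * (q ^ 2 + 1), by
    obtain ⟨m, hm⟩ := Nat.exists_eq_add_of_lt hq1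
    rw [hm, show 1 + m + 1 - 1 = m + 1 by omega]
    have : (1 + m + 1) ^ 4 = (1 + m + 1 + 1) * ((m + 1) * ((1 + m + 1) ^ 2 + 1)) + 1 := by ring
    omega⟩)
  have hζR : ζ ^ R = 1 := hζo ▸ pow_orderOf_eq_one ζ
  have hζ0 : ζ ≠ 0 := by rintro rfl; rw [zero_pow (by omega)] at hζR; exact zero_ne_one hζR
  have hsmall : ∀ k, 0 < k → k < 5 → ζ ^ k ≠ 1 := by
    intro k hk hk5 h
    have := Nat.le_of_dvd hk (orderOf_dvd_of_pow_eq_one h)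
    omega
  obtain ⟨τ, hτ⟩ := tau_mem (F := F) ζ (by
    obtain ⟨m, hm⟩ := hR
    rw [← hq, hm, pow_mul, hζR, one_pow])
  have hn1 := hsmall 1 (by norm_num) (by norm_num)
  have hn2 := hsmall 2 (by norm_num) (by norm_num)
  have hn3 := hsmall 3 (by norm_num) (by norm_num)
  have hn4 := hsmall 4 (by norm_num) (by norm_num)
  rw [pow_one] at hn1
  have hd1 : ζ ≠ ζ⁻¹ := by
    intro h; apply hn2; rw [sq]; nth_rewrite 2 [h]; exact mul_inv_cancel₀ hζ0
  have hd2 : ζ ≠ ζ ^ 2 := by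
    intro h; apply hn1; apply mul_left_cancel₀ hζ0; rw [mul_one, ← sq, ← h]
  have hd3 : ζ ≠ (ζ ^ 2)⁻¹ := by
    intro h; apply hn3; rw [pow_succ]; nth_rewrite 2 [h]; exact mul_inv_cancel₀ (pow_ne_zero _ hζ0)
  have hd4 : ζ⁻¹ ≠ ζ ^ 2 := by
    intro h; apply hn3; rw [pow_succ, ← h]; exact inv_mul_cancel₀ hζ0
  have hd5 : ζ⁻¹ ≠ (ζ ^ 2)⁻¹ := fun h => hd2 (inv_injective h)
  have hd6 : ζ ^ 2 ≠ (ζ ^ 2)⁻¹ := by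
    intro h; apply hn4
    rw [show ζ ^ 4 = ζ ^ 2 * ζ ^ 2 by ring]; nth_rewrite 2 [h]; exact mul_inv_cancel₀ (pow_ne_zero _ hζ0)
  have k2' := k2 (K := K)
  have hτ2 : algebraMap F K τ ^ 2 = ζ ^ 2 + (ζ ^ 2)⁻¹ := by
    rw [hτ, CharTwo.add_sq, inv_pow]
  have hττ : τ ≠ τ ^ 2 := by
    intro h
    have h1 := congrArg (algebraMap F K) h
    rw [map_pow, hτ2, hτ] at h1
    have h2 : (ζ + ζ ^ 2) * (ζ ^ 3 + 1) = 0 := by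
      field_simp at h1
      have : (ζ ^ 2 + 1) * ζ = ζ ^ 4 + 1 := by linear_combination h1
      linear_combination ζ * this + (ζ + ζ ^ 5) * k2'
    rcases mul_eq_zero.1 h2 with h2 | h2
    · exact hd2 (CharTwo.add_eq_zero.1 h2)
    · exact hn3 (CharTwo.add_eq_zero.1 h2)
  let S : Matrix (Fin 2) (Fin 2) F := !![τ, 0; 0, τ ^ 2]
  have hSt : S.transpose = S := by
    ext i j; fin_cases i <;> fin_cases j <;> rfl
  let M := MS S
  let z : Sp 2 F := ⟨M, MS_mem S hSt⟩
  let P : F[X] := (X ^ 2 + 1 + C τ * X) * (X ^ 2 + 1 + C (τ ^ 2) * X)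
  have hPd : P ∣ X ^ R - 1 := by
    rw [← Polynomial.map_dvd_map' (algebraMap F K)]
    have hP : P.map (algebraMap F K) = (({ζ, ζ⁻¹, ζ ^ 2, (ζ ^ 2)⁻¹} : Multiset K).map (fun a => X - C a)).prod := by
      simp only [P, Polynomial.map_mul, Polynomial.map_add, Polynomial.map_pow, map_X, Polynomial.map_one, map_C,
        map_pow (algebraMap F K), hτ, Multiset.insert_eq_cons, Multiset.map_cons, Multiset.map_singleton,
        Multiset.prod_cons, Multiset.prod_singleton]
      have hh : ∀ a : K, a ≠ 0 → X ^ 2 + 1 + C (a + a⁻¹) * X = (X - C a) * (X - C a⁻¹) := by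
        intro a ha
        have h1 : (C a * C a⁻¹ : K[X]) = 1 := by rw [← C_mul, mul_inv_cancel₀ ha, C_1]
        have h2 : (2 : K[X]) = 0 := CharTwo.two_eq_zero
        rw [C_add]
        linear_combination (C a + C a⁻¹) * X * h2 - h1
      rw [show (ζ + ζ⁻¹) ^ 2 = ζ ^ 2 + (ζ ^ 2)⁻¹ by rw [CharTwo.add_sq, inv_pow], hh ζ hζ0, hh (ζ ^ 2) (pow_ne_zero _ hζ0)]
      ring
    rw [hP]
    have hmap : (X ^ R - 1 : F[X]).map (algebraMap F K) = X ^ R - 1 := by simp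
    have hne : (X ^ R - 1 : K[X]) ≠ 0 := X_pow_sub_C_ne_zero (by omega) 1
    rw [hmap, Multiset.prod_X_sub_C_dvd_iff_le_roots hne, Multiset.le_iff_subset]
    · intro a ha
      rw [mem_roots hne]
      simp only [Multiset.insert_eq_cons, Multiset.mem_cons, Multiset.mem_singleton] at ha
      have h2R : (ζ ^ 2) ^ R = 1 := by rw [← pow_mul, mul_comm, pow_mul, hζR, one_pow]
      rcases ha with rfl | rfl | rfl | rfl <;> simp [IsRoot, hζR, h2R, inv_pow, -pow_eq_one_iff]
    · simp only [Multiset.insert_eq_cons, Multiset.nodup_cons, Multiset.mem_cons, Multiset.mem_singleton,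
        Multiset.nodup_singleton, and_true, not_or]
      exact ⟨⟨hd1, hd2, hd3⟩, ⟨hd4, hd5⟩, hd6⟩
  have hDD : (DS S + τ • 1) * (DS S + τ ^ 2 • 1) = 0 := by
    rw [DS, ← Matrix.fromBlocks_one, Matrix.fromBlocks_smul, Matrix.fromBlocks_smul, Matrix.fromBlocks_add,
      Matrix.fromBlocks_add, Matrix.fromBlocks_multiply]
    have : (S + τ • 1) * (S + τ ^ 2 • 1) = 0 := by
      ext i j
      have h2 := CharTwo.add_self_eq_zero (R := F)
      fin_cases i <;> fin_cases j <;> simp [S, Matrix.mul_apply, Fin.sum_univ_two, h2]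
    simp [this]
  have hPM : aeval M P = 0 := by
    have hf : ∀ a : F, aeval M (X ^ 2 + 1 + C a * X) = (DS S + a • 1) * M := by
      intro a
      simp only [map_add, map_mul, map_pow, aeval_X, aeval_C, map_one]
      rw [MS_sq S, add_mul, Algebra.algebraMap_eq_smul_one]
    simp only [P]
    rw [map_mul, hf, hf]
    have hcm : Commute M (DS S + τ ^ 2 • 1) := by
      apply Commute.add_right
      · exact (DS_comm S).symm
      · exact (Commute.one_right M).smul_right _
    rw [mul_assoc, ← mul_assoc M, hcm.eq, mul_assoc, ← mul_assoc, hDD, zero_mul]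
  have hcent : ∀ x : Sp 2 F, x * z = z * x → ∃ A C : Matrix (Fin 2) (Fin 2) F,
      (A 0 1 = 0 ∧ A 1 0 = 0) ∧ (C 0 1 = 0 ∧ C 1 0 = 0) ∧
      (x : Matrix (Fin 2 ⊕ Fin 2) (Fin 2 ⊕ Fin 2) F) = Matrix.fromBlocks A C C (A + C * S) := by
    intro x hx
    let X0 : Matrix (Fin 2 ⊕ Fin 2) (Fin 2 ⊕ Fin 2) F := x
    have hxM : X0 * M = M * X0 := congrArg Subtype.val hx
    let Y : Matrix (Fin 2 ⊕ Fin 2) (Fin 2 ⊕ Fin 2) F := ((z⁻¹ : Sp 2 F) : Matrix _ _ F)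
    have hMY : M * Y = 1 := congrArg Subtype.val (mul_inv_cancel z)
    have hcD : X0 * DS S = DS S * X0 := by
      have h1 : X0 * (M ^ 2 + 1) = (M ^ 2 + 1) * X0 :=
        ((Commute.pow_right (show Commute X0 M from hxM) 2).add_right (Commute.one_right X0)).eq
      rw [MS_sq S] at h1
      have h2 : X0 * DS S * M = DS S * X0 * M := by
        rw [mul_assoc, h1, mul_assoc, mul_assoc, hxM]
      have h3 := congrArg (fun W => W * Y) h2
      beta_reduce at h3
      rwa [mul_assoc, mul_assoc (DS S * X0), hMY, mul_one, mul_one] at h3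
    obtain ⟨A, C, D, E, hX⟩ : ∃ A C D E, X0 = Matrix.fromBlocks A C D E :=
      ⟨_, _, _, _, (Matrix.fromBlocks_toBlocks X0).symm⟩
    rw [hX, DS, Matrix.fromBlocks_multiply, Matrix.fromBlocks_multiply, Matrix.fromBlocks_inj] at hcD
    simp only [mul_zero, zero_mul, add_zero, zero_add] at hcD
    have hxM' : X0 * MS S = MS S * X0 := hxM
    rw [hX, MS, Matrix.fromBlocks_multiply, Matrix.fromBlocks_multiply, Matrix.fromBlocks_inj] at hxM'
    simp only [mul_zero, zero_mul, add_zero, zero_add, mul_one, one_mul] at hxM'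
    refine ⟨A, C, cent2 _ _ hττ A hcD.1, cent2 _ _ hττ C hcD.2.1, ?_⟩
    change X0 = _
    rw [hX, hxM'.2.1, ← hxM'.1]
  refine ⟨z, ?_, ?_⟩
  · rw [Subtype.ext_iff]
    obtain ⟨W, hW⟩ := hPd
    have := congrArg (aeval M) hW
    rw [map_mul, hPM, zero_mul] at this
    simp [sub_eq_zero] at this
    simpa [z] using this
  · intro x y hx hy
    obtain ⟨A, C, hA, hC, hX⟩ := hcent x hx
    obtain ⟨A', C', hA', hC', hY⟩ := hcent y hy
    have hSd : S 0 1 = 0 ∧ S 1 0 = 0 := by simp [S]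
    have hmul : ∀ U V : Matrix (Fin 2) (Fin 2) F, (U 0 1 = 0 ∧ U 1 0 = 0) → (V 0 1 = 0 ∧ V 1 0 = 0) →
        ((U * V) 0 1 = 0 ∧ (U * V) 1 0 = 0) := by
      intro U V hU hV
      simp [Matrix.mul_apply, Fin.sum_univ_two, hU, hV]
    have e1 := diag_comm A A' hA hA'
    have e2 := diag_comm C C' hC hC'
    have e3 := diag_comm A C' hA hC'
    have e4 := diag_comm C A' hC hA'
    have e5 := diag_comm S C hSd hC
    have e6 := diag_comm S C' hSd hC'
    have e7 := diag_comm S A hSd hA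
    have e8 := diag_comm S A' hSd hA'
    apply Subtype.ext
    change (x : Matrix (Fin 2 ⊕ Fin 2) (Fin 2 ⊕ Fin 2) F) * (y : Matrix (Fin 2 ⊕ Fin 2) (Fin 2 ⊕ Fin 2) F) =
      (y : Matrix (Fin 2 ⊕ Fin 2) (Fin 2 ⊕ Fin 2) F) * (x : Matrix (Fin 2 ⊕ Fin 2) (Fin 2 ⊕ Fin 2) F)
    rw [hX, hY, Matrix.fromBlocks_multiply, Matrix.fromBlocks_multiply, Matrix.fromBlocks_inj]
    have hCS := hmul C S hC hSd
    have hCS' := hmul C' S hC' hSd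
    have f1 : C * (C' * S) = C' * (C * S) := by rw [← mul_assoc, e2, mul_assoc]
    have hadd : ∀ U V : Matrix (Fin 2) (Fin 2) F, (U 0 1 = 0 ∧ U 1 0 = 0) → (V 0 1 = 0 ∧ V 1 0 = 0) →
        ((U + V) 0 1 = 0 ∧ (U + V) 1 0 = 0) := by
      intro U V hU hV
      simp [hU, hV]
    have g1 := diag_comm C (C' * S) hC hCS'
    have g2 := diag_comm C' (C * S) hC' hCS
    have g3 := diag_comm _ _ (hadd _ _ hA hCS) (hadd _ _ hA' hCS')
    refine ⟨by rw [e1, e2], ?_, ?_, by rw [e2, g3]⟩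
    · rw [mul_add, mul_add, e3, e4, f1]; abel
    · rw [add_mul, add_mul, ← e3, ← e4, ← g1, f1, g2]; abel
end Zel

section Fin
universe u
lemma partTwo {F : Type u} [Field F] [Fintype F] [CharP F 2] (he : Even (Fintype.card F))
    (h4 : 4 ≤ Fintype.card F) :
    ¬ ∃ L : Subgroup (Sp 2 F), L ≠ ⊤ ∧
          ∀ g : Sp 2 F, ∃ φ : Sp 2 F ≃* Sp 2 F, φ g ∈ L := by
  rintro ⟨L, hL, hcov⟩
  let v : Vec F := Pi.single (Sum.inl 0) 1
  have hv : v ≠ 0 := by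
    intro h
    have := congrFun h (Sum.inl 0)
    simp [v] at this
  obtain ⟨φ0, h0⟩ := hcov (tv v)
  let L' := L.comap φ0.toMonoidHom
  have hmem : ∀ g, g ∈ L' ↔ φ0 g ∈ L := fun g => Iff.rfl
  have hL' : L' ≠ ⊤ := by
    intro h
    apply hL
    rw [eq_top_iff]
    intro g _
    have : φ0.symm g ∈ L' := by rw [h]; trivial
    rw [hmem, MulEquiv.apply_symm_apply] at this
    exact this
  have hcov' : ∀ g : Sp 2 F, ∃ φ : Sp 2 F ≃* Sp 2 F, φ g ∈ L' := by
    intro g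
    obtain ⟨φ, h⟩ := hcov g
    exact ⟨φ.trans φ0.symm, by rw [hmem]; simpa using h⟩
  obtain ⟨c, hc⟩ := exists_c (F := F)
  obtain ⟨φ1, h1⟩ := hcov' c
  obtain ⟨r, k, hr, hrd, hrk, h5⟩ := exists_R _ he h4
  obtain ⟨z, hz, hab⟩ := exists_z (F := F) (r ^ k) hrk h5
  obtain ⟨φ2, h2⟩ := hcov' z
  refine dich he L' hL' (φ1 c) h1 (by rw [MulEquiv.orderOf_eq, hc]) v hv h0 (φ2 z) h2 r k hr
    (by rw [← map_pow, hz, map_one]) hrd ?_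
  intro x y hx hy
  obtain ⟨x, rfl⟩ := φ2.surjective x
  obtain ⟨y, rfl⟩ := φ2.surjective y
  rw [← map_mul, ← map_mul] at hx hy ⊢
  rw [hab x y (φ2.injective hx) (φ2.injective hy)]
end Fin
end SpFour

/-- **Both the normal covering number and the weak normal covering number of `Sp₄(2^f)`
(`f ≥ 2`) equal 2**: there are two proper subgroups `H`, `K` such that every element is
conjugate to an element of `H` or of `K`, and no single proper subgroup `L` has the
property that every element is mapped into `L` by some automorphism. -/
theorem gamma_Sp4_even_eq_two (f : ℕ) (hf : 2 ≤ f) (q : ℕ) (hq : q = 2 ^ f)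
    (F : Type*) [Field F] [Fintype F] (hF : Fintype.card F = q) :
    (∃ H K : Subgroup (Sp 2 F), H ≠ ⊤ ∧ K ≠ ⊤ ∧
        ∀ g : Sp 2 F, ∃ x : Sp 2 F,
          x * g * x⁻¹ ∈ H ∨ x * g * x⁻¹ ∈ K) ∧
      ¬ ∃ L : Subgroup (Sp 2 F), L ≠ ⊤ ∧
          ∀ g : Sp 2 F, ∃ φ : Sp 2 F ≃* Sp 2 F, φ g ∈ L := by
  have : Fact (Nat.Prime 2) := ⟨Nat.prime_two⟩
  have hc : CharP F 2 := charP_of_card_eq_prime_pow (hF.trans hq)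
  have h4 : 4 ≤ Fintype.card F := by
    rw [hF, hq]
    calc 4 = 2 ^ 2 := by norm_num
      _ ≤ 2 ^ f := Nat.pow_le_pow_right (by norm_num) hf
  have he : Even (Fintype.card F) := by
    rw [hF, hq, Nat.even_pow]
    exact ⟨even_two, by omega⟩
  exact ⟨SpFour.partOne (by omega), SpFour.partTwo he h4⟩
end

section
/- Let G be a finite perfect group (that is, G equals its own commutator subgroup), let Z be the center of G, and let k be a positive integer. Then there exist k proper subgroups H_1, ..., H_k of G with G equal to the union of all conjugates of H_1, ..., H_k if and only if there exist k proper subgroups of the quotient G/Z whose conjugates cover G/Z. -/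
open scoped commutatorElement in
theorem aux_map_ne_top (G : Type*) [Group G] (hperf : commutator G = ⊤)
    (H : Subgroup G) (hH : H ≠ ⊤) :
    H.map (QuotientGroup.mk' (Subgroup.center G)) ≠ ⊤ := by
  intro h
  apply hH
  have key : ∀ g : G, ∃ a ∈ H, ∃ z ∈ Subgroup.center G, g = a * z := by
    intro g
    have : QuotientGroup.mk' (Subgroup.center G) g ∈
        H.map (QuotientGroup.mk' (Subgroup.center G)) := by
      rw [h]; trivial
    obtain ⟨a, ha, hag⟩ := this
    refine ⟨a, ha, a⁻¹ * g, ?_, by group⟩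
    exact QuotientGroup.eq.mp hag
  rw [eq_top_iff, ← hperf, commutator_def, Subgroup.commutator_le]
  intro g₁ _ g₂ _
  obtain ⟨a, ha, z, hz, rfl⟩ := key g₁
  obtain ⟨b, hb, w, hw, rfl⟩ := key g₂
  rw [Subgroup.mem_center_iff] at hz hw
  have e : ⁅a * z, b * w⁆ = a * b * a⁻¹ * b⁻¹ := by
    have h1 : a * z * (b * w) = a * b * (z * w) := by
      rw [mul_assoc, ← mul_assoc z, ← hz b]; group
    have h2 : (b * w) * (a * z) = b * a * (z * w) := by
      rw [mul_assoc, ← mul_assoc w, ← hw a, hw z, mul_assoc a]; group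
    have h3 : ⁅a * z, b * w⁆ = (a * z * (b * w)) * ((b * w) * (a * z))⁻¹ := by
      rw [commutatorElement_def]; group
    rw [h3, h1, h2]; group
  rw [e]
  exact H.mul_mem (H.mul_mem (H.mul_mem ha hb) (H.inv_mem ha)) (H.inv_mem hb)

/-- **Normal `k`-coverings of a finite perfect group correspond to normal `k`-coverings
of its central quotient.** A finite perfect group `G` admits `k` proper subgroups whose
conjugates cover `G` if and only if `G / Z(G)` admits `k` proper subgroups whose
conjugates cover `G / Z(G)`. -/
theorem normal_covering_iff_central_quotient
    (G : Type*) [Group G] [Finite G] (hperf : commutator G = ⊤)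
    (k : ℕ) (hk : 0 < k) :
    (∃ H : Fin k → Subgroup G, (∀ i, H i ≠ ⊤) ∧
        ∀ g : G, ∃ i, ∃ x : G, x * g * x⁻¹ ∈ H i) ↔
      (∃ K : Fin k → Subgroup (G ⧸ Subgroup.center G), (∀ i, K i ≠ ⊤) ∧
        ∀ g : G ⧸ Subgroup.center G, ∃ i, ∃ x : G ⧸ Subgroup.center G,
          x * g * x⁻¹ ∈ K i) := by
  constructor
  · rintro ⟨H, hH, hc⟩
    refine ⟨fun i => (H i).map (QuotientGroup.mk' (Subgroup.center G)),
      fun i => aux_map_ne_top G hperf (H i) (hH i), fun g => ?_⟩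
    obtain ⟨g, rfl⟩ := QuotientGroup.mk'_surjective _ g
    obtain ⟨i, x, hx⟩ := hc g
    refine ⟨i, QuotientGroup.mk' _ x, _, hx, ?_⟩
    simp
  · rintro ⟨K, hK, hc⟩
    refine ⟨fun i => (K i).comap (QuotientGroup.mk' (Subgroup.center G)), fun i h => ?_,
      fun g => ?_⟩
    · apply hK i
      rw [eq_top_iff]
      intro y _
      obtain ⟨g, rfl⟩ := QuotientGroup.mk'_surjective _ y
      have : g ∈ (K i).comap (QuotientGroup.mk' (Subgroup.center G)) := by
        dsimp only at h; rw [h]; trivial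
      exact this
    · obtain ⟨i, x, hx⟩ := hc (QuotientGroup.mk' _ g)
      obtain ⟨x, rfl⟩ := QuotientGroup.mk'_surjective _ x
      refine ⟨i, x, ?_⟩
      rw [Subgroup.mem_comap, map_mul, map_mul, map_inv]
      exact hx
end

section
/- A finite nilpotent group is never the union of the conjugates of two proper subgroups: if X is a finite nilpotent group and V, W are proper subgroups of X, then the union over all x in X of x V x^{-1} and x W x^{-1} is a proper subset of X. -/
/-- **A finite nilpotent group is never the union of the conjugates of two proper
subgroups**: if `V` and `W` are proper subgroups of a finite nilpotent group `X`,
then `⋃ x, x V x⁻¹ ∪ ⋃ x, x W x⁻¹` is a proper subset of `X`. -/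
theorem nilpotent_no_normal_two_covering
    (X : Type*) [Group X] [Finite X] (hX : Group.IsNilpotent X)
    (V W : Subgroup X) (hV : V ≠ ⊤) (hW : W ≠ ⊤) :
    ((⋃ x : X, (fun v => x * v * x⁻¹) '' (V : Set X)) ∪
        ⋃ x : X, (fun w => x * w * x⁻¹) '' (W : Set X)) ≠ Set.univ := by
  intro h
  have hnc : NormalizerCondition X := Group.normalizerCondition_of_isNilpotent (h := hX)
  obtain ⟨M, hM, hVM⟩ := (eq_top_or_exists_le_coatom V).resolve_left hV
  obtain ⟨N, hN, hWN⟩ := (eq_top_or_exists_le_coatom W).resolve_left hW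
  have nM : M.Normal := Subgroup.NormalizerCondition.normal_of_coatom M hnc hM
  have nN : N.Normal := Subgroup.NormalizerCondition.normal_of_coatom N hnc hN
  have key : ∀ g : X, g ∈ M ∨ g ∈ N := by
    intro g
    have hg : g ∈ (Set.univ : Set X) := Set.mem_univ g
    rw [← h] at hg
    rcases hg with hg | hg
    · obtain ⟨x, v, hv, rfl⟩ := Set.mem_iUnion.1 hg
      exact Or.inl (nM.conj_mem v (hVM hv) x)
    · obtain ⟨x, v, hv, rfl⟩ := Set.mem_iUnion.1 hg
      exact Or.inr (nN.conj_mem v (hWN hv) x)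
  obtain ⟨a, ha⟩ : ∃ a, a ∉ M := by
    by_contra! hc
    exact hM.1 ((Subgroup.eq_top_iff' M).2 hc)
  obtain ⟨b, hb⟩ : ∃ b, b ∉ N := by
    by_contra! hc
    exact hN.1 ((Subgroup.eq_top_iff' N).2 hc)
  have haN : a ∈ N := (key a).resolve_left ha
  have hbM : b ∈ M := (key b).resolve_right hb
  rcases key (a * b) with hab | hab
  · exact ha ((M.mul_mem_cancel_right hbM).1 hab)
  · exact hb ((N.mul_mem_cancel_left haN).1 hab)
end

section
/- Let Y be a finite supersolvable group, and let V and Z be subgroups of Y with V a proper subgroup of Z and Z normal in Y. Then the union over all y in Y of the conjugates y V y^{-1} is a proper subset of Z. -/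
/-- A finite group `Y` is supersolvable if there is a chain of subgroups
`⊥ = Y₀ ≤ Y₁ ≤ ⋯ ≤ Y_l = Y`, each normal in `Y`, with all successive quotients
cyclic (the quotient `Y_{i+1}/Y_i` being cyclic is expressed by the existence of
`y ∈ Y_{i+1}` such that every `z ∈ Y_{i+1}` agrees with a power of `y` modulo `Y_i`). -/
def IsSupersolvable (Y : Type*) [Group Y] : Prop :=
  ∃ (l : ℕ) (c : Fin (l + 1) → Subgroup Y),
    c 0 = ⊥ ∧ c (Fin.last l) = ⊤ ∧
    (∀ i, (c i).Normal) ∧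
    (∀ i : Fin l, c i.castSucc ≤ c i.succ) ∧
    ∀ i : Fin l, ∃ y ∈ c i.succ, ∀ z ∈ c i.succ, ∃ n : ℤ, z * (y ^ n)⁻¹ ∈ c i.castSucc

/-- **In a finite supersolvable group, a normal subgroup is never covered by the
conjugates of a proper subgroup**: if `V < Z`, `Z` normal in `Y`, then
`⋃ y, y V y⁻¹` is a proper subset of `Z`. -/
theorem supersolvable_conjugates_proper
    (Y : Type*) [Group Y] [Finite Y] (hY : IsSupersolvable Y)
    (V Z : Subgroup Y) (hVZ : V < Z) (hZ : Z.Normal) :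
    (⋃ y : Y, (fun v => y * v * y⁻¹) '' (V : Set Y)) ⊂ (Z : Set Y) := by
  have hsub : (⋃ y : Y, (fun v => y * v * y⁻¹) '' (V : Set Y)) ⊆ (Z : Set Y) := by
    intro x hx
    simp only [Set.mem_iUnion, Set.mem_image] at hx
    obtain ⟨y, v, hv, rfl⟩ := hx
    exact hZ.conj_mem v (hVZ.le hv) y
  refine ⟨hsub, fun hcov => ?_⟩
  obtain ⟨l, c, h0, hl, hn, hmono, hcyc⟩ := hY
  have key : ∀ i : Fin (l + 1), Z ⊓ c i ≤ V := by
    intro i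
    induction i using Fin.induction with
    | zero => rw [h0]; simp
    | succ i ih =>
      obtain ⟨y, hy, hgen⟩ := hcyc i
      haveI := hn i.castSucc
      have hle : (Z ⊓ c i.succ).map (QuotientGroup.mk' (c i.castSucc)) ≤
          Subgroup.zpowers (QuotientGroup.mk' (c i.castSucc) y) := by
        rintro _ ⟨z, hz, rfl⟩
        obtain ⟨n, hn'⟩ := hgen z hz.2
        refine ⟨n, ?_⟩
        have h1 : QuotientGroup.mk' (c i.castSucc) (z * (y ^ n)⁻¹) = 1 :=
          (QuotientGroup.eq_one_iff _).2 hn'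
        rw [map_mul, map_inv, map_zpow, mul_inv_eq_one] at h1
        exact h1.symm
      have hcy : IsCyclic ((Z ⊓ c i.succ).map (QuotientGroup.mk' (c i.castSucc))) :=
        isCyclic_of_injective (Subgroup.inclusion hle) (Subgroup.inclusion_injective hle)
      obtain ⟨⟨_, g, hg, rfl⟩, hgg⟩ := hcy.exists_generator
      have hgU := hcov hg.1
      simp only [Set.mem_iUnion, Set.mem_image] at hgU
      obtain ⟨t, v, hv, rfl⟩ := hgU
      intro z hz
      have hz' : t * z * t⁻¹ ∈ Z ⊓ c i.succ :=
        ⟨hZ.conj_mem z hz.1 t, (hn i.succ).conj_mem z hz.2 t⟩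
      obtain ⟨n, hn2⟩ := hgg ⟨_, _, hz', rfl⟩
      have hn3 : QuotientGroup.mk' (c i.castSucc) (t * v * t⁻¹) ^ n =
          QuotientGroup.mk' (c i.castSucc) (t * z * t⁻¹) := congrArg Subtype.val hn2
      rw [← map_zpow, conj_zpow] at hn3
      have h4 : (t * v ^ n * t⁻¹)⁻¹ * (t * z * t⁻¹) ∈ c i.castSucc :=
        QuotientGroup.eq.1 hn3
      have h5 := (hn i.castSucc).conj_mem _ h4 t⁻¹
      have h6 : t⁻¹ * ((t * v ^ n * t⁻¹)⁻¹ * (t * z * t⁻¹)) * t⁻¹⁻¹ = (v ^ n)⁻¹ * z := by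
        group
      rw [h6] at h5
      have h7 : (v ^ n)⁻¹ * z ∈ V :=
        ih ⟨Z.mul_mem (Z.inv_mem (Z.zpow_mem (hVZ.le hv) n)) hz.1, h5⟩
      have h8 := V.mul_mem (V.zpow_mem hv n) h7
      rwa [mul_inv_cancel_left] at h8
  have := key (Fin.last l)
  rw [hl, inf_top_eq] at this
  exact hVZ.not_ge this
end

section
/- Let U = B x C be a finite group with B isomorphic to the symmetric group S_4 and C cyclic. Let V, Z, Y be subgroups of U with V a proper subgroup of Z, Z normal in Y, Y <= U, and suppose Z equals the union over all y in Y of the conjugates y V y^{-1}. Then, denoting by K the Klein four-subgroup of B (the unique normal subgroup of S_4 of order 4), there exist a subgroup C_1 of C and a subgroup K_0 of K of order 2 such that Z = K x C_1 and V = K_0 x C_1. -/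
/-- The Klein four-group in `S₄`. -/
def kleinP : Subgroup (Equiv.Perm (Fin 4)) where
  carrier := {x | x * x = 1 ∧ Equiv.Perm.sign x = 1}
  one_mem' := by simp
  mul_mem' := by
    have : ∀ a b : Equiv.Perm (Fin 4), (a * a = 1 ∧ Equiv.Perm.sign a = 1) →
      (b * b = 1 ∧ Equiv.Perm.sign b = 1) →
      (a * b * (a * b) = 1 ∧ Equiv.Perm.sign (a * b) = 1) := by decide +kernel
    intro a b ha hb
    exact this a b ha hb
  inv_mem' := by
    have : ∀ a : Equiv.Perm (Fin 4), (a * a = 1 ∧ Equiv.Perm.sign a = 1) →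
      (a⁻¹ * a⁻¹ = 1 ∧ Equiv.Perm.sign a⁻¹ = 1) := by decide +kernel
    intro a ha
    exact this a ha

instance kleinP_dec (x : Equiv.Perm (Fin 4)) : Decidable (x ∈ kleinP) :=
  inferInstanceAs (Decidable (x * x = 1 ∧ Equiv.Perm.sign x = 1))

theorem kleinP_card : Nat.card kleinP = 4 := by
  rw [Nat.card_eq_fintype_card]; decide +kernel

theorem kleinP_conj : ∀ x ∈ kleinP, ∀ g, g * x * g⁻¹ ∈ kleinP := by decide +kernel

theorem kleinP_h3 : ∀ u : Equiv.Perm (Fin 4), Equiv.Perm.sign u = 1 → ∀ w,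
    w * u * w⁻¹ * u⁻¹ ∈ kleinP ∨ w * u * w⁻¹ * u ∈ kleinP := by decide +kernel

set_option synthInstance.maxHeartbeats 400000 in
set_option synthInstance.maxSize 2000 in
theorem kleinP_h4 : ∀ u : Equiv.Perm (Fin 4), Equiv.Perm.sign u = 1 → u ∉ kleinP →
    ∀ k ∈ kleinP, k ≠ 1 → ∀ k' ∈ kleinP,
      k' = 1 ∨ k' = k ∨ k' = u * k * u⁻¹ ∨ k' = u⁻¹ * k * u := by decide +kernel

set_option synthInstance.maxHeartbeats 400000 in
set_option synthInstance.maxSize 2000 in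
theorem kleinP_h6 : ∀ x : Equiv.Perm (Fin 4), Equiv.Perm.sign x ≠ 1 →
    ∀ k ∈ kleinP, k ≠ 1 → ∃ k' ∈ kleinP, k' ≠ 1 ∧ ∀ w, w * x * w⁻¹ * x⁻¹ ∈ kleinP →
      w * k * w⁻¹ ≠ k' := by decide +kernel

set_option synthInstance.maxHeartbeats 400000 in
set_option synthInstance.maxSize 2000 in
theorem kleinP_h7 : ∀ x : Equiv.Perm (Fin 4), Equiv.Perm.sign x = 1 →
    ∀ k ∈ kleinP, k ≠ 1 → x * k * x⁻¹ = k → x ∈ kleinP := by decide +kernel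

set_option synthInstance.maxHeartbeats 400000 in
set_option synthInstance.maxSize 2000 in
theorem kleinP_h8 : ∀ a ∈ kleinP, ∀ b ∈ kleinP, a ≠ 1 → b ≠ 1 → a ≠ b → ∀ c ∈ kleinP,
    c = 1 ∨ c = a ∨ c = b ∨ c = a * b := by decide +kernel

theorem klein_core {B C : Type*} [Group B] [CommGroup C] (K : Subgroup B) (A : B → Prop)
    (h1 : ∀ x ∈ K, ∀ g, g * x * g⁻¹ ∈ K)
    (h2 : ∀ x y : B, A (x * (y * x * y⁻¹)⁻¹))
    (hAc : ∀ x y : B, A x → A (y * x * y⁻¹))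
    (h3 : ∀ u, A u → ∀ w, w * u * w⁻¹ * u⁻¹ ∈ K ∨ w * u * w⁻¹ * u ∈ K)
    (h4 : ∀ u, A u → u ∉ K → ∀ k ∈ K, k ≠ 1 → ∀ k' ∈ K,
      k' = 1 ∨ k' = k ∨ k' = u * k * u⁻¹ ∨ k' = u⁻¹ * k * u)
    (h6 : ∀ x, ¬ A x → ∀ k ∈ K, k ≠ 1 → ∃ k' ∈ K, k' ≠ 1 ∧
      ∀ w, w * x * w⁻¹ * x⁻¹ ∈ K → w * k * w⁻¹ ≠ k')
    (h7 : ∀ x, A x → ∀ k ∈ K, k ≠ 1 → x * k * x⁻¹ = k → x ∈ K)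
    (h8 : ∀ a ∈ K, ∀ b ∈ K, a ≠ 1 → b ≠ 1 → a ≠ b → ∀ c ∈ K,
      c = 1 ∨ c = a ∨ c = b ∨ c = a * b)
    (V Z : Subgroup (B × C)) (W : Set B) (hVZ : V < Z)
    (hZn : ∀ w ∈ W, ∀ x d, (x, d) ∈ Z → (w * x * w⁻¹, d) ∈ Z)
    (hcov : ∀ x d, (x, d) ∈ Z → ∃ w ∈ W, w⁻¹ ∈ W ∧ (w * x * w⁻¹, d) ∈ V) :
    ∃ (C₁ : Subgroup C) (K₀ : Subgroup B),
        K₀ ≤ K ∧ Nat.card K₀ = 2 ∧ Z = K.prod C₁ ∧ V = K₀.prod C₁ := by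
  have hle := hVZ.le
  -- products
  have mulZ : ∀ {x y : B} {c d : C}, (x, c) ∈ Z → (y, d) ∈ Z → (x * y, c * d) ∈ Z :=
    fun h h' => Z.mul_mem h h'
  have mulV : ∀ {x y : B} {c d : C}, (x, c) ∈ V → (y, d) ∈ V → (x * y, c * d) ∈ V :=
    fun h h' => V.mul_mem h h'
  have invZ : ∀ {x : B} {c : C}, (x, c) ∈ Z → (x⁻¹, c⁻¹) ∈ Z := fun h => Z.inv_mem h
  have invV : ∀ {x : B} {c : C}, (x, c) ∈ V → (x⁻¹, c⁻¹) ∈ V := fun h => V.inv_mem h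
  have m1Z : ∀ {x y : B}, (x, (1 : C)) ∈ Z → (y, (1 : C)) ∈ Z → (x * y, (1 : C)) ∈ Z :=
    fun h h' => by simpa using mulZ h h'
  have m1V : ∀ {x y : B}, (x, (1 : C)) ∈ V → (y, (1 : C)) ∈ V → (x * y, (1 : C)) ∈ V :=
    fun h h' => by simpa using mulV h h'
  have i1Z : ∀ {x : B}, (x, (1 : C)) ∈ Z → (x⁻¹, (1 : C)) ∈ Z :=
    fun h => by simpa using invZ h
  have i1V : ∀ {x : B}, (x, (1 : C)) ∈ V → (x⁻¹, (1 : C)) ∈ V :=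
    fun h => by simpa using invV h
  have conj1 : ∀ {x w : B}, w * x * w⁻¹ = 1 → x = 1 := fun h => by
    simpa using h
  have hKc : ∀ x w, w * x * w⁻¹ ∈ K → x ∈ K := fun x w h => by
    have := h1 _ h w⁻¹
    simpa [mul_assoc] using this
  -- an even element in the difference
  have hE : ∃ u, A u ∧ (u, (1 : C)) ∈ Z ∧ (u, (1 : C)) ∉ V := by
    by_contra! hcon
    apply hVZ.not_ge
    rintro ⟨x, d⟩ hx
    obtain ⟨w, hw, -, hv⟩ := hcov x d hx
    have hu := hcon _ (h2 x w) (by simpa using mulZ hx (invZ (hle hv)))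
    simpa [mul_assoc] using mulV hu hv
  obtain ⟨u, hAu, huZ, huV⟩ := hE
  -- nontrivial element of K in V
  have hk : ∃ k ∈ K, k ≠ 1 ∧ (k, (1 : C)) ∈ V := by
    by_contra! hcon
    have hZK : ∀ x ∈ K, (x, (1 : C)) ∈ Z → x = 1 := by
      intro x hx hxZ
      obtain ⟨w, hw, -, hv⟩ := hcov x 1 hxZ
      by_contra hne
      exact hcon _ (h1 x hx w) (fun h => hne (conj1 h)) hv
    obtain ⟨w, hw, -, hv⟩ := hcov u 1 huZ
    rcases h3 u hAu w with h | h
    · have := hZK _ h (m1Z (hle hv) (i1Z huZ))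
      rw [mul_inv_eq_one] at this
      exact huV (this ▸ hv)
    · have := hZK _ h (m1Z (hle hv) huZ)
      rw [mul_eq_one_iff_eq_inv] at this
      rw [this] at hv
      exact huV (by simpa using i1V hv)
  obtain ⟨k, hkK, hk1, hkV⟩ := hk
  -- K not contained in V
  have hKV : ¬ ∀ x ∈ K, (x, (1 : C)) ∈ V := by
    intro hcon
    obtain ⟨w, hw, -, hv⟩ := hcov u 1 huZ
    rcases h3 u hAu w with h | h
    · have := m1V (i1V (hcon _ h)) hv
      exact huV (by simpa [mul_assoc] using this)
    · have := m1V (i1V hv) (hcon _ h)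
      exact huV (by simpa [mul_assoc] using this)
  have hVk : ∀ x ∈ K, (x, (1 : C)) ∈ V → x ≠ 1 → x = k := by
    intro x hx hxV hx1
    by_contra hne
    apply hKV
    intro c hc
    rcases h8 x hx k hkK hx1 hk1 hne c hc with rfl | rfl | rfl | rfl
    · exact V.one_mem
    · exact hxV
    · exact hkV
    · exact m1V hxV hkV
  -- even elements of Z lie in K
  have hevK : ∀ x, A x → (x, (1 : C)) ∈ Z → x ∈ K := by
    intro x hAx hxZ
    by_contra hxK
    obtain ⟨w, hw, -, hv⟩ := hcov x 1 hxZ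
    apply hKV
    intro c hc
    rcases h4 _ (hAc x w hAx) (fun h => hxK (hKc _ _ h)) k hkK hk1 c hc with h | h | h | h
    · rw [h]; exact V.one_mem
    · rw [h]; exact hkV
    · rw [h]; exact m1V (m1V hv hkV) (i1V hv)
    · rw [h]; exact m1V (m1V (i1V hv) hkV) hv
  have huK := hevK u hAu huZ
  have hKZ : ∀ x ∈ K, (x, (1 : C)) ∈ Z := by
    intro c hc
    have hu1 : u ≠ 1 := by rintro rfl; exact huV V.one_mem
    have huk : u ≠ k := by rintro rfl; exact huV hkV
    rcases h8 u huK k hkK hu1 hk1 huk c hc with h | h | h | h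
    · rw [h]; exact Z.one_mem
    · rw [h]; exact huZ
    · rw [h]; exact hle hkV
    · rw [h]; exact m1Z huZ (hle hkV)
  have htrans : ∀ x ∈ K, x ≠ 1 → ∃ w ∈ W, w * k * w⁻¹ = x := by
    intro x hx hx1
    obtain ⟨w, hw, hw', hv⟩ := hcov x 1 (hKZ x hx)
    refine ⟨w⁻¹, hw', ?_⟩
    rw [← hVk _ (h1 x hx w) hv (fun h => hx1 (conj1 h))]
    group
  -- the K part in V is fixed by V
  have key : ∀ x d, (x, d) ∈ V → A x → x ∈ K := by
    intro x d hx hAx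
    refine h7 x hAx k hkK hk1 (hVk _ (h1 _ hkK x) ?_ (fun h => hk1 (conj1 h)))
    simpa using mulV (mulV hx hkV) (invV hx)
  -- V-elements are even; commutators lie in Z, are even, hence in K
  have hVA : ∀ x d, (x, d) ∈ V → A x := by
    intro x d hx
    by_contra hA
    obtain ⟨k', hk', hk'1, hw⟩ := h6 x hA k hkK hk1
    obtain ⟨w, hwW, hwk⟩ := htrans k' hk' hk'1
    refine hw w ?_ hwk
    have e1 : (x * (w * x * w⁻¹)⁻¹, (1 : C)) ∈ Z := by
      simpa using mulZ (hle hx) (invZ (hZn w hwW x d (hle hx)))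
    have := K.inv_mem (hevK _ (h2 x w) e1)
    simpa [mul_assoc] using this
  have hZK : ∀ x d, (x, d) ∈ Z → x ∈ K := by
    intro x d hx
    obtain ⟨w, hw, -, hv⟩ := hcov x d hx
    exact hKc _ _ (key _ _ hv (hVA _ _ hv))
  have hZ1 : ∀ x d, (x, d) ∈ Z → ((1 : B), d) ∈ Z := by
    intro x d hx
    simpa using mulZ (i1Z (hKZ x (hZK x d hx))) hx
  have hV1 : ∀ d, ((1 : B), d) ∈ Z → ((1 : B), d) ∈ V := by
    intro d hd
    obtain ⟨w, hw, -, hv⟩ := hcov 1 d hd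
    simpa using hv
  refine ⟨Z.comap (MonoidHom.inr B C), V.comap (MonoidHom.inl B C), ?_, ?_, ?_, ?_⟩
  · intro x hx
    exact hZK x 1 (hle hx)
  · have : ((V.comap (MonoidHom.inl B C) : Subgroup B) : Set B) = {1, k} := by
      ext x
      constructor
      · intro hx
        by_cases hx1 : x = 1
        · left; exact hx1
        · right; exact hVk x (hZK x 1 (hle hx)) hx hx1
      · rintro (rfl | rfl)
        · exact V.one_mem
        · exact hkV
    change Nat.card ((V.comap (MonoidHom.inl B C) : Subgroup B) : Set B) = 2
    rw [this, Nat.card_coe_set_eq, Set.ncard_pair (Ne.symm hk1)]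
  · ext ⟨x, d⟩
    rw [Subgroup.mem_prod]
    constructor
    · intro hx
      exact ⟨hZK x d hx, hZ1 x d hx⟩
    · rintro ⟨hx, hd⟩
      simpa using mulZ (hKZ x hx) hd
  · ext ⟨x, d⟩
    rw [Subgroup.mem_prod]
    constructor
    · intro hx
      refine ⟨?_, hZ1 x d (hle hx)⟩
      change (x, (1 : C)) ∈ V
      simpa using mulV hx (invV (hV1 d (hZ1 x d (hle hx))))
    · rintro ⟨hx, hd⟩
      simpa using mulV hx (hV1 d hd)


/-- **Structure of subgroups of `S₄ × C` covered by conjugates in the product.**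
Let `U = B × C` with `B ≅ S₄` and `C` cyclic and finite. Let `V < Z ⊴ Y ≤ U` with
`Z` equal to the union over `y ∈ Y` of the conjugates `y V y⁻¹`. Then, with `K` the
Klein four-subgroup of `B` (i.e. a normal subgroup of order 4), there are a subgroup
`C₁` of `C` and a subgroup `K₀ ≤ K` of order 2 with `Z = K × C₁` and `V = K₀ × C₁`. -/
theorem klein_structure_of_covered_subgroup
    (B : Type*) [Group B] (e : B ≃* Equiv.Perm (Fin 4))
    (C : Type*) [Group C] [Finite C] (hC : IsCyclic C)
    (V Z Y : Subgroup (B × C))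
    (hVZ : V < Z) (hZY : Z ≤ Y)
    (hZnorm : ∀ y ∈ Y, ∀ z ∈ Z, y * z * y⁻¹ ∈ Z)
    (hcov : (Z : Set (B × C)) =
      ⋃ y ∈ (Y : Set (B × C)), (fun v => y * v * y⁻¹) '' (V : Set (B × C))) :
    ∃ K : Subgroup B, K.Normal ∧ Nat.card K = 4 ∧
      ∃ (C₁ : Subgroup C) (K₀ : Subgroup B),
        K₀ ≤ K ∧ Nat.card K₀ = 2 ∧ Z = K.prod C₁ ∧ V = K₀.prod C₁ := by
  let : CommGroup C := hC.commGroup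
  have et : ∀ {x y : B}, e x = e y → x = y := fun h => e.injective h
  have e1 : ∀ {x : B}, x ≠ 1 → e x ≠ 1 := fun h h' => h (by simpa using h')
  refine ⟨kleinP.comap e.toMonoidHom, ⟨fun x hx g => ?_⟩, ?_, ?_⟩
  · have := kleinP_conj _ hx (e g)
    simpa using this
  · exact (Nat.card_congr (e.toEquiv.subtypeEquiv (fun _ => Iff.rfl))).trans kleinP_card
  · refine klein_core _ (fun x => Equiv.Perm.sign (e x) = 1) ?_ ?_ ?_ ?_ ?_ ?_ ?_ ?_ V Z
      {w | ∃ c, (w, c) ∈ Y} hVZ ?_ ?_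
    · intro x hx g
      have := kleinP_conj _ hx (e g)
      simpa using this
    · intro x y
      simp [mul_comm, mul_left_comm]
    · intro x y h
      simp [h]
    · intro u hu w
      have := kleinP_h3 _ hu (e w)
      simpa using this
    · intro u hu huK k hk hk1 k' hk'
      have := kleinP_h4 (e u) hu huK (e k) hk (e1 hk1) (e k') hk'
      simpa only [← map_inv, ← map_mul, e.injective.eq_iff, map_eq_one_iff e e.injective] using this
    · intro x hx k hk hk1
      obtain ⟨k', hk', hk'1, h⟩ := kleinP_h6 (e x) hx (e k) hk (e1 hk1)
      obtain ⟨k', rfl⟩ := e.surjective k'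
      refine ⟨k', hk', fun h => hk'1 (by simp [h]), fun w hw hwk => h (e w) ?_ ?_⟩
      · simpa using hw
      · rw [← hwk]; simp
    · intro x hx k hk hk1 h
      refine kleinP_h7 (e x) hx (e k) hk (e1 hk1) ?_
      conv_rhs => rw [← h]
      simp
    · intro a ha b hb ha1 hb1 hab c hc
      have := kleinP_h8 (e a) ha (e b) hb (e1 ha1) (e1 hb1) (fun h => hab (et h)) (e c) hc
      simpa only [← map_inv, ← map_mul, e.injective.eq_iff, map_eq_one_iff e e.injective] using this
    · rintro w ⟨c, hc⟩ x d hx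
      have := hZnorm _ hc _ hx
      simpa [mul_comm] using this
    · intro x d hx
      have hx' : (x, d) ∈ (Z : Set (B × C)) := hx
      rw [hcov] at hx'
      simp only [Set.mem_iUnion, Set.mem_image] at hx'
      obtain ⟨⟨w, c⟩, hy, ⟨v, d'⟩, hv, h⟩ := hx'
      have hi := Y.inv_mem hy
      refine ⟨w⁻¹, ⟨_, hi⟩, ⟨c, by simpa using hy⟩, ?_⟩
      rw [Prod.ext_iff] at h
      obtain ⟨rfl, rfl⟩ := h
      simpa [mul_assoc] using hv
end

section
/- Let q >= 2 be an integer and let a and b be positive integers. Then gcd(q^a + 1, q^b + 1) equals q^{gcd(a,b)} + 1 if both a/gcd(a,b) and b/gcd(a,b) are odd, and equals gcd(2, q - 1) otherwise. -/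
lemma aux_odd (x m n d : ℕ) (hm : Odd m) (hn : Odd n) (h : Nat.Coprime m n)
    (h1 : d ∣ x ^ m + 1) (h2 : d ∣ x ^ n + 1) : d ∣ x + 1 := by
  rw [← ZMod.natCast_eq_zero_iff] at *
  push_cast at *
  have e1 : (-(x : ZMod d)) ^ m = 1 := by
    rw [hm.neg_pow]; linear_combination -h1
  have e2 : (-(x : ZMod d)) ^ n = 1 := by
    rw [hn.neg_pow]; linear_combination -h2
  have h3 := Nat.dvd_gcd (orderOf_dvd_of_pow_eq_one e1) (orderOf_dvd_of_pow_eq_one e2)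
  rw [h.gcd_eq_one, Nat.dvd_one, orderOf_eq_one_iff] at h3
  linear_combination -h3

lemma aux_even (x m n d : ℕ) (hm : Even m) (hn : Odd n)
    (h1 : d ∣ x ^ m + 1) (h2 : d ∣ x ^ n + 1) : d ∣ 2 := by
  rw [← ZMod.natCast_eq_zero_iff] at *
  push_cast at *
  have e1 : (x : ZMod d) ^ m = -1 := by linear_combination h1
  have e2 : (x : ZMod d) ^ n = -1 := by linear_combination h2
  have e3 : ((x : ZMod d) ^ m) ^ n = ((x : ZMod d) ^ n) ^ m := by
    rw [← pow_mul, ← pow_mul, mul_comm]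
  rw [e1, e2, hn.neg_one_pow, hm.neg_one_pow] at e3
  linear_combination -e3

/-- **gcd of `q^a + 1` and `q^b + 1`.** For `q ≥ 2` and positive `a`, `b`:
`gcd (q^a + 1) (q^b + 1) = q^(gcd a b) + 1` when both `a / gcd a b` and `b / gcd a b`
are odd, and `gcd (q^a + 1) (q^b + 1) = gcd 2 (q - 1)` otherwise. -/
theorem gcd_pow_add_one_pow_add_one (q a b : ℕ) (hq : 2 ≤ q) (ha : 0 < a) (hb : 0 < b) :
    Nat.gcd (q ^ a + 1) (q ^ b + 1) =
      if Odd (a / Nat.gcd a b) ∧ Odd (b / Nat.gcd a b) then q ^ Nat.gcd a b + 1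
      else Nat.gcd 2 (q - 1) := by
  have hc := Nat.coprime_div_gcd_div_gcd (Nat.gcd_pos_of_pos_left b ha)
  have ea : q ^ a = (q ^ Nat.gcd a b) ^ (a / Nat.gcd a b) := by
    rw [← pow_mul, Nat.mul_div_cancel' (Nat.gcd_dvd_left a b)]
  have eb : q ^ b = (q ^ Nat.gcd a b) ^ (b / Nat.gcd a b) := by
    rw [← pow_mul, Nat.mul_div_cancel' (Nat.gcd_dvd_right a b)]
  have d1 := Nat.gcd_dvd_left (q ^ a + 1) (q ^ b + 1)
  have d2 := Nat.gcd_dvd_right (q ^ a + 1) (q ^ b + 1)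
  split_ifs with h
  · obtain ⟨hm, hn⟩ := h
    apply Nat.dvd_antisymm
    · exact aux_odd (q ^ Nat.gcd a b) _ _ _ hm hn hc (ea ▸ d1) (eb ▸ d2)
    · apply Nat.dvd_gcd
      · rw [ea]; simpa using hm.nat_add_dvd_pow_add_pow (q ^ Nat.gcd a b) 1
      · rw [eb]; simpa using hn.nat_add_dvd_pow_add_pow (q ^ Nat.gcd a b) 1
  · have hd : Nat.gcd (q ^ a + 1) (q ^ b + 1) ∣ 2 := by
      rcases Nat.even_or_odd (a / Nat.gcd a b) with hm | hm
      · rcases Nat.even_or_odd (b / Nat.gcd a b) with hn | hn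
        · have := Nat.dvd_gcd hm.two_dvd hn.two_dvd
          rw [hc.gcd_eq_one] at this
          omega
        · exact aux_even (q ^ Nat.gcd a b) _ _ _ hm hn (ea ▸ d1) (eb ▸ d2)
      · have hn : Even (b / Nat.gcd a b) := by
          rw [← Nat.not_odd_iff_even]; exact fun hn => h ⟨hm, hn⟩
        exact aux_even (q ^ Nat.gcd a b) _ _ _ hn hm (eb ▸ d2) (ea ▸ d1)
    rcases Nat.even_or_odd q with hq2 | hq2
    · have o : Odd (q ^ a + 1) := (hq2.pow_of_ne_zero ha.ne').add_one
      have r : Nat.gcd 2 (q - 1) = 1 := by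
        rw [← Nat.coprime_iff_gcd_eq_one, Nat.coprime_two_left]
        obtain ⟨k, hk⟩ := hq2
        exact ⟨k - 1, by omega⟩
      rw [r]
      rcases (Nat.dvd_prime Nat.prime_two).1 hd with h' | h'
      · exact h'
      · rw [h'] at d1
        exact absurd (even_iff_two_dvd.2 d1) (Nat.not_even_iff_odd.2 o)
    · have r : Nat.gcd 2 (q - 1) = 2 := by
        apply Nat.gcd_eq_left
        obtain ⟨k, hk⟩ := hq2
        omega
      rw [r]
      exact Nat.dvd_antisymm hd (Nat.dvd_gcd (hq2.pow.add_one).two_dvd (hq2.pow.add_one).two_dvd)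
end

section
/- Let q >= 2 be an integer and let a and b be positive integers. Then gcd(q^a + 1, q^b - 1) equals q^{gcd(a,b)} + 1 if b/gcd(a,b) is even, and equals gcd(2, q - 1) otherwise. -/
theorem aux_gcd (x m n : ℕ) (hx : 2 ≤ x) (hm : 0 < m) (hn : 0 < n) (h : Nat.Coprime m n) :
    Nat.gcd (x ^ m + 1) (x ^ n - 1) =
      if Even n then x + 1 else Nat.gcd 2 (x - 1) := by
  have key : Nat.gcd (x ^ m + 1) (x ^ n - 1) ∣ x ^ (Nat.gcd (2 * m) n) - 1 := by
    rw [← Nat.pow_sub_one_gcd_pow_sub_one]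
    refine Nat.dvd_gcd ((Nat.gcd_dvd_left _ _).trans ⟨x ^ m - 1, ?_⟩) (Nat.gcd_dvd_right _ _)
    have := Nat.sq_sub_sq (x ^ m) 1
    rw [← this, mul_comm 2 m, pow_mul, one_pow]
  have h1 : ∀ k, 1 ≤ x ^ k := fun k => Nat.one_le_pow _ _ (by omega)
  have hl := Nat.gcd_dvd_left (x ^ m + 1) (x ^ n - 1)
  split_ifs with he
  · have hmo : Odd m := by
      by_contra hc
      rw [Nat.not_odd_iff_even] at hc
      exact Nat.not_coprime_of_dvd_of_dvd (by norm_num) hc.two_dvd he.two_dvd h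
    have hg : Nat.gcd (2 * m) n = 2 := by
      rw [Nat.Coprime.gcd_mul_right_cancel _ h]
      exact Nat.gcd_eq_left he.two_dvd
    rw [hg] at key
    apply Nat.dvd_antisymm
    · obtain ⟨k, rfl⟩ := hmo
      have h2 : x ^ 2 - 1 ∣ x ^ (2 * k) - 1 := by
        simpa [pow_mul] using Nat.sub_dvd_pow_sub_pow (x ^ 2) 1 k
      have h3 := Dvd.dvd.mul_left (key.trans h2) x
      have h4 : x ^ (2 * k + 1) + 1 = x * (x ^ (2 * k) - 1) + (x + 1) := by
        obtain ⟨t, ht⟩ := Nat.exists_eq_add_of_le (h1 (2 * k))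
        rw [pow_succ, ht, Nat.add_sub_cancel_left]; ring
      generalize Nat.gcd (x ^ (2 * k + 1) + 1) (x ^ n - 1) = D at *
      rw [h4] at hl
      exact (Nat.dvd_add_right h3).1 hl
    · refine Nat.dvd_gcd (by simpa using hmo.nat_add_dvd_pow_add_pow x 1) ?_
      obtain ⟨k, rfl⟩ := he.two_dvd
      have h2 : x ^ 2 - 1 ∣ x ^ (2 * k) - 1 := by
        simpa [pow_mul] using Nat.sub_dvd_pow_sub_pow (x ^ 2) 1 k
      refine Dvd.dvd.trans ⟨x - 1, ?_⟩ h2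
      simpa using Nat.sq_sub_sq x 1
  · have hg : Nat.gcd (2 * m) n = 1 := by
      rw [Nat.Coprime.gcd_mul_right_cancel _ h]
      exact (Nat.coprime_two_left).2 (Nat.not_even_iff_odd.1 he)
    rw [hg, pow_one] at key
    have h2 : ∀ k, x - 1 ∣ x ^ k - 1 := fun k => by simpa using Nat.sub_dvd_pow_sub_pow x 1 k
    have e : x ^ m + 1 = (x ^ m - 1) + 2 := by have := h1 m; omega
    apply Nat.dvd_antisymm
    · refine Nat.dvd_gcd ?_ key
      have h3 := key.trans (h2 m)
      generalize Nat.gcd (x ^ m + 1) (x ^ n - 1) = D at *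
      rw [e] at hl
      exact (Nat.dvd_add_right h3).1 hl
    · have h3 := Nat.gcd_dvd_right 2 (x - 1)
      refine Nat.dvd_gcd ?_ (h3.trans (h2 n))
      rw [e]
      exact dvd_add (h3.trans (h2 m)) (Nat.gcd_dvd_left _ _)

theorem aux_two (x g : ℕ) (hx : 2 ≤ x) (hg : 0 < g) :
    Nat.gcd 2 (x ^ g - 1) = Nat.gcd 2 (x - 1) := by
  have h1 : 1 ≤ x ^ g := Nat.one_le_pow _ _ (by omega)
  have h : (x ^ g) % 2 = x % 2 := by
    rcases Nat.even_or_odd x with hx' | hx'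
    · have := hx'.pow_of_ne_zero hg.ne'
      rw [Nat.even_iff] at *; omega
    · have := hx'.pow (n := g)
      rw [Nat.odd_iff] at *; omega
  rw [Nat.gcd_rec 2, Nat.gcd_rec 2 (x - 1)]
  congr 1
  omega

/-- **gcd of `q^a + 1` and `q^b - 1`.** For `q ≥ 2` and positive `a`, `b`:
`gcd (q^a + 1) (q^b - 1) = q^(gcd a b) + 1` when `b / gcd a b` is even, and
`gcd (q^a + 1) (q^b - 1) = gcd 2 (q - 1)` otherwise. -/
theorem gcd_pow_add_one_pow_sub_one (q a b : ℕ) (hq : 2 ≤ q) (ha : 0 < a) (hb : 0 < b) :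
    Nat.gcd (q ^ a + 1) (q ^ b - 1) =
      if Even (b / Nat.gcd a b) then q ^ Nat.gcd a b + 1
      else Nat.gcd 2 (q - 1) := by
  have hg : 0 < Nat.gcd a b := Nat.gcd_pos_of_pos_left _ ha
  have hA := Nat.mul_div_cancel' (Nat.gcd_dvd_left a b)
  have hB := Nat.mul_div_cancel' (Nat.gcd_dvd_right a b)
  have := aux_gcd (q ^ Nat.gcd a b) (a / Nat.gcd a b) (b / Nat.gcd a b)
    (hq.trans (Nat.le_self_pow hg.ne' q))
    (Nat.div_pos (Nat.gcd_le_left _ ha) hg) (Nat.div_pos (Nat.gcd_le_right _ hb) hg)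
    (Nat.coprime_div_gcd_div_gcd hg)
  rwa [← pow_mul, ← pow_mul, hA, hB, aux_two q _ hq hg] at this
end

section
/- Let n >= 2, let q be a prime power and F_q a finite field with q elements. If x is an element of SL_n(F_q) whose order equals (q^n - 1)/(q - 1), then x acts irreducibly on F_q^n; that is, the only F_q-subspaces of F_q^n invariant under x are 0 and F_q^n. -/
open Polynomial in
theorem singer_aux_irr {F : Type*} [Field F] [Fintype F] (f : F[X]) (hf : Irreducible f)
    (h0 : f.eval 0 ≠ 0) : f ∣ X ^ (Fintype.card F ^ f.natDegree - 1) - 1 := by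
  have : Fact (Irreducible f) := ⟨hf⟩
  have hfin : Module.Finite F (AdjoinRoot f) := (AdjoinRoot.powerBasis hf.ne_zero).finite
  have : Finite (AdjoinRoot f) := Module.finite_of_finite F
  have := Fintype.ofFinite (AdjoinRoot f)
  have hc : Fintype.card (AdjoinRoot f) = Fintype.card F ^ f.natDegree := by
    rw [Module.card_eq_pow_finrank (K := F), (AdjoinRoot.powerBasis hf.ne_zero).finrank,
      AdjoinRoot.powerBasis_dim]
  have hr : AdjoinRoot.root f ≠ 0 := by
    intro h
    rw [← AdjoinRoot.mk_X, AdjoinRoot.mk_eq_zero] at h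
    obtain ⟨g, hg⟩ := h
    rcases (irreducible_X (R := F)).isUnit_or_isUnit hg with h | h
    · exact hf.not_isUnit h
    · have := congrArg (eval 0) hg
      simp only [eval_X, eval_mul] at this
      obtain ⟨c, hc, rfl⟩ := Polynomial.isUnit_iff.mp h
      simp only [eval_C] at this
      rcases mul_eq_zero.mp this.symm with h | h
      · exact h0 h
      · exact hc.ne_zero h
  rw [← AdjoinRoot.mk_eq_zero, map_sub, map_pow, map_one, AdjoinRoot.mk_X, ← hc,
    FiniteField.pow_card_sub_one_eq_one _ hr, sub_self]

theorem singer_aux_num (r M N q a b : ℕ) (hM : r ∣ M) (hN : r ∣ N)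
    (hM0 : 0 < M) (hq : 2 ≤ q) (hA : M ≤ q ^ a - 1) (hB : N ≤ q ^ b - 1)
    (ha : 1 ≤ a) (hb : 1 ≤ b) : Nat.lcm M N * r < q ^ (a + b) - 1 := by
  have h1 : r ≤ Nat.gcd M N := Nat.le_of_dvd (Nat.gcd_pos_of_pos_left _ hM0) (Nat.dvd_gcd hM hN)
  have h2 : Nat.lcm M N * r ≤ M * N := by
    rw [← Nat.gcd_mul_lcm M N, mul_comm]; gcongr
  have h3 : M * N ≤ (q ^ a - 1) * (q ^ b - 1) := by gcongr
  have ha' : 2 ≤ q ^ a := hq.trans (Nat.le_self_pow (by omega) q)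
  have hb' : 2 ≤ q ^ b := hq.trans (Nat.le_self_pow (by omega) q)
  rw [pow_add]
  obtain ⟨u, hu⟩ := Nat.exists_eq_add_of_le ha'
  obtain ⟨v, hv⟩ := Nat.exists_eq_add_of_le hb'
  rw [hu, hv] at h3 ⊢
  have e1 : 2 + u - 1 = 1 + u := by omega
  have e2 : 2 + v - 1 = 1 + v := by omega
  rw [e1, e2] at h3
  have : (1 + u) * (1 + v) + 1 < (2 + u) * (2 + v) := by nlinarith
  omega

theorem dvd_X_pow_lift {F : Type*} [Field F] (g : Polynomial F) (a b : ℕ) (h : a ∣ b)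
    (hg : g ∣ Polynomial.X ^ a - 1) : g ∣ Polynomial.X ^ b - 1 := by
  obtain ⟨c, rfl⟩ := h
  refine hg.trans ?_
  rw [pow_mul]
  exact sub_one_dvd_pow_sub_one _ _

open Polynomial in
theorem singer_aux_red {F : Type*} [Field F] [Fintype F] (d : ℕ) : ∀ (f : F[X]),
    f.natDegree = d → 1 ≤ d → Squarefree f → f.eval 0 ≠ 0 →
    ∃ M, 0 < M ∧ (Fintype.card F - 1) ∣ M ∧ M ≤ Fintype.card F ^ d - 1 ∧ f ∣ X ^ M - 1 ∧
      (Irreducible f ∨ M * (Fintype.card F - 1) < Fintype.card F ^ d - 1) := by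
  have hq : 2 ≤ Fintype.card F := Fintype.one_lt_card
  induction d using Nat.strong_induction_on with
  | _ d ih =>
  intro f hd h1 hs h0
  by_cases hi : Irreducible f
  · refine ⟨Fintype.card F ^ d - 1, ?_, ?_, le_rfl, ?_, Or.inl hi⟩
    · have : 2 ≤ Fintype.card F ^ d := hq.trans (Nat.le_self_pow (by omega) _)
      omega
    · simpa using Nat.sub_dvd_pow_sub_pow (Fintype.card F) 1 d
    · rw [← hd]; exact singer_aux_irr f hi h0
  · have hu : ¬ IsUnit f := fun h => by
      have := natDegree_eq_zero_of_isUnit h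
      omega
    have hf0 : f ≠ 0 := by rintro rfl; simp at h0
    rw [irreducible_iff] at hi
    push Not at hi
    obtain ⟨g, h, hgh, hg, hh⟩ := hi hu
    have hg0 : g ≠ 0 := by rintro rfl; simp [hgh] at hf0
    have hh0 : h ≠ 0 := by rintro rfl; simp [hgh] at hf0
    have hdg : 1 ≤ g.natDegree := by
      by_contra hc
      exact hg (isUnit_iff_degree_eq_zero.mpr (by
        rw [degree_eq_natDegree hg0]; norm_cast; omega))
    have hdh : 1 ≤ h.natDegree := by
      by_contra hc
      exact hh (isUnit_iff_degree_eq_zero.mpr (by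
        rw [degree_eq_natDegree hh0]; norm_cast; omega))
    have hdd : g.natDegree + h.natDegree = d := by rw [← hd, hgh, natDegree_mul hg0 hh0]
    rw [hgh, squarefree_mul_iff] at hs
    rw [hgh, eval_mul] at h0
    obtain ⟨M, hM0, hM1, hM2, hM3, -⟩ := ih _ (by omega) g rfl hdg hs.2.1 (left_ne_zero_of_mul h0)
    obtain ⟨N, hN0, hN1, hN2, hN3, -⟩ := ih _ (by omega) h rfl hdh hs.2.2 (right_ne_zero_of_mul h0)
    have key := singer_aux_num (Fintype.card F - 1) M N (Fintype.card F) _ _ hM1 hN1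
      hM0 hq hM2 hN2 hdg hdh
    rw [hdd] at key
    refine ⟨Nat.lcm M N, Nat.lcm_pos hM0 hN0, hM1.trans (Nat.dvd_lcm_left _ _), ?_, ?_, Or.inr key⟩
    · have : Nat.lcm M N * 1 ≤ Nat.lcm M N * (Fintype.card F - 1) := by
        gcongr; omega
      omega
    · rw [hgh]
      exact IsCoprime.mul_dvd hs.1.isCoprime
        (dvd_X_pow_lift _ _ _ (Nat.dvd_lcm_left _ _) hM3)
        (dvd_X_pow_lift _ _ _ (Nat.dvd_lcm_right _ _) hN3)

/-- **Elements of `SL_n(q)` of Singer order act irreducibly.** If `x ∈ SL_n(F_q)`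
(`n ≥ 2`) has order `(q^n - 1)/(q - 1)`, then the only subspaces of `F_q^n` invariant
under `x` are `0` and the whole space. -/
theorem SL_singer_order_irreducible (n : ℕ) (hn : 2 ≤ n) (q : ℕ) (hq : IsPrimePow q)
    (F : Type*) [Field F] [Fintype F] (hF : Fintype.card F = q)
    (x : Matrix.SpecialLinearGroup (Fin n) F)
    (hx : orderOf x = (q ^ n - 1) / (q - 1)) :
    ∀ W : Submodule F (Fin n → F),
      (∀ v ∈ W, (x : Matrix (Fin n) (Fin n) F).mulVec v ∈ W) → W = ⊥ ∨ W = ⊤ := by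
  classical
  have hq2 : 2 ≤ q := hF ▸ Fintype.one_lt_card
  set A : Matrix (Fin n) (Fin n) F := (x : Matrix (Fin n) (Fin n) F) with hA
  set N := (q ^ n - 1) / (q - 1) with hN
  have hNq : N * (q - 1) = q ^ n - 1 :=
    Nat.div_mul_cancel (by simpa using Nat.sub_dvd_pow_sub_pow q 1 n)
  have hqn : 2 ≤ q ^ n := hq2.trans (Nat.le_self_pow (by omega) _)
  have hpow : ∀ M, A ^ M = 1 → N ∣ M := by
    intro M hM
    rw [← hx]
    apply orderOf_dvd_of_pow_eq_one
    apply Subtype.ext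
    simpa using hM
  have hAN : A ^ N = 1 := by
    have := pow_orderOf_eq_one x
    rw [hx] at this
    simpa using congrArg (Subtype.val) this
  have hqF : (q : F) = 0 := by rw [← hF]; exact FiniteField.cast_card_eq_zero F
  have hNF : (N : F) ≠ 0 := by
    intro h
    have h1 := congrArg (Nat.cast : ℕ → F) hNq
    rw [Nat.cast_mul, h, Nat.cast_sub (show 1 ≤ q ^ n by omega), Nat.cast_pow, hqF,
      zero_pow (by omega)] at h1
    simp at h1
  have hN0 : N ≠ 0 := by rintro h; simp [h] at hNF
  set m := minpoly F A with hm
  have hint : IsIntegral F A := Matrix.isIntegral A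
  have hmd : m ∣ Polynomial.X ^ N - 1 := minpoly.dvd _ _ (by simp [hAN])
  have hsq : Squarefree m :=
    ((Polynomial.X_pow_sub_one_separable_iff.mpr hNF).of_dvd hmd).squarefree
  have h0 : m.eval 0 ≠ 0 := by
    obtain ⟨g, hg⟩ := hmd
    intro h
    have := congrArg (Polynomial.eval 0) hg
    simp [h, hN0] at this
  have : Nonempty (Fin n) := ⟨⟨0, by omega⟩⟩
  have hd1 : 1 ≤ m.natDegree := minpoly.natDegree_pos hint
  have hdn : m.natDegree ≤ n := by
    have := Polynomial.natDegree_le_of_dvd (Matrix.minpoly_dvd_charpoly A)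
      (Matrix.charpoly_monic A).ne_zero
    simpa [Matrix.charpoly_natDegree_eq_dim] using this
  obtain ⟨M, hM0, hM1, hM2, hM3, hM4⟩ := singer_aux_red _ m rfl hd1 hsq h0
  rw [hF] at hM2 hM4
  have hNM : N ≤ M := by
    refine Nat.le_of_dvd hM0 (hpow M ?_)
    obtain ⟨g, hg⟩ := hM3
    have := congrArg (Polynomial.aeval A) hg
    rw [map_mul, hm, minpoly.aeval, zero_mul] at this
    simpa [sub_eq_zero] using this
  have hirr : Irreducible m := by
    rcases hM4 with h | h
    · exact h
    · exfalso
      have h1 : q ^ m.natDegree ≤ q ^ n := Nat.pow_le_pow_right (by omega) hdn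
      have h2 : N * (q - 1) ≤ M * (q - 1) := by gcongr
      omega
  have hdeg : m.natDegree = n := by
    by_contra hne
    have h1 : q ^ m.natDegree ≤ q ^ (n - 1) := Nat.pow_le_pow_right (by omega) (by omega)
    have h2 : N * (q - 1) ≤ (q ^ (n - 1) - 1) * (q - 1) := by gcongr; omega
    have h3 : q ^ n = q ^ (n - 1) * q := by rw [← pow_succ]; congr 1; omega
    have h4 : 1 ≤ q ^ (n - 1) := Nat.one_le_pow _ _ (by omega)
    rw [hNq, h3] at h2
    obtain ⟨u, hu⟩ := Nat.exists_eq_add_of_le h4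
    obtain ⟨v, hv⟩ := Nat.exists_eq_add_of_le hq2
    rw [hu, hv] at h2
    have e1 : 1 + u - 1 = u := by omega
    have e2 : 2 + v - 1 = 1 + v := by omega
    rw [e1, e2] at h2
    have : u * (1 + v) + 1 < (1 + u) * (2 + v) := by nlinarith
    omega
  intro W hW
  by_contra hcon
  push Not at hcon
  obtain ⟨hb, ht⟩ := hcon
  set T : Module.End F (Fin n → F) := Matrix.toLin' A with hT
  have hTW : ∀ v ∈ W, T v ∈ W := by simpa [hT] using hW
  have hTm : Polynomial.aeval T m = 0 := by
    rw [hT, hm, ← Matrix.minpoly_toLin']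
    exact minpoly.aeval _ _
  let S := T.restrict hTW
  have hSm : minpoly F S ∣ m := by
    refine minpoly.dvd _ _ ?_
    ext1 v
    apply Subtype.ext
    have hk : ∀ (p : Polynomial F) (w : W),
        ((Polynomial.aeval S p w : W) : Fin n → F) = Polynomial.aeval T p (w : Fin n → F) := by
      intro p
      induction p using Polynomial.induction_on' with
      | add p r hp hr => intro w; simp [hp, hr]
      | monomial k c =>
        intro w
        have hkk : ∀ k : ℕ, (((S ^ k) w : W) : Fin n → F) = (T ^ k) (w : Fin n → F) := by
          intro k
          induction k with
          | zero => simp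
          | succ k ihk =>
            rw [pow_succ', pow_succ', Module.End.mul_apply, Module.End.mul_apply, ← ihk]
            rfl
        simp [Polynomial.aeval_monomial, hkk]
    rw [hk, hTm]
    rfl
  have : Nontrivial W := Submodule.nontrivial_iff_ne_bot.mpr hb
  have hSi : IsIntegral F S := Algebra.IsIntegral.isIntegral S
  have hSd : m ∣ minpoly F S := by
    rcases hirr.dvd_iff.mp hSm with h | h
    · exact absurd h (minpoly.not_isUnit F S)
    · exact h.dvd
  have h1 := Polynomial.natDegree_le_of_dvd (hSd.trans (LinearMap.minpoly_dvd_charpoly S))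
    (LinearMap.charpoly_monic S).ne_zero
  rw [LinearMap.charpoly_natDegree, hdeg] at h1
  have h2 := Submodule.finrank_lt ht
  simp at h2
  omega
end

section
/- Let m >= 1, let q be a prime power and F_q a finite field with q elements. Then the symplectic group Sp_{2m}(F_q) contains an element of order q^m + 1, and every element of Sp_{2m}(F_q) of order q^m + 1 acts irreducibly on F_q^{2m}; that is, the only F_q-subspaces of F_q^{2m} invariant under such an element are 0 and F_q^{2m}. -/
open Polynomial

lemma nt_aux (q m d : ℕ) (hq : 2 ≤ q) (e k : ℕ) (he : m = e * k) (hk : Odd k) (he2 : ∀ j, Odd j → Nat.Coprime j e)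
    (hd : 1 ≤ d) (r : ℕ) (h1 : r ∣ q ^ m + 1) (h2 : r ∣ q ^ d - 1) :
    r ∣ 2 ∨ ∃ t s, r ∣ (q ^ e + 1) * t ∧ 1 ≤ t ∧ 2 * s ≤ d ∧ t * q ^ e ≤ q ^ s := by
  have h3 : r ∣ q ^ (2 * m) - 1 := by
    refine h1.trans ⟨q ^ m - 1, ?_⟩
    have := Nat.sq_sub_sq (q ^ m) 1
    rw [mul_comm 2 m, pow_mul]
    simpa using this
  have h4 : r ∣ q ^ (Nat.gcd (2 * m) d) - 1 := by
    rw [← Nat.pow_sub_one_gcd_pow_sub_one]; exact Nat.dvd_gcd h3 h2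
  have hgd : Nat.gcd (2 * m) d ∣ d := Nat.gcd_dvd_right _ _
  have hgm : Nat.gcd (2 * m) d ∣ 2 * m := Nat.gcd_dvd_left _ _
  generalize Nat.gcd (2 * m) d = g at *
  obtain ⟨j, hj⟩ := hgm
  have hpos : ∀ i, 1 ≤ q ^ i := fun i => Nat.one_le_pow _ _ (by omega)
  rcases Nat.even_or_odd j with ⟨i, hi⟩ | hjo
  · left
    have hm' : m = g * i := by
      subst hi; nlinarith
    have h5 : r ∣ q ^ m - 1 := h4.trans (by
      rw [hm']; exact Nat.pow_sub_one_dvd_pow_sub_one q (dvd_mul_right _ _))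
    have := Nat.dvd_sub h1 h5
    have h6 := hpos m
    rwa [show q ^ m + 1 - (q ^ m - 1) = 2 by omega] at this
  · right
    have hjk : j ∣ k := by
      have : j ∣ (2 * e) * k := ⟨g, by rw [mul_assoc, ← he, hj, mul_comm]⟩
      refine Nat.Coprime.dvd_of_dvd_mul_left ?_ this
      exact Nat.Coprime.mul_right (by simpa using hjo) (he2 j hjo)
    obtain ⟨h', rfl⟩ := hjk
    have hj0 : 0 < j := hjo.pos
    have hg : g = 2 * (e * h') := by
      apply Nat.eq_of_mul_eq_mul_right hj0
      rw [← hj, he]; ring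
    have hh' : Odd h' := (Nat.odd_mul.mp hk).2
    have hdiv : q ^ e + 1 ∣ q ^ (e * h') + 1 := by
      have := Odd.nat_add_dvd_pow_add_pow (q ^ e) 1 hh'
      rwa [one_pow, ← pow_mul] at this
    have hr : r ∣ q ^ (e * h') + 1 := by
      have hm' : m = (e * h') * j := by rw [he]; ring
      rw [hm', pow_mul] at h1
      rw [hg, mul_comm, pow_mul] at h4
      set a := q ^ (e * h') with ha
      have ha1 := hpos (e * h')
      obtain ⟨i, hi⟩ := hjo
      have h5 : r ∣ (a ^ 2) ^ i - 1 := h4.trans (by simpa using Nat.sub_dvd_pow_sub_pow (a ^ 2) 1 i)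
      zify at h1 h5 ⊢
      have h6 : 1 ≤ (a ^ 2) ^ i := Nat.one_le_pow _ _ (by positivity)
      rw [Nat.cast_sub h6] at h5
      push_cast at h5
      have := dvd_sub h1 (h5.mul_left (a : ℤ))
      rw [hi] at this
      have e1 : (a : ℤ) ^ (2 * i + 1) + 1 - a * ((a ^ 2) ^ i - 1) = a + 1 := by
        rw [← pow_mul]; ring
      rwa [e1] at this
    obtain ⟨t, ht⟩ := hdiv
    refine ⟨t, e * h', ht ▸ hr, ?_, ?_, ?_⟩
    · rcases t with _ | t
      · simp at ht
      · omega
    · rw [← hg]; exact Nat.le_of_dvd hd hgd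
    · have : 1 ≤ t := by
        rcases t with _ | t
        · simp at ht
        · omega
      nlinarith

lemma exists_odd_part (m : ℕ) (hm : 1 ≤ m) : ∃ e k, m = e * k ∧ Odd k ∧ (∀ j, Odd j → Nat.Coprime j e) ∧ 1 ≤ e := by
  obtain ⟨n, k, hk, h⟩ := Nat.exists_eq_two_pow_mul_odd (n := m) (by omega)
  exact ⟨2 ^ n, k, h, hk, fun j hj => Nat.Coprime.pow_right _ (by simpa using hj), Nat.one_le_two_pow⟩

def Good {F : Type*} [Field F] (q e N : ℕ) (b : ℕ) (f : F[X]) : Prop :=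
  f ∣ X ^ (Nat.gcd 2 N) - 1 ∨ ∃ t s, f ∣ X ^ ((q ^ e + 1) * t) - 1 ∧ 1 ≤ t ∧ 2 * s ≤ b ∧ t * q ^ e ≤ q ^ s

lemma xpow_dvd {F : Type*} [Field F] {a b : ℕ} (h : a ∣ b) : (X ^ a - 1 : F[X]) ∣ X ^ b - 1 := by
  obtain ⟨c, rfl⟩ := h
  rw [pow_mul]; simpa using sub_dvd_pow_sub_pow ((X : F[X]) ^ a) 1 c

lemma good_mul {F : Type*} [Field F] (q e N : ℕ) (hq : 2 ≤ q) (he : 1 ≤ e) (hN : Nat.gcd 2 N ∣ q ^ e + 1) (f g : F[X])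
    (hfg : IsCoprime f g) (a b c : ℕ) (hf : Good q e N a f) (hg : Good q e N b g)
    (hac : a ≤ c) (hbc : b ≤ c) (hab : a + b ≤ c + 2) : Good q e N c (f * g) := by
  rcases hf with hf | ⟨t, s, h1, h2, h3, h4⟩ <;> rcases hg with hg | ⟨t', s', h1', h2', h3', h4'⟩
  · exact Or.inl (hfg.mul_dvd hf hg)
  · exact Or.inr ⟨t', s', hfg.mul_dvd (hf.trans (xpow_dvd (hN.mul_right _))) h1', h2', by omega, h4'⟩
  · exact Or.inr ⟨t, s, hfg.mul_dvd h1 (hg.trans (xpow_dvd (hN.mul_right _))), h2, by omega, h4⟩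
  · right
    have hes : e ≤ s := by
      by_contra! h
      have := Nat.pow_lt_pow_right (a := q) (by omega) h
      have := Nat.le_mul_of_pos_left (q ^ e) h2
      omega
    refine ⟨t * t', s + s' - e, hfg.mul_dvd (h1.trans (xpow_dvd ?_)) (h1'.trans (xpow_dvd ?_)), Nat.mul_pos h2 h2', by omega, ?_⟩
    · exact mul_dvd_mul_left _ (dvd_mul_right _ _)
    · exact mul_dvd_mul_left _ (dvd_mul_left _ _)
    · have h0 : 0 < q ^ e := by positivity
      apply Nat.le_of_mul_le_mul_right _ h0
      rw [← pow_add, show s + s' - e + e = s + s' by omega, pow_add]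
      calc t * t' * q ^ e * q ^ e = (t * q ^ e) * (t' * q ^ e) := by ring
        _ ≤ _ := Nat.mul_le_mul h4 h4'

lemma irr_pow {F : Type*} [Field F] [Fintype F] (f : F[X]) (hf : Irreducible f) (hX : ¬ f ∣ X) :
    f ∣ X ^ (Fintype.card F ^ f.natDegree - 1) - 1 := by
  have := Fact.mk hf
  have : Module.Finite F (AdjoinRoot f) := (AdjoinRoot.powerBasis hf.ne_zero).finite
  have : Finite (AdjoinRoot f) := Module.finite_of_finite F
  have := Fintype.ofFinite (AdjoinRoot f)
  have hc : Fintype.card (AdjoinRoot f) = Fintype.card F ^ f.natDegree := by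
    rw [Module.card_eq_pow_finrank (K := F), (AdjoinRoot.powerBasis hf.ne_zero).finrank, AdjoinRoot.powerBasis_dim]
  rw [← AdjoinRoot.mk_eq_zero, ← hc]
  simp only [map_sub, map_pow, map_one]
  rw [AdjoinRoot.mk_X, FiniteField.pow_card_sub_one_eq_one, sub_self]
  rwa [← AdjoinRoot.mk_X, Ne, AdjoinRoot.mk_eq_zero]

lemma good_irr {F : Type*} [Field F] [Fintype F] (q m e k : ℕ) (hF : Fintype.card F = q) (hq : 2 ≤ q) (he : m = e * k) (hk : Odd k) (he2 : ∀ j, Odd j → Nat.Coprime j e)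
    (hm : 1 ≤ m) (f : F[X]) (hf : Irreducible f) (hfN : f ∣ X ^ (q ^ m + 1) - 1) :
    Good q e (q ^ m + 1) f.natDegree f := by
  have hX : ¬ f ∣ X := by
    intro h
    have h1 : f ∣ X ^ (q ^ m + 1) := dvd_pow h (by omega)
    have := dvd_sub h1 hfN
    rw [sub_sub_cancel] at this
    exact hf.not_isUnit (isUnit_of_dvd_one this)
  have h1 := irr_pow f hf hX
  rw [hF] at h1
  -- gcd
  have hfr : f ∣ X ^ (Nat.gcd (q ^ m + 1) (q ^ f.natDegree - 1)) - 1 := by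
    have := Fact.mk hf
    have key : ∀ n, f ∣ X ^ n - 1 ↔ (AdjoinRoot.root f) ^ n = 1 := by
      intro n
      rw [← AdjoinRoot.mk_eq_zero]
      simp [sub_eq_zero]
    rw [key] at *
    rw [← orderOf_dvd_iff_pow_eq_one] at *
    exact Nat.dvd_gcd hfN h1
  have hd : 1 ≤ f.natDegree := hf.natDegree_pos
  rcases nt_aux q m f.natDegree hq e k he hk he2 hd _ (Nat.gcd_dvd_left _ _) (Nat.gcd_dvd_right _ _) with h | ⟨t, s, h, h'⟩
  · left
    exact hfr.trans (xpow_dvd (Nat.dvd_gcd h (Nat.gcd_dvd_left _ _)))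
  · right
    exact ⟨t, s, hfr.trans (xpow_dvd h), h'⟩

lemma good_all {F : Type*} [Field F] [Fintype F] (q m e k : ℕ) (hF : Fintype.card F = q) (hq : 2 ≤ q) (he : m = e * k) (hk : Odd k) (he2 : ∀ j, Odd j → Nat.Coprime j e)
    (hm : 1 ≤ m) (he1 : 1 ≤ e) (hN : Nat.gcd 2 (q ^ m + 1) ∣ q ^ e + 1) (hs : Squarefree (X ^ (q ^ m + 1) - 1 : F[X])) (f : F[X]) (hf0 : f ≠ 0) (hfN : f ∣ X ^ (q ^ m + 1) - 1) :
    Good q e (q ^ m + 1) f.natDegree f := by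
  induction f using UniqueFactorizationMonoid.induction_on_prime with
  | h₁ => exact absurd rfl hf0
  | h₂ x hx => exact Or.inl hx.dvd
  | h₃ a p ha hp ih =>
    have hc : IsCoprime p a := by
      have := hs.squarefree_of_dvd hfN
      exact (squarefree_mul_iff.mp this).1.isCoprime
    rw [natDegree_mul hp.ne_zero ha]
    exact good_mul q e _ hq he1 hN p a hc _ _ _ (good_irr q m e k hF hq he hk he2 hm p hp.irreducible ((dvd_mul_right _ _).trans hfN))
      (ih ha ((dvd_mul_left _ _).trans hfN)) (by omega) (by omega) (by omega)

lemma good_mono {F : Type*} [Field F] {q e N a b : ℕ} {f : F[X]} (hab : a ≤ b) (h : Good q e N a f) : Good q e N b f := by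
  rcases h with h | ⟨t, s, h1, h2, h3, h4⟩
  · exact Or.inl h
  · exact Or.inr ⟨t, s, h1, h2, by omega, h4⟩

lemma irred_part (m : ℕ) (hm : 1 ≤ m) (q : ℕ)
    (F : Type*) [Field F] [Fintype F] (hF : Fintype.card F = q)
    (M : Matrix (Fin m ⊕ Fin m) (Fin m ⊕ Fin m) F) (hM : orderOf M = q ^ m + 1)
    (W : Submodule F (Fin m ⊕ Fin m → F)) (hW : ∀ v ∈ W, M.mulVec v ∈ W) : W = ⊥ ∨ W = ⊤ := by
  have hq : 2 ≤ q := hF ▸ Fintype.one_lt_card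
  obtain ⟨e, k, he, hk, he2, he1⟩ := exists_odd_part m hm
  set N := q ^ m + 1 with hNdef
  have hN : Nat.gcd 2 N ∣ q ^ e + 1 := by
    have h1 := Nat.gcd_dvd_left 2 N
    rcases (Nat.dvd_prime Nat.prime_two).mp h1 with h | h
    · rw [h]; exact one_dvd _
    · rw [h]
      have h2 : 2 ∣ N := h ▸ Nat.gcd_dvd_right 2 N
      rw [← even_iff_two_dvd] at *
      rw [hNdef] at h2
      have hm0 : m ≠ 0 := by omega
      have he0 : e ≠ 0 := by omega
      simpa [Nat.even_add_one, Nat.even_pow, hm0, he0] using h2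
  have hs : Squarefree (X ^ N - 1 : F[X]) := by
    apply Separable.squarefree
    rw [X_pow_sub_one_separable_iff, hNdef]
    push_cast
    have : (q : F) = 0 := by rw [← hF]; exact FiniteField.cast_card_eq_zero F
    rw [this, zero_pow (by omega)]; simp
  set f := minpoly F M with hf
  have hint : IsIntegral F M := Matrix.isIntegral M
  have hf0 : f ≠ 0 := minpoly.ne_zero hint
  have hfdvd : ∀ n, f ∣ X ^ n - 1 ↔ N ∣ n := by
    intro n
    rw [hf, minpoly.dvd_iff, ← hM, orderOf_dvd_iff_pow_eq_one]
    simp [sub_eq_zero]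
  have hfN : f ∣ X ^ N - 1 := (hfdvd N).mpr dvd_rfl
  have hbad : ¬ Good q e N (2 * m - 1) f := by
    rintro (h | ⟨t, s, h1, h2, h3, h4⟩)
    · rw [hfdvd] at h
      have h1 := Nat.le_of_dvd (by norm_num) (h.trans (Nat.gcd_dvd_left _ _))
      have : q ^ 1 ≤ q ^ m := Nat.pow_le_pow_right (by omega) hm
      rw [pow_one] at this
      omega
    · rw [hfdvd] at h1
      have h5 := Nat.le_of_dvd (by positivity) h1
      have h6 : q ^ s ≤ q ^ (m - 1) := Nat.pow_le_pow_right (by omega) (by omega)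
      have h7 : q ^ m = q * q ^ (m - 1) := by
        rw [← pow_succ']; congr 1; omega
      have h8 : 2 * q ^ (m - 1) ≤ q ^ m := by rw [h7]; exact Nat.mul_le_mul_right _ hq
      have h9 : 1 ≤ q ^ e := Nat.one_le_pow _ _ (by omega)
      have : N * q ^ e ≤ q ^ e * q ^ m := calc
        N * q ^ e ≤ (q ^ e + 1) * t * q ^ e := Nat.mul_le_mul_right _ h5
        _ = (q ^ e + 1) * (t * q ^ e) := by ring
        _ ≤ (2 * q ^ e) * q ^ (m - 1) := Nat.mul_le_mul (by omega) (h4.trans h6)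
        _ = q ^ e * (2 * q ^ (m - 1)) := by ring
        _ ≤ _ := Nat.mul_le_mul_left _ h8
      rw [hNdef] at this
      nlinarith
  have hdeg : f.natDegree ≤ 2 * m := by
    have := natDegree_le_of_dvd (Matrix.minpoly_dvd_charpoly M) (Matrix.charpoly_monic M).ne_zero
    rw [Matrix.charpoly_natDegree_eq_dim] at this
    simp only [Fintype.card_sum, Fintype.card_fin] at this
    rw [hf]
    omega
  have : NeZero m := ⟨by omega⟩
  have hnu : ¬ IsUnit f := minpoly.not_isUnit F M
  by_cases hirr : Irreducible f
  · have hdeg2 : f.natDegree = 2 * m := by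
      by_contra h
      exact hbad (good_mono (by omega) (good_irr q m e k hF hq he hk he2 hm f hirr hfN))
    by_contra! hcon
    obtain ⟨hb, ht⟩ := hcon
    have : Nontrivial W := Submodule.nontrivial_iff_ne_bot.mpr hb
    set T := Matrix.toLin' M with hT
    have hW' : ∀ v ∈ W, T v ∈ W := by simpa [hT] using hW
    have h1 : minpoly F (T.restrict hW') ∣ f := by
      apply minpoly.dvd
      have h2 : aeval T f = 0 := by
        rw [hf, ← Matrix.minpoly_toLin']; exact minpoly.aeval _ _
      ext w : 1
      have h3 : ∀ p : F[X], ((aeval (T.restrict hW') p w : W) : Fin m ⊕ Fin m → F) = aeval T p (w : _) := by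
        intro p
        induction p using Polynomial.induction_on' with
        | add p q hp hq => simp [hp, hq]
        | monomial n a =>
          simp only [aeval_monomial, Module.End.mul_apply, Module.algebraMap_end_apply]
          rw [Submodule.coe_smul]
          congr 1
          rw [Module.End.pow_restrict]; rfl
      apply Subtype.ext
      rw [h3, h2]; simp
    have h2 := hirr.dvd_iff.mp h1
    have h3 := (LinearMap.minpoly_dvd_charpoly (T.restrict hW'))
    have h4 := natDegree_le_of_dvd h3 (LinearMap.charpoly_monic _).ne_zero
    rw [LinearMap.charpoly_natDegree] at h4
    have h5 := Submodule.finrank_lt ht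
    simp at h5
    rcases h2 with h2 | h2
    · exact minpoly.not_isUnit F _ h2
    · have := natDegree_eq_of_degree_eq (degree_eq_degree_of_associated h2)
      omega
  · exfalso
    rw [irreducible_iff] at hirr
    push Not at hirr
    obtain ⟨a, b, hab, ha, hb⟩ := hirr hnu
    have ha0 : a ≠ 0 := by rintro rfl; simp at hab; exact hf0 hab
    have hb0 : b ≠ 0 := by rintro rfl; simp at hab; exact hf0 hab
    have hda : 1 ≤ a.natDegree := Nat.pos_of_ne_zero fun h => ha (isUnit_iff_degree_eq_zero.mpr (by rw [degree_eq_natDegree ha0, h]; rfl))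
    have hdb : 1 ≤ b.natDegree := Nat.pos_of_ne_zero fun h => hb (isUnit_iff_degree_eq_zero.mpr (by rw [degree_eq_natDegree hb0, h]; rfl))
    have hd := natDegree_mul ha0 hb0
    rw [← hab] at hd
    have hc : IsCoprime a b := by
      have := hs.squarefree_of_dvd hfN
      rw [hab] at this
      exact (squarefree_mul_iff.mp this).1.isCoprime
    apply hbad
    rw [hab] at hfN ⊢
    exact good_mul q e _ hq he1 hN a b hc _ _ _
      (good_all q m e k hF hq he hk he2 hm he1 hN hs a ha0 ((dvd_mul_right _ _).trans hfN))
      (good_all q m e k hF hq he hk he2 hm he1 hN hs b hb0 ((dvd_mul_left _ _).trans hfN)) (by omega) (by omega) (by omega)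

lemma exists_part (m : ℕ) (hm : 1 ≤ m) (q : ℕ)
    (F : Type*) [Field F] [Fintype F] (hF : Fintype.card F = q) :
    ∃ x : Matrix.symplecticGroup (Fin m) F, orderOf x = q ^ m + 1 := by
  have hq : 2 ≤ q := hF ▸ Fintype.one_lt_card
  obtain ⟨p, hp⟩ := CharP.exists F
  have : Fact p.Prime := ⟨CharP.char_is_prime F p⟩
  have : NeZero m := ⟨by omega⟩
  let L := FiniteField.Extension F p m
  have : CharP L p := charP_of_injective_algebraMap (algebraMap F L).injective p
  let K := FiniteField.Extension L p 2
  have hL : Nat.card L = q ^ m := by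
    rw [FiniteField.natCard_extension, Nat.card_eq_fintype_card, hF]
  have hK : Nat.card K = (q ^ m) ^ 2 := by
    rw [FiniteField.natCard_extension, hL]
  let _ : Algebra F K := ((algebraMap L K).comp (algebraMap F L)).toAlgebra
  have : IsScalarTower F L K := IsScalarTower.of_algebraMap_eq' rfl
  have hQ : 2 ≤ q ^ m := hq.trans (Nat.le_self_pow (by omega) q)
  generalize hQd : q ^ m = Q at *
  -- element
  obtain ⟨g, hg⟩ := IsCyclic.exists_ofOrder_eq_natCard (α := Kˣ)
  have hcard : Nat.card Kˣ = (Q + 1) * (Q - 1) := by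
    rw [Nat.card_units, hK]
    have := Nat.sq_sub_sq Q 1
    simpa using this
  have hz : orderOf (g ^ (Q - 1)) = Q + 1 := by
    rw [orderOf_pow, hg, hcard, Nat.gcd_eq_right (dvd_mul_left _ _)]
    exact Nat.mul_div_cancel _ (by omega)
  set z : K := ((g ^ (Q - 1) : Kˣ) : K) with hzd
  have hz' : orderOf z = Q + 1 := by rw [hzd, orderOf_units, hz]
  have hnorm : Algebra.norm L z = 1 := by
    apply (algebraMap L K).injective
    rw [FiniteField.algebraMap_norm_eq_pow, map_one, hK, hL, ← orderOf_dvd_iff_pow_eq_one, hz']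
    have := Nat.sq_sub_sq Q 1
    simp only [one_pow] at this
    rw [this, Nat.mul_div_cancel _ (by omega)]
  -- bases
  let b : Module.Basis (Fin 2) L K := Module.finBasisOfFinrankEq L K (FiniteField.finrank_extension L p 2)
  let c : Module.Basis (Fin m) F L := Module.finBasisOfFinrankEq F L (FiniteField.finrank_extension F p m)
  have hnd : (Algebra.traceForm F L).Nondegenerate := traceForm_nondegenerate F L
  let c' := (Algebra.traceForm F L).dualBasis hnd c
  let eqv : (L × L) ≃ₗ[F] K := ((LinearEquiv.finTwoArrow F L).symm.trans (b.equivFun.symm.restrictScalars F))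
  let E : Module.Basis (Fin m ⊕ Fin m) F K := (c.prod c').map eqv
  have hdet : ∀ x y : K, b.det ![y, x] = b.repr y 0 * b.repr x 1 - b.repr x 0 * b.repr y 1 := by
    intro x y
    rw [Module.Basis.det_apply, Matrix.det_fin_two]
    simp [Module.Basis.toMatrix_apply]
  have hE0 : ∀ u v : L, b.repr (eqv (u, v)) 0 = u := by
    intro u v
    simp [eqv, ← Module.Basis.equivFun_apply]
  have hE1 : ∀ u v : L, b.repr (eqv (u, v)) 1 = v := by
    intro u v
    simp [eqv, ← Module.Basis.equivFun_apply]
  have hl : ∀ i, E (Sum.inl i) = eqv (c i, 0) := by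
    intro i; simp [E]
  have hr : ∀ i, E (Sum.inr i) = eqv (0, c' i) := by
    intro i; simp [E]
  have htr : ∀ i j, Algebra.trace F L (c i * c' j) = if i = j then 1 else 0 :=
    LinearMap.BilinForm.apply_dualBasis_right hnd (Algebra.traceForm_isSymm F) c
  let B : LinearMap.BilinForm F K := LinearMap.mk₂ F (fun x y => Algebra.trace F L (b.det ![y, x]))
    
    (by intro x x' y; rw [hdet, hdet, hdet, ← map_add]; congr 1; simp only [map_add, Finsupp.add_apply]; ring)
    (by intro a x y; rw [hdet, hdet, ← map_smul]; congr 1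
        rw [← IsScalarTower.algebraMap_smul L a x]
        simp only [map_smul, Finsupp.smul_apply]; simp only [smul_eq_mul, Algebra.smul_def]; ring)
    (by intro x y y'; rw [hdet, hdet, hdet, ← map_add]; congr 1; simp only [map_add, Finsupp.add_apply]; ring)
    (by intro a x y; rw [hdet, hdet, ← map_smul]; congr 1
        rw [← IsScalarTower.algebraMap_smul L a y]
        simp only [map_smul, Finsupp.smul_apply]; simp only [smul_eq_mul, Algebra.smul_def]; ring)
  have hBJ : LinearMap.BilinForm.toMatrix E B = Matrix.J (Fin m) F := by
    ext i j
    rw [LinearMap.BilinForm.toMatrix_apply]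
    simp only [B, LinearMap.mk₂_apply, hdet]
    rcases i with i | i <;> rcases j with j | j <;>
      simp [hl, hr, hE0, hE1, Matrix.J, htr, Matrix.one_apply, eq_comm]
  have hBz : B.comp (Algebra.lmul F K z) (Algebra.lmul F K z) = B := by
    ext x y
    have h1 : ![z * y, z * x] = (Algebra.lmul L K z) ∘ ![y, x] := by
      ext i; fin_cases i <;> simp
    have h2 : LinearMap.det (Algebra.lmul L K z) = 1 := hnorm
    simp only [B, LinearMap.BilinForm.comp_apply, LinearMap.mk₂_apply, Algebra.coe_lmul_eq_mul, LinearMap.mul_apply']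
    rw [h1, Module.Basis.det_comp, h2, one_mul]
  have hmem : Algebra.leftMulMatrix E z ∈ Matrix.symplecticGroup (Fin m) F := by
    rw [SymplecticGroup.mem_iff', ← hBJ, Algebra.leftMulMatrix_apply, ← LinearMap.BilinForm.toMatrix_comp, hBz]
  refine ⟨⟨_, hmem⟩, ?_⟩
  rw [← orderOf_submonoid, ← hz']
  exact orderOf_injective (Algebra.leftMulMatrix E).toMonoidHom (Algebra.leftMulMatrix_injective E) z

/-- **Singer cycles in symplectic groups.** For every `m ≥ 1` and finite field `F_q`,
`Sp_{2m}(F_q)` contains an element of order `q^m + 1`, and every element of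
`Sp_{2m}(F_q)` of order `q^m + 1` acts irreducibly on `F_q^{2m}`. -/
theorem Sp_singer_exists_and_irreducible (m : ℕ) (hm : 1 ≤ m) (q : ℕ) (hq : IsPrimePow q)
    (F : Type*) [Field F] [Fintype F] (hF : Fintype.card F = q) :
    (∃ x : Matrix.symplecticGroup (Fin m) F, orderOf x = q ^ m + 1) ∧
      ∀ x : Matrix.symplecticGroup (Fin m) F, orderOf x = q ^ m + 1 →
        ∀ W : Submodule F (Fin m ⊕ Fin m → F),
          (∀ v ∈ W,
            (x : Matrix (Fin m ⊕ Fin m) (Fin m ⊕ Fin m) F).mulVec v ∈ W) →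
          W = ⊥ ∨ W = ⊤ := by
  exact ⟨exists_part m hm q F hF, fun x hx W hW =>
    irred_part m hm q F hF x (by rw [orderOf_submonoid, hx]) W hW⟩
end

section
/- Let n >= 1, let q be a prime power and F_q a finite field with q elements, and let lambda be a generator of the multiplicative group of F_q (so lambda has order q - 1). Then there exists an element s of GL_n(F_q) of order q^n - 1 with determinant equal to lambda. -/
theorem lift_gen_aux {G H : Type*} [Group G] [Finite G] [IsCyclic G] [Group H]
    (f : G →* H) (hf : Function.Surjective f)
    (h : H) (hh : ∀ x : H, x ∈ Subgroup.zpowers h) :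
    ∃ g : G, orderOf g = Nat.card G ∧ f g = h := by
  obtain ⟨g, hg⟩ := IsCyclic.exists_generator (α := G)
  have : Finite H := Finite.of_surjective f hf
  have hgo : orderOf g = Nat.card G := orderOf_eq_card_of_forall_mem_zpowers hg
  have hho : orderOf h = Nat.card H := orderOf_eq_card_of_forall_mem_zpowers hh
  have hfg : ∀ x : H, x ∈ Subgroup.zpowers (f g) := by
    intro x
    obtain ⟨y, rfl⟩ := hf x
    obtain ⟨k, rfl⟩ := Subgroup.mem_zpowers_iff.1 (hg y)
    exact Subgroup.mem_zpowers_iff.2 ⟨k, by simp⟩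
  have hfo : orderOf (f g) = Nat.card H := orderOf_eq_card_of_forall_mem_zpowers hfg
  have hpos : 0 < Nat.card H := Nat.card_pos
  have : NeZero (Nat.card G) := ⟨Nat.card_pos.ne'⟩
  obtain ⟨k, hk⟩ : ∃ k : ℕ, f g ^ k = h := by
    have := mem_powers_iff_mem_zpowers.2 (hfg h)
    exact this
  have hcop : Nat.Coprime k (Nat.card H) := by
    have h1 := orderOf_pow (n := k) (f g)
    rw [hk, hho, hfo] at h1
    have h2 : (Nat.card H).gcd k = 1 := by
      rcases Nat.div_eq_self.1 h1.symm with h3 | h3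
      · omega
      · exact h3
    rw [Nat.Coprime, Nat.gcd_comm]; exact h2
  have hdvd : Nat.card H ∣ Nat.card G := by
    rw [← hfo, ← hgo]; exact orderOf_map_dvd f g
  obtain ⟨u, hu⟩ := ZMod.unitsMap_surjective hdvd (ZMod.unitOfCoprime k hcop)
  refine ⟨g ^ (u : ZMod (Nat.card G)).val, ?_, ?_⟩
  · rw [Nat.Coprime.orderOf_pow, hgo]
    rw [hgo]
    exact (ZMod.val_coe_unit_coprime u).symm
  · rw [map_pow, ← hk, pow_eq_pow_iff_modEq, hfo, ← ZMod.natCast_eq_natCast_iff]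
    have := congrArg Units.val hu
    rw [ZMod.unitsMap_val, ZMod.coe_unitOfCoprime] at this
    rw [← this, ZMod.natCast_val]

/-- **Singer cycles of `GL_n(q)` with prescribed determinant.** If `λ` generates the
multiplicative group of the finite field `F_q`, then there is an element of
`GL_n(F_q)` of order `q^n - 1` whose determinant is `λ`. -/
theorem exists_singer_with_det (n : ℕ) (hn : 1 ≤ n) (q : ℕ) (hq : IsPrimePow q)
    (F : Type*) [Field F] [Fintype F] (hF : Fintype.card F = q)
    (lam : Fˣ) (hlam : ∀ μ : Fˣ, μ ∈ Subgroup.zpowers lam) :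
    ∃ s : GL (Fin n) F, orderOf s = q ^ n - 1 ∧
      Matrix.GeneralLinearGroup.det s = lam := by
  obtain ⟨p, hp⟩ := CharP.exists F
  have : Fact p.Prime := ⟨CharP.char_is_prime F p⟩
  have : NeZero n := ⟨by omega⟩
  let L := FiniteField.Extension F p n
  obtain ⟨g, hg, hn'⟩ := lift_gen_aux (Units.map (Algebra.norm F (S := L)))
    (FiniteField.unitsMap_norm_surjective F L) lam hlam
  let b : Module.Basis (Fin n) F L :=
    Module.finBasisOfFinrankEq F L (FiniteField.finrank_extension F p n)
  refine ⟨Units.map (Algebra.leftMulMatrix b : L →* Matrix (Fin n) (Fin n) F) g, ?_, ?_⟩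
  · rw [orderOf_injective (Units.map (Algebra.leftMulMatrix b : L →* Matrix (Fin n) (Fin n) F))
      (Units.map_injective (Algebra.leftMulMatrix_injective b)), hg,
      Nat.card_units, FiniteField.natCard_extension, Nat.card_eq_fintype_card, hF]
  · rw [← hn']
    ext
    simp [Algebra.norm_eq_matrix_det b]
end
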